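/- 16·∫₀^∞ I₀(t)[K₀(t)]⁵ t dt = (4π^{5/2}/√3)·[ (√3/64)·(Γ(1/3)/√π)⁹·₄F₃(1/6,1/3,1/3,1/2; 2/3,5/6,5/6 | 1) − (16/3)·(√π/Γ(1/3))⁹·₄F₃(1/2,2/3,2/3,5/6; 7/6,7/6,4/3 | 1) ]. -/

import Mathlib

open Real MeasureTheory Set

/-- Modified Bessel function `I₀(t) = (1/π)∫₀^π exp(t cos θ) dθ`. -/
noncomputable def I0 (t : ℝ) : ℝ := (1 / π) * ∫ θ in (0:ℝ)..π, exp (t * cos θ)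

/-- Modified Bessel function `K₀(t) = ∫₀^∞ exp(−t cosh u) du`. -/
noncomputable def K0 (t : ℝ) : ℝ := ∫ u in Ioi (0:ℝ), exp (-(t * Real.cosh u))

/-- Rising factorial `(a)ₙ = a(a+1)⋯(a+n−1)`. -/
noncomputable def ris (a : ℝ) (n : ℕ) : ℝ := ∏ k ∈ Finset.range n, (a + k)

/-- Generalized hypergeometric series `ₚF_q(a; b | x)`. -/
noncomputable def pFq (a b : List ℝ) (x : ℝ) : ℝ :=
  ∑' n : ℕ, ((a.map fun p => ris p n).prod / (b.map fun q => ris q n).prod) * x ^ n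
    / (n.factorial : ℝ)



theorem strip_aux (F : ℂ → ℂ) (a a' : ℝ) (haa : a ≤ a')
    (hd : ∀ z : ℂ, a ≤ z.im → z.im ≤ a' → DifferentiableAt ℂ F z)
    (b : ℝ → ℝ) (hbi : Integrable b)
    (hb : ∀ s ψ : ℝ, a ≤ ψ → ψ ≤ a' → ‖F (s + ψ * Complex.I)‖ ≤ b s)
    (ht : Filter.Tendsto b Filter.atTop (nhds 0)) (hbt : Filter.Tendsto b Filter.atBot (nhds 0)) :
    (∀ ψ : ℝ, a ≤ ψ → ψ ≤ a' → Integrable (fun s : ℝ => F (s + ψ * Complex.I))) ∧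
    ∫ s : ℝ, F (s + a * Complex.I) = ∫ s : ℝ, F (s + a' * Complex.I) := by
  have hint : ∀ ψ : ℝ, a ≤ ψ → ψ ≤ a' → Integrable (fun s : ℝ => F (s + ψ * Complex.I)) := by
    intro ψ h1 h2
    refine hbi.mono' ?_ (Filter.Eventually.of_forall fun s => hb s ψ h1 h2)
    apply Continuous.aestronglyMeasurable
    rw [continuous_iff_continuousAt]
    intro s
    have : DifferentiableAt ℂ F (s + ψ * Complex.I) := hd _ (by simpa) (by simpa)
    exact ContinuousAt.comp (f := fun s : ℝ => (s + ψ * Complex.I : ℂ)) this.continuousAt (by fun_prop)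
  refine ⟨hint, ?_⟩
  have hrect : ∀ T : ℝ, (∫ s in (-T)..T, F (s + a * Complex.I)) - (∫ s in (-T)..T, F (s + a' * Complex.I))
      = - (Complex.I • ∫ y in a..a', F (T + y * Complex.I)) + Complex.I • ∫ y in a..a', F (-T + y * Complex.I) := by
    intro T
    have := Complex.integral_boundary_rect_eq_zero_of_differentiableOn F (⟨-T, a⟩) (⟨T, a'⟩) ?_
    · simp only at this
      push_cast at this
      linear_combination this
    · intro z hz
      rw [Complex.mem_reProdIm] at hz
      simp only [uIcc_of_le haa] at hz
      exact (hd z hz.2.1 hz.2.2).differentiableWithinAt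
  have hside : ∀ l : Filter ℝ, Filter.Tendsto b l (nhds 0) →
      Filter.Tendsto (fun T : ℝ => ∫ y in a..a', F (T + y * Complex.I)) l (nhds 0) := by
    intro l hl
    have h2 : Filter.Tendsto (fun T => b T * |a' - a|) l (nhds 0) := by
      simpa using hl.mul_const (|a' - a|)
    refine squeeze_zero_norm (fun T => ?_) h2
    apply intervalIntegral.norm_integral_le_of_norm_le_const
    intro y hy
    rw [uIoc_of_le haa] at hy
    exact hb T y hy.1.le hy.2
  have hA := intervalIntegral_tendsto_integral (hint a le_rfl haa) Filter.tendsto_neg_atTop_atBot Filter.tendsto_id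
  have hB := intervalIntegral_tendsto_integral (hint a' haa le_rfl) Filter.tendsto_neg_atTop_atBot Filter.tendsto_id
  have hAB := hA.sub hB
  simp only [id] at hAB
  have hz : Filter.Tendsto (fun T : ℝ => - (Complex.I • ∫ y in a..a', F (T + y * Complex.I)) + Complex.I • ∫ y in a..a', F (-T + y * Complex.I)) Filter.atTop (nhds 0) := by
    have h1 := (hside _ ht).const_smul Complex.I
    have h2 := ((hside _ hbt).comp Filter.tendsto_neg_atTop_atBot).const_smul Complex.I
    have := h1.neg.add h2
    simp only [smul_zero, neg_zero, add_zero, Function.comp_def] at this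
    simpa using this
  have := tendsto_nhds_unique hAB (hz.congr fun T => (hrect T).symm)
  exact sub_eq_zero.mp this


theorem exp_neg_le_rpow (w p : ℝ) (hw : 0 < w) (hp0 : 0 ≤ p) (hp : p ≤ 1) : exp (-w) ≤ w ^ (-p) := by
  rw [rpow_def_of_pos hw]
  apply exp_le_exp.mpr
  have h1 : log w ≤ w := (log_le_sub_one_of_pos hw).trans (by linarith)
  rcases le_total (log w) 0 with h | h
  · nlinarith
  · nlinarith

theorem one_add_sq_le_cosh (u : ℝ) : 1 + u^2/4 ≤ Real.cosh u := by
  have h1 := Real.quadratic_le_exp_of_nonneg (abs_nonneg u)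
  have h2 := Real.add_one_le_exp (-|u|)
  rw [← Real.cosh_abs, Real.cosh_eq]
  have : |u|^2 = u^2 := sq_abs u
  linarith

theorem exp_cosh_le (c : ℝ) (hc : 0 < c) (u : ℝ) : exp (-(c * Real.cosh u)) ≤ exp (-(c/4) * u^2) := by
  apply exp_le_exp.mpr
  nlinarith [one_add_sq_le_cosh u]

theorem integrable_exp_cosh (c : ℝ) (hc : 0 < c) : Integrable (fun u : ℝ => exp (-(c * Real.cosh u))) := by
  refine (integrable_exp_neg_mul_sq (b := c/4) (by positivity)).mono' (by fun_prop) ?_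
  filter_upwards with u
  rw [Real.norm_of_nonneg (exp_pos _).le]
  exact exp_cosh_le c hc u

theorem tendsto_exp_cosh (c : ℝ) (hc : 0 < c) (l : Filter ℝ) (hl : Filter.Tendsto (fun u : ℝ => u^2) l Filter.atTop) :
    Filter.Tendsto (fun u : ℝ => exp (-(c * Real.cosh u))) l (nhds 0) := by
  refine squeeze_zero (fun u => (exp_pos _).le) (exp_cosh_le c hc) ?_
  refine tendsto_exp_atBot.comp ?_
  exact hl.const_mul_atTop_of_neg (by linarith)

theorem two_K0 (ρ : ℝ) : ∫ u : ℝ, exp (-(ρ * Real.cosh u)) = 2 * K0 ρ := by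
  rw [K0, ← integral_comp_abs (f := fun u => exp (-(ρ * Real.cosh u)))]
  simp

theorem cosh_re (s ψ : ℝ) : (Complex.cosh (s + ψ * Complex.I)).re = Real.cosh s * cos ψ := by
  rw [Complex.cosh_add, Complex.cosh_mul_I, Complex.sinh_mul_I]
  rw [← Complex.ofReal_cosh, ← Complex.ofReal_sinh, ← Complex.ofReal_cos, ← Complex.ofReal_sin]
  simp [-Complex.ofReal_cos, -Complex.ofReal_sin]

theorem shifted_K0 (ρ α : ℝ) (hρ : 0 < ρ) (h1 : -(π/2) < α) (h2 : α < π/2) :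
    ∫ u : ℝ, Complex.exp (-(ρ * Complex.cosh (u + α * Complex.I))) = 2 * K0 ρ := by
  have hpi := pi_pos
  have hcα : 0 < cos α := cos_pos_of_mem_Ioo ⟨h1, h2⟩
  have key : ∫ s : ℝ, Complex.exp (-(ρ * Complex.cosh (s + ((min 0 α : ℝ):ℂ) * Complex.I)))
      = ∫ s : ℝ, Complex.exp (-(ρ * Complex.cosh (s + ((max 0 α : ℝ) : ℂ) * Complex.I))) := by
    refine (strip_aux (fun z => Complex.exp (-(ρ * Complex.cosh z))) (min 0 α) (max 0 α) (by simp)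
      (fun z _ _ => by fun_prop) (fun s => exp (-((ρ * cos α) * Real.cosh s)))
      (integrable_exp_cosh _ (by positivity)) ?_
      (tendsto_exp_cosh _ (by positivity) _ (by exact Filter.tendsto_pow_atTop (by norm_num)))
      (tendsto_exp_cosh _ (by positivity) _ ?_)).2
    · intro s ψ ha hb
      rw [Complex.norm_exp]
      apply exp_le_exp.mpr
      rw [Complex.neg_re, Complex.re_ofReal_mul, cosh_re]
      have hc : cos α ≤ cos ψ := by
        rcases le_total 0 α with h | h
        · rw [min_eq_left h] at ha
          rw [max_eq_right h] at hb
          exact cos_le_cos_of_nonneg_of_le_pi ha (by linarith) hb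
        · rw [min_eq_right h] at ha
          rw [max_eq_left h] at hb
          rw [← cos_neg α, ← cos_neg ψ]
          exact cos_le_cos_of_nonneg_of_le_pi (by linarith) (by linarith) (by linarith)
      have := mul_le_mul_of_nonneg_left hc (mul_nonneg hρ.le (Real.cosh_pos s).le)
      nlinarith
    · exact (Filter.tendsto_pow_atTop (α := ℝ) (n := 2) (by norm_num)).comp Filter.tendsto_neg_atBot_atTop |>.congr (by simp)
  have h0 : ∫ u : ℝ, Complex.exp (-(ρ * Complex.cosh (u + ((0:ℝ):ℂ) * Complex.I))) = 2 * K0 ρ := by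
    have : (fun u : ℝ => Complex.exp (-(ρ * Complex.cosh (u + ((0:ℝ):ℂ) * Complex.I)))) = fun u : ℝ => ((exp (-(ρ * Real.cosh u)) : ℝ) : ℂ) := by
      funext u; simp
    rw [this, integral_complex_ofReal, two_K0]
    push_cast; rfl
  rcases le_total 0 α with h | h
  · rw [min_eq_left h, max_eq_right h] at key
    rw [← key, h0]
  · rw [min_eq_right h, max_eq_left h] at key
    rw [key, h0]

theorem I0_shift (t u : ℝ) : ∫ φ in (0:ℝ)..(2*π), Complex.exp (t * Complex.cos (φ + u * Complex.I)) = 2 * π * I0 t := by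
  have h1 : ∫ φ in (0:ℝ)..(2*π), exp (t * cos φ) = 2 * π * I0 t := by
    have hi : ∀ a b, IntervalIntegrable (fun φ : ℝ => exp (t * cos φ)) volume a b := fun a b =>
      (by fun_prop : Continuous (fun φ : ℝ => exp (t * cos φ))).intervalIntegrable a b
    rw [← intervalIntegral.integral_add_adjacent_intervals (hi 0 π) (hi π (2*π))]
    have : ∫ φ in π..(2*π), exp (t * cos φ) = ∫ φ in (0:ℝ)..π, exp (t * cos φ) := by
      have := intervalIntegral.integral_comp_sub_left (a := 0) (b := π) (fun φ => exp (t * cos φ)) (2*π)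
      simp only [cos_two_pi_sub] at this
      rw [this]; congr 1 <;> ring
    rw [this, I0]
    have := pi_ne_zero
    field_simp; ring
  have := Complex.integral_boundary_rect_eq_zero_of_differentiableOn
    (fun z => Complex.exp (t * Complex.cos z)) (⟨0, 0⟩) (⟨2*π, u⟩) (by fun_prop)
  have h3 : ∀ y : ℝ, Complex.cos (2 * π + y * Complex.I) = Complex.cos (y * Complex.I) := by
    intro y; rw [add_comm, Complex.cos_add_two_pi]
  simp [h3] at this
  have h2 : ∫ φ in (0:ℝ)..(2*π), Complex.exp (t * Complex.cos φ) = 2 * π * I0 t := by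
    have e : (fun φ : ℝ => Complex.exp (t * Complex.cos φ)) = fun φ : ℝ => ((exp (t * cos φ) : ℝ) : ℂ) := by
      funext φ; simp
    rw [e, intervalIntegral.integral_ofReal, h1]; push_cast; rfl
  rw [← h2]
  linear_combination -this


theorem cosh_rpow_le (p u : ℝ) (hp : 0 < p) : Real.cosh u ^ (-p) ≤ 2 ^ p * exp (-p * u) := by
  have h : exp u / 2 ≤ Real.cosh u := by
    rw [Real.cosh_eq]; have := exp_pos (-u); linarith
  calc Real.cosh u ^ (-p) ≤ (exp u / 2) ^ (-p) := rpow_le_rpow_of_nonpos (by positivity) h (by linarith)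
    _ = 2 ^ p * exp (-p * u) := by
      rw [div_rpow (exp_pos _).le (by norm_num), ← exp_mul, rpow_neg (by norm_num : (0:ℝ) ≤ 2), div_inv_eq_mul, mul_comm]
      congr 2; ring

theorem continuous_cosh_rpow (p : ℝ) : Continuous (fun u : ℝ => Real.cosh u ^ (-p)) :=
  Real.continuous_cosh.rpow_const (fun u => Or.inl (Real.cosh_pos u).ne')

theorem integrable_cosh_rpow (p : ℝ) (hp : 0 < p) : Integrable (fun u : ℝ => Real.cosh u ^ (-p)) := by
  rw [← integrableOn_univ, ← Iic_union_Ioi (a := (0:ℝ))]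
  refine IntegrableOn.union ?_ ?_
  · refine Integrable.mono' ((integrableOn_exp_mul_Iic hp 0).const_mul (2^p)) (continuous_cosh_rpow p).aestronglyMeasurable ?_
    filter_upwards with u
    rw [Real.norm_of_nonneg (by have := Real.cosh_pos u; positivity), ← Real.cosh_neg]
    simpa using cosh_rpow_le p (-u) hp
  · refine Integrable.mono' ((exp_neg_integrableOn_Ioi 0 hp).const_mul (2^p)) (continuous_cosh_rpow p).aestronglyMeasurable ?_
    filter_upwards with u
    rw [Real.norm_of_nonneg (by have := Real.cosh_pos u; positivity)]
    exact cosh_rpow_le p u hp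

theorem intervalIntegrable_sin_rpow_half (p : ℝ) (hp0 : 0 ≤ p) (hp : p < 1) :
    IntervalIntegrable (fun θ : ℝ => sin θ ^ (-p)) volume 0 (π/2) := by
  have hpi := pi_pos
  rw [intervalIntegrable_iff_integrableOn_Ioo_of_le (by positivity)]
  have h1 : IntegrableOn (fun x : ℝ => x ^ (-p)) (Ioo 0 (π/2)) := by
    rw [← intervalIntegrable_iff_integrableOn_Ioo_of_le (by positivity)]
    exact intervalIntegral.intervalIntegrable_rpow' (by linarith)
  refine Integrable.mono' (h1.const_mul ((2/π)^(-p))) (Measurable.aestronglyMeasurable (by fun_prop)) ?_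
  filter_upwards [ae_restrict_mem measurableSet_Ioo] with θ hθ
  have hs : 0 < sin θ := sin_pos_of_pos_of_lt_pi hθ.1 (by linarith [hθ.2])
  rw [Real.norm_of_nonneg (by positivity), ← mul_rpow (by positivity) hθ.1.le]
  exact rpow_le_rpow_of_nonpos (by have := hθ.1; positivity) (mul_le_sin hθ.1.le hθ.2.le) (by linarith)

theorem intervalIntegrable_sin_rpow (p : ℝ) (hp0 : 0 ≤ p) (hp : p < 1) :
    IntervalIntegrable (fun θ : ℝ => sin θ ^ (-p)) volume 0 π := by
  have h := intervalIntegrable_sin_rpow_half p hp0 hp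
  refine h.trans ?_
  have := h.comp_sub_left π
  simp only [sin_pi_sub] at this
  convert this.symm using 1 <;> ring

theorem int_half_fold (f : ℝ → ℝ) (hf : ∀ x, f (π - x) = f x) (hi : IntervalIntegrable f volume 0 (π/2)) :
    ∫ x in (0:ℝ)..π, f x = 2 * ∫ x in (0:ℝ)..(π/2), f x := by
  have h2 : IntervalIntegrable f volume (π/2) π := by
    have := hi.comp_sub_left π
    simp only [hf] at this
    convert this.symm using 1 <;> ring
  rw [← intervalIntegral.integral_add_adjacent_intervals hi h2]
  have := intervalIntegral.integral_comp_sub_left (a := 0) (b := π/2) f π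
  simp only [hf] at this
  rw [show π - π/2 = π/2 by ring, sub_zero] at this
  rw [← this]; ring

theorem IK_ident (t φ u : ℝ) :
   Complex.exp (-(t * Complex.cosh u)) * Complex.exp (t * Complex.cos (2 * φ + u * Complex.I))
    = Complex.exp (-((2 * t * sin φ : ℝ) * Complex.cosh (u + (π/2 - φ : ℝ) * Complex.I))) := by
  rw [← Complex.exp_add]
  congr 1
  rw [Complex.cos_add, Complex.cosh_add, Complex.cos_mul_I, Complex.sin_mul_I, Complex.cosh_mul_I, Complex.sinh_mul_I]
  rw [Complex.cos_two_mul, Complex.sin_two_mul]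
  push_cast
  rw [Complex.cos_pi_div_two_sub, Complex.sin_pi_div_two_sub]
  linear_combination (2 * t * Complex.cosh u) * (Complex.cos_sq_add_sin_sq φ)

theorem IK_integrable (t : ℝ) (ht : 0 < t) : Integrable (Function.uncurry fun (u : ℝ) (φ : ℝ) =>
    Complex.exp (-((2 * t * sin φ : ℝ) * Complex.cosh (u + (π/2 - φ : ℝ) * Complex.I))))
    (volume.prod (volume.restrict (Ioc (0:ℝ) π))) := by
  have h1 := (intervalIntegrable_iff_integrableOn_Ioc_of_le pi_pos.le).mp (intervalIntegrable_sin_rpow (1/2) (by norm_num) (by norm_num))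
  have h2 := (Integrable.mul_prod (integrable_cosh_rpow (1/4) (by norm_num)) h1).const_mul ((2*t)^(-(1/4):ℝ))
  refine Integrable.mono' h2 (by apply Continuous.aestronglyMeasurable; unfold Function.uncurry; fun_prop) ?_
  have : ∀ᵐ z : ℝ × ℝ ∂(volume.prod (volume.restrict (Ioc (0:ℝ) π))), z.2 ∈ Ioo 0 π := by
    have h3 : ∀ᵐ y : ℝ ∂(volume.restrict (Ioc (0:ℝ) π)), y ∈ Ioo 0 π := by
      rw [← restrict_Ioo_eq_restrict_Ioc]
      exact ae_restrict_mem measurableSet_Ioo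
    exact Measure.quasiMeasurePreserving_snd.ae h3
  filter_upwards [this] with z hz
  obtain ⟨u, φ⟩ := z
  have hs : 0 < sin φ := sin_pos_of_pos_of_lt_pi hz.1 hz.2
  have hc := Real.cosh_pos u
  simp only [Function.uncurry]
  rw [Complex.norm_exp, Complex.neg_re, Complex.re_ofReal_mul, cosh_re, cos_pi_div_two_sub]
  refine (exp_neg_le_rpow _ (1/4) (by positivity) (by norm_num) (by norm_num)).trans (le_of_eq ?_)
  rw [show 2 * t * sin φ * (cosh u * sin φ) = (2*t) * (cosh u * (sin φ * sin φ)) by ring,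
    mul_rpow (x := 2 * t) (by positivity) (by positivity), mul_rpow (x := cosh u) (by positivity) (by positivity), mul_rpow hs.le hs.le,
    ← rpow_add hs]
  norm_num

theorem IK_formula (t : ℝ) (ht : 0 < t) :
    IntegrableOn (fun θ => K0 (2 * t * sin θ)) (Ioo 0 (π/2)) ∧
    ∫ θ in Ioo 0 (π/2), K0 (2 * t * sin θ) = π / 2 * (I0 t * K0 t) := by
  have hpi := pi_pos
  have hI := IK_integrable t ht
  have hK : ∀ φ ∈ Ioc (0:ℝ) π, φ ≠ π → ∫ u : ℝ, Complex.exp (-((2 * t * sin φ : ℝ) * Complex.cosh (u + (π/2 - φ : ℝ) * Complex.I))) = 2 * K0 (2 * t * sin φ) := by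
    intro φ hφ hne
    have hs : 0 < sin φ := sin_pos_of_pos_of_lt_pi hφ.1 (lt_of_le_of_ne hφ.2 hne)
    have := lt_of_le_of_ne hφ.2 hne
    exact shifted_K0 _ _ (by positivity) (by linarith) (by linarith [hφ.1])
  have hae : ∀ᵐ φ : ℝ ∂volume.restrict (Ioc (0:ℝ) π), ∫ u : ℝ, Complex.exp (-((2 * t * sin φ : ℝ) * Complex.cosh (u + (π/2 - φ : ℝ) * Complex.I))) = ((2 * K0 (2 * t * sin φ) : ℝ) : ℂ) := by
    rw [← restrict_Ioo_eq_restrict_Ioc]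
    filter_upwards [ae_restrict_mem measurableSet_Ioo] with φ hφ
    rw [hK φ ⟨hφ.1, hφ.2.le⟩ hφ.2.ne]; push_cast; rfl
  have hKi : Integrable (fun φ => 2 * K0 (2 * t * sin φ)) (volume.restrict (Ioc (0:ℝ) π)) := by
    have h := (hI.integral_prod_right.congr hae).re
    simpa using h
  have hKi2 : IntegrableOn (fun φ => K0 (2 * t * sin φ)) (Ioc 0 π) := by
    have := hKi.const_mul (1/2)
    refine this.congr (Filter.Eventually.of_forall fun φ => by simp)
  have hsub : IntegrableOn (fun φ => K0 (2 * t * sin φ)) (Ioo 0 (π/2)) :=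
    hKi2.mono_set (fun x hx => ⟨hx.1, by linarith [hx.2]⟩)
  refine ⟨hsub, ?_⟩
  have hsw := integral_integral_swap hI
  rw [integral_congr_ae hae, integral_complex_ofReal] at hsw
  have hleft : ∀ u : ℝ, ∫ φ in Ioc 0 π, Complex.exp (-((2 * t * sin φ : ℝ) * Complex.cosh (u + (π/2 - φ : ℝ) * Complex.I)))
      = ((π * I0 t * exp (-(t * Real.cosh u)) : ℝ) : ℂ) := by
    intro u
    simp_rw [← IK_ident]
    rw [← intervalIntegral.integral_of_le hpi.le, intervalIntegral.integral_const_mul]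
    have h := intervalIntegral.integral_comp_mul_left (a := 0) (b := π) (c := 2) (fun φ : ℝ => Complex.exp (t * Complex.cos (φ + u * Complex.I))) (by norm_num)
    push_cast at h
    rw [h, mul_zero, I0_shift]
    push_cast
    rw [Complex.real_smul]
    push_cast
    ring
  simp_rw [hleft] at hsw
  rw [integral_complex_ofReal, integral_const_mul, two_K0, integral_const_mul, ← intervalIntegral.integral_of_le hpi.le] at hsw
  have hsw := Complex.ofReal_injective hsw
  rw [int_half_fold (fun φ => K0 (2 * t * sin φ)) (by intro x; simp)] at hsw
  · rw [← integral_Ioc_eq_integral_Ioo, ← intervalIntegral.integral_of_le (by positivity)]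
    linarith
  · rw [intervalIntegrable_iff_integrableOn_Ioo_of_le (by positivity)]
    exact hsub


noncomputable def Lap (X : ℝ × ℝ → ℝ) (μ : Measure (ℝ × ℝ)) (z : ℂ) : ℂ := ∫ ω, Complex.exp (-(z * X ω)) ∂μ

theorem Lap_integrable {X : ℝ × ℝ → ℝ} {μ : Measure (ℝ × ℝ)} (hX : Measurable X) (hpos : ∀ᵐ ω ∂μ, 0 < X ω)
    (p : ℝ) (hp0 : 0 ≤ p) (hp1 : p ≤ 1) (hi : Integrable (fun ω => X ω ^ (-p)) μ) (z : ℂ) (hz : 0 < z.re) :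
    Integrable (fun ω => Complex.exp (-(z * X ω))) μ ∧ ‖Lap X μ z‖ ≤ (∫ ω, X ω ^ (-p) ∂μ) * z.re ^ (-p) := by
  have hb : ∀ᵐ ω ∂μ, ‖Complex.exp (-(z * X ω))‖ ≤ X ω ^ (-p) * z.re ^ (-p) := by
    filter_upwards [hpos] with ω hω
    rw [Complex.norm_exp, Complex.neg_re, Complex.re_mul_ofReal, mul_comm (X ω ^ (-p)), ← mul_rpow hz.le hω.le]
    exact exp_neg_le_rpow _ _ (by positivity) hp0 hp1
  refine ⟨(hi.mul_const _).mono' (Measurable.aestronglyMeasurable (by fun_prop)) hb, ?_⟩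
  rw [← integral_mul_const]
  exact norm_integral_le_of_norm_le (hi.mul_const _) hb

theorem Lap_diff {X : ℝ × ℝ → ℝ} {μ : Measure (ℝ × ℝ)} (hX : Measurable X) (hpos : ∀ᵐ ω ∂μ, 0 < X ω)
    (p : ℝ) (hp0 : 0 ≤ p) (hp1 : p ≤ 1) (hi : Integrable (fun ω => X ω ^ (-p)) μ) (z : ℂ) (hz : 0 < z.re) :
    DifferentiableAt ℂ (Lap X μ) z := by
  have h0 : Lap X μ = fun z => ProbabilityTheory.complexMGF X μ (-z) := by
    funext z; simp [Lap, ProbabilityTheory.complexMGF]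
  have hsub : Iio 0 ⊆ ProbabilityTheory.integrableExpSet X μ := by
    intro x hx
    have hx : x < 0 := hx
    have := (Lap_integrable hX hpos p hp0 hp1 hi (-(x:ℂ)) (by simpa using hx)).1.re
    show Integrable (fun ω => exp (x * X ω)) μ
    refine this.congr (Filter.Eventually.of_forall fun ω => ?_)
    show (Complex.exp _).re = _
    rw [show -(-(x:ℂ) * X ω) = ((x * X ω : ℝ) : ℂ) by push_cast; ring, Complex.exp_ofReal_re]
  have hin : Iio 0 ⊆ interior (ProbabilityTheory.integrableExpSet X μ) := interior_maximal hsub isOpen_Iio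
  rw [h0]
  have h1 : DifferentiableAt ℂ (ProbabilityTheory.complexMGF X μ) (-z) := by
    have := (ProbabilityTheory.differentiableOn_complexMGF (X := X) (μ := μ)) (-z) (hin (by simpa using hz))
    exact this.differentiableAt ((isOpen_interior.preimage Complex.continuous_re).mem_nhds (hin (by simpa using hz)))
  exact DifferentiableAt.comp (g := ProbabilityTheory.complexMGF X μ) z h1 differentiableAt_id.neg

theorem integrable_sinh_rpow (p : ℝ) (hp0 : 0 < p) (hp1 : p < 1) : IntegrableOn (fun u : ℝ => Real.sinh u ^ (-p)) (Ioi 0) := by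
  have hm : Measurable (fun u : ℝ => Real.sinh u ^ (-p)) := by fun_prop
  rw [← Ioc_union_Ioi_eq_Ioi (zero_le_one' ℝ)]
  refine IntegrableOn.union ?_ ?_
  · have h1 : IntegrableOn (fun x : ℝ => x ^ (-p)) (Ioc 0 1) := by
      rw [← intervalIntegrable_iff_integrableOn_Ioc_of_le (by norm_num)]
      exact intervalIntegral.intervalIntegrable_rpow' (by linarith)
    refine Integrable.mono' h1 hm.aestronglyMeasurable ?_
    filter_upwards [ae_restrict_mem measurableSet_Ioc] with u hu
    have := Real.self_le_sinh_iff.mpr hu.1.le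
    have h2 : 0 < Real.sinh u := hu.1.trans_le this
    rw [Real.norm_of_nonneg (by positivity)]
    exact rpow_le_rpow_of_nonpos hu.1 this (by linarith)
  · refine Integrable.mono' ((exp_neg_integrableOn_Ioi 1 hp0).const_mul (4^p)) hm.aestronglyMeasurable ?_
    filter_upwards [ae_restrict_mem measurableSet_Ioi] with u hu
    have hu : 1 < u := hu
    have h4 : exp u / 4 ≤ Real.sinh u := by
      rw [Real.sinh_eq]
      have h1 : exp (-u) ≤ 1 := exp_le_one_iff.mpr (by linarith)
      have h2 := add_one_le_exp u
      linarith
    have h2 : 0 < Real.sinh u := (by positivity : 0 < exp u / 4).trans_le h4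
    rw [Real.norm_of_nonneg (by positivity)]
    calc Real.sinh u ^ (-p) ≤ (exp u / 4) ^ (-p) := rpow_le_rpow_of_nonpos (by positivity) h4 (by linarith)
      _ = 4 ^ p * exp (-p * u) := by
        rw [div_rpow (exp_pos _).le (by norm_num), ← exp_mul, rpow_neg (by norm_num : (0:ℝ) ≤ 4), div_inv_eq_mul, mul_comm]
        congr 2; ring

noncomputable def mu1 : Measure (ℝ × ℝ) := (volume.restrict (Ioi 0)).prod (volume.restrict (Ioi 0))
noncomputable def mu2 : Measure (ℝ × ℝ) := (volume.restrict (Ioi 0)).prod (volume.restrict (Ioo 0 (π/2)))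
noncomputable def X1 (ω : ℝ × ℝ) : ℝ := 2 * Real.cosh ω.1 * Real.cosh ω.2
noncomputable def X2 (ω : ℝ × ℝ) : ℝ := 2 * Real.cosh ω.1 * sin ω.2
noncomputable def X3 (ω : ℝ × ℝ) : ℝ := 2 * Real.cosh ω.1 * Real.sinh ω.2

theorem X_gen (S : Set ℝ) (hS : MeasurableSet S) (f : ℝ → ℝ) (hpos : ∀ x ∈ S, 0 < f x) (p : ℝ) (hp0 : 0 < p)
    (hi : IntegrableOn (fun x => f x ^ (-p)) S) :
    (∀ᵐ ω ∂((volume.restrict (Ioi (0:ℝ))).prod (volume.restrict S)), 0 < 2 * Real.cosh ω.1 * f ω.2) ∧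
    Integrable (fun ω : ℝ × ℝ => (2 * Real.cosh ω.1 * f ω.2) ^ (-p)) ((volume.restrict (Ioi (0:ℝ))).prod (volume.restrict S)) := by
  have h1 : ∀ᵐ ω ∂((volume.restrict (Ioi (0:ℝ))).prod (volume.restrict S)), 0 < f ω.2 :=
    Measure.quasiMeasurePreserving_snd.ae ((ae_restrict_mem hS).mono hpos)
  refine ⟨?_, ?_⟩
  · filter_upwards [h1] with ω hω
    have := Real.cosh_pos ω.1
    positivity
  · have h2 := (Integrable.mul_prod ((integrable_cosh_rpow p hp0).integrableOn (s := Ioi 0)) hi).const_mul (2^(-p))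
    refine h2.congr ?_
    filter_upwards [h1] with ω hω
    have := Real.cosh_pos ω.1
    rw [mul_rpow (x := 2 * Real.cosh ω.1) (by positivity) hω.le, mul_rpow (x := 2) (by positivity) (by positivity)]
    ring

theorem X1_pos : ∀ᵐ ω ∂mu1, 0 < X1 ω :=
  (X_gen (Ioi 0) measurableSet_Ioi Real.cosh (fun x _ => Real.cosh_pos x) 1 one_pos ((integrable_cosh_rpow 1 one_pos).integrableOn)).1
theorem X1_int (p : ℝ) (hp0 : 0 < p) : Integrable (fun ω => X1 ω ^ (-p)) mu1 :=
  (X_gen (Ioi 0) measurableSet_Ioi Real.cosh (fun x _ => Real.cosh_pos x) p hp0 ((integrable_cosh_rpow p hp0).integrableOn)).2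
theorem sinh_gen (p : ℝ) (hp0 : 0 < p) (hp : p < 1) :
    (∀ᵐ ω ∂mu1, 0 < X3 ω) ∧ Integrable (fun ω => X3 ω ^ (-p)) mu1 :=
  X_gen (Ioi 0) measurableSet_Ioi Real.sinh (fun x hx => Real.sinh_pos_iff.mpr hx) p hp0 (integrable_sinh_rpow p hp0 hp)
theorem X3_pos : ∀ᵐ ω ∂mu1, 0 < X3 ω := (sinh_gen (1/2) (by norm_num) (by norm_num)).1
theorem X3_int (p : ℝ) (hp0 : 0 < p) (hp : p < 1) : Integrable (fun ω => X3 ω ^ (-p)) mu1 := (sinh_gen p hp0 hp).2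
theorem sin_gen (p : ℝ) (hp0 : 0 < p) (hp : p < 1) :
    (∀ᵐ ω ∂mu2, 0 < X2 ω) ∧ Integrable (fun ω => X2 ω ^ (-p)) mu2 :=
  X_gen (Ioo 0 (π/2)) measurableSet_Ioo sin (fun x hx => sin_pos_of_pos_of_lt_pi hx.1 (by linarith [hx.2, pi_pos])) p hp0
   ((intervalIntegrable_iff_integrableOn_Ioo_of_le (by positivity)).mp (intervalIntegrable_sin_rpow_half p hp0.le hp))
theorem X2_pos : ∀ᵐ ω ∂mu2, 0 < X2 ω := (sin_gen (1/2) (by norm_num) (by norm_num)).1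
theorem X2_int (p : ℝ) (hp0 : 0 < p) (hp : p < 1) : Integrable (fun ω => X2 ω ^ (-p)) mu2 := (sin_gen p hp0 hp).2
theorem X1_meas : Measurable X1 := by unfold X1; fun_prop
theorem X2_meas : Measurable X2 := by unfold X2; fun_prop
theorem X3_meas : Measurable X3 := by unfold X3; fun_prop

noncomputable def GG (z : ℂ) : ℂ := 2 * Lap X1 mu1 z + 2 * Complex.I * Lap X2 mu2 z
noncomputable def gg (z : ℂ) : ℂ := 2 * Lap X3 mu1 z

theorem GG_diff (z : ℂ) (hz : 0 < z.re) : DifferentiableAt ℂ GG z := by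
  have h1 := Lap_diff X1_meas X1_pos (1/2) (by norm_num) (by norm_num) (X1_int _ (by norm_num)) z hz
  have h2 := Lap_diff X2_meas X2_pos (1/2) (by norm_num) (by norm_num) (X2_int _ (by norm_num) (by norm_num)) z hz
  unfold GG
  fun_prop

theorem gg_diff (z : ℂ) (hz : 0 < z.re) : DifferentiableAt ℂ gg z := by
  have h1 := Lap_diff X3_meas X3_pos (1/2) (by norm_num) (by norm_num) (X3_int _ (by norm_num) (by norm_num)) z hz
  unfold gg
  fun_prop

theorem GG_bound (p : ℝ) (hp0 : 0 < p) (hp1 : p < 1) : ∃ C, 0 ≤ C ∧ ∀ z : ℂ, 0 < z.re → ‖GG z‖ ≤ C * z.re ^ (-p) := by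
  refine ⟨2 * (∫ ω, X1 ω ^ (-p) ∂mu1) + 2 * (∫ ω, X2 ω ^ (-p) ∂mu2), ?_, ?_⟩
  · have h1 : 0 ≤ ∫ ω, X1 ω ^ (-p) ∂mu1 := integral_nonneg_of_ae (X1_pos.mono fun ω h => (rpow_nonneg h.le _))
    have h2 : 0 ≤ ∫ ω, X2 ω ^ (-p) ∂mu2 := integral_nonneg_of_ae (X2_pos.mono fun ω h => (rpow_nonneg h.le _))
    positivity
  · intro z hz
    have h1 := (Lap_integrable X1_meas X1_pos p hp0.le hp1.le (X1_int _ hp0) z hz).2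
    have h2 := (Lap_integrable X2_meas X2_pos p hp0.le hp1.le (X2_int _ hp0 hp1) z hz).2
    calc ‖GG z‖ ≤ ‖2 * Lap X1 mu1 z‖ + ‖2 * Complex.I * Lap X2 mu2 z‖ := norm_add_le _ _
      _ = 2 * ‖Lap X1 mu1 z‖ + 2 * ‖Lap X2 mu2 z‖ := by simp
      _ ≤ _ := by nlinarith

theorem gg_bound (p : ℝ) (hp0 : 0 < p) (hp1 : p < 1) : ∃ C, 0 ≤ C ∧ ∀ z : ℂ, 0 < z.re → ‖gg z‖ ≤ C * z.re ^ (-p) := by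
  refine ⟨2 * (∫ ω, X3 ω ^ (-p) ∂mu1), ?_, ?_⟩
  · have h1 : 0 ≤ ∫ ω, X3 ω ^ (-p) ∂mu1 := integral_nonneg_of_ae (X3_pos.mono fun ω h => (rpow_nonneg h.le _))
    positivity
  · intro z hz
    have h1 := (Lap_integrable X3_meas X3_pos p hp0.le hp1.le (X3_int _ hp0 hp1) z hz).2
    calc ‖gg z‖ = 2 * ‖Lap X3 mu1 z‖ := by simp [gg]
      _ ≤ _ := by nlinarith


theorem inner_rect (c : ℝ) (hc : 0 < c) (z : ℂ) (h1 : 0 < z.re) (h2 : 0 < z.im) :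
    ∫ u in Ioi (0:ℝ), Complex.exp (-((-Complex.I * z) * (c * Real.sinh u : ℝ)))
     = (∫ u in Ioi (0:ℝ), Complex.exp (-(z * (c * Real.cosh u : ℝ))))
      + Complex.I * ∫ θ in Ioo (0:ℝ) (π/2), Complex.exp (-(z * (c * sin θ : ℝ))) := by
  have hpi := pi_pos
  set f : ℂ → ℂ := fun w => Complex.exp (-((-Complex.I * z) * (c * Complex.sinh w))) with hf
  have hsI : ∀ s ψ : ℝ, Complex.sinh (s + ψ * Complex.I) = (Real.sinh s * cos ψ : ℝ) + (Real.cosh s * sin ψ : ℝ) * Complex.I := by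
    intro s ψ
    rw [Complex.sinh_add, Complex.cosh_mul_I, Complex.sinh_mul_I]
    push_cast; ring
  have hcI : ∀ u : ℝ, f (u + (π/2 : ℝ) * Complex.I) = Complex.exp (-(z * (c * Real.cosh u : ℝ))) := by
    intro u
    simp only [hf]; rw [hsI]; simp only [cos_pi_div_two, sin_pi_div_two]
    congr 1; push_cast
    linear_combination ((z * c * Complex.cosh u)) * Complex.I_mul_I
  have hθI : ∀ θ : ℝ, f ((0:ℝ) + θ * Complex.I) = Complex.exp (-(z * (c * sin θ : ℝ))) := by
    intro u
    simp only [hf]; rw [hsI]; simp only [Real.sinh_zero, Real.cosh_zero]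
    congr 1; push_cast
    linear_combination ((z * c * Complex.sin u)) * Complex.I_mul_I
  have hrI : ∀ u : ℝ, f (u + (0:ℝ) * Complex.I) = Complex.exp (-((-Complex.I * z) * (c * Real.sinh u : ℝ))) := by
    intro u
    simp only [hf]; rw [hsI]; simp only [cos_zero, sin_zero]
    congr 1; push_cast; ring
  have hrect : ∀ T : ℝ, (∫ s in (0:ℝ)..T, Complex.exp (-((-Complex.I * z) * (c * Real.sinh s : ℝ))))
       - (∫ s in (0:ℝ)..T, Complex.exp (-(z * (c * Real.cosh s : ℝ))))
      - Complex.I * (∫ y in (0:ℝ)..(π/2), Complex.exp (-(z * (c * sin y : ℝ)))) = - (Complex.I * ∫ y in (0:ℝ)..(π/2), f (T + y * Complex.I)) := by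
    intro T
    have := Complex.integral_boundary_rect_eq_zero_of_differentiableOn f (⟨0, 0⟩) (⟨T, π/2⟩) (by fun_prop)
    simp only [hcI, hrI, hθI, smul_eq_mul] at this
    linear_combination this
  set m := min z.re z.im with hm
  have hm0 : 0 < m := lt_min h1 h2
  have hside : Filter.Tendsto (fun T : ℝ => ∫ y in (0:ℝ)..(π/2), f (T + y * Complex.I)) Filter.atTop (nhds 0) := by
    have hx : Filter.Tendsto (fun T : ℝ => exp (-(c*m*T)) * |π/2 - 0|) Filter.atTop (nhds 0) := by
      have h3 : Filter.Tendsto (fun T : ℝ => exp (-(c*m*T))) Filter.atTop (nhds 0) :=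
        tendsto_exp_neg_atTop_nhds_zero.comp (Filter.tendsto_id.const_mul_atTop (by positivity : 0 < c * m))
      simpa using h3.mul_const (|π/2-0|)
    refine squeeze_zero_norm' ?_ hx
    filter_upwards [Filter.eventually_ge_atTop 0] with T hT
    apply intervalIntegral.norm_integral_le_of_norm_le_const
    intro y hy
    rw [uIoc_of_le (by positivity)] at hy
    simp only [hf]
    rw [Complex.norm_exp, hsI]
    apply exp_le_exp.mpr
    simp only [Complex.neg_re, Complex.mul_re, Complex.add_re, Complex.ofReal_re, Complex.I_re, Complex.ofReal_im, Complex.I_im,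
      Complex.add_im, Complex.mul_im, Complex.neg_im]
    have a1 : 0 ≤ sin y := sin_nonneg_of_nonneg_of_le_pi hy.1.le (by linarith [hy.2])
    have a2 : 0 ≤ cos y := cos_nonneg_of_neg_pi_div_two_le_of_le (by linarith [hy.1]) hy.2
    have a3 : 1 ≤ sin y + cos y := by nlinarith [sin_sq_add_cos_sq y]
    have a4 : T ≤ Real.sinh T := Real.self_le_sinh_iff.mpr hT
    have a5 : T ≤ Real.cosh T := a4.trans (Real.sinh_lt_cosh T).le
    have b1 : m ≤ z.re := min_le_left _ _
    have b2 : m ≤ z.im := min_le_right _ _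
    have e1 : m * T * cos y ≤ z.im * (Real.sinh T * cos y) := by
      rw [← mul_assoc]; gcongr
    have e2 : m * T * sin y ≤ z.re * (Real.cosh T * sin y) := by
      rw [← mul_assoc]; gcongr
    have e3 : m * T ≤ m * T * (sin y + cos y) := le_mul_of_one_le_right (by positivity) a3
    have e4 : c * (m * T) ≤ c * (z.im * (Real.sinh T * cos y) + z.re * (Real.cosh T * sin y)) := by
      gcongr; linarith
    ring_nf at e4 ⊢
    linarith
  have hA1 : IntegrableOn (fun u : ℝ => Complex.exp (-((-Complex.I * z) * (c * Real.sinh u : ℝ)))) (Ioi 0) := by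
    refine Integrable.mono' (exp_neg_integrableOn_Ioi 0 (by positivity : 0 < c * z.im)) (Continuous.aestronglyMeasurable (by fun_prop)) ?_
    filter_upwards [ae_restrict_mem measurableSet_Ioi] with u hu
    have hu : 0 < u := hu
    rw [Complex.norm_exp, Complex.neg_re, Complex.re_mul_ofReal]
    apply exp_le_exp.mpr
    have a4 : u ≤ Real.sinh u := Real.self_le_sinh_iff.mpr hu.le
    have := mul_le_mul_of_nonneg_left a4 (by positivity : 0 ≤ c * z.im)
    simp; linarith
  have hB1 : IntegrableOn (fun u : ℝ => Complex.exp (-(z * (c * Real.cosh u : ℝ)))) (Ioi 0) := by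
    refine Integrable.mono' ((integrable_exp_cosh (c * z.re) (by positivity)).integrableOn) (Continuous.aestronglyMeasurable (by fun_prop)) ?_
    filter_upwards with u
    rw [Complex.norm_exp, Complex.neg_re, Complex.re_mul_ofReal]
    apply exp_le_exp.mpr
    linarith
  have hA := intervalIntegral_tendsto_integral_Ioi 0 hA1 Filter.tendsto_id
  have hB := intervalIntegral_tendsto_integral_Ioi 0 hB1 Filter.tendsto_id
  have hAB := (hA.sub hB).sub_const (Complex.I * (∫ y in (0:ℝ)..(π/2), Complex.exp (-(z * (c * sin y : ℝ)))))
  simp only [id] at hAB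
  have hz := (hside.const_mul Complex.I).neg
  have := tendsto_nhds_unique hAB (hz.congr fun T => (hrect T).symm)
  rw [intervalIntegral.integral_of_le (by positivity), integral_Ioc_eq_integral_Ioo] at this
  linear_combination this

theorem GG_eq_gg (z : ℂ) (h1 : 0 < z.re) (h2 : 0 < z.im) : GG z = gg (-Complex.I * z) := by
  have i1 := (Lap_integrable X1_meas X1_pos (1/2) (by norm_num) (by norm_num) (X1_int _ (by norm_num)) z h1).1
  have i2 := (Lap_integrable X2_meas X2_pos (1/2) (by norm_num) (by norm_num) (X2_int _ (by norm_num) (by norm_num)) z h1).1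
  have i3 := (Lap_integrable X3_meas X3_pos (1/2) (by norm_num) (by norm_num) (X3_int _ (by norm_num) (by norm_num)) (-Complex.I * z) (by simpa using h2)).1
  have key : Lap X3 mu1 (-Complex.I * z) = Lap X1 mu1 z + Complex.I * Lap X2 mu2 z := by
    unfold Lap
    unfold mu1 mu2 at *
    rw [integral_prod _ i1, integral_prod _ i2, integral_prod _ i3, ← integral_const_mul, ← integral_add]
    · congr 1
      funext v
      exact inner_rect (2 * Real.cosh v) (by have := Real.cosh_pos v; positivity) z h1 h2
    · exact i1.integral_prod_left
    · exact i2.integral_prod_left.const_mul _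
  unfold GG gg
  rw [key]; ring

theorem gg_real (t : ℝ) : (gg t).im = 0 := by
  unfold gg Lap
  have : (fun ω => Complex.exp (-(t * X3 ω))) = fun ω => ((exp (-(t * X3 ω)) : ℝ) : ℂ) := by
    funext ω; push_cast; rfl
  rw [this, integral_complex_ofReal]
  simp

theorem Lap_real (X : ℝ × ℝ → ℝ) (μ) (t : ℝ) : Lap X μ t = ((∫ ω, exp (-(t * X ω)) ∂μ : ℝ) : ℂ) := by
  unfold Lap
  rw [← integral_complex_ofReal]; push_cast; rfl

theorem Lap2_real (t : ℝ) (ht : 0 < t) : ∫ ω, exp (-(t * X2 ω)) ∂mu2 = π / 2 * (I0 t * K0 t) := by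
  have i2 := (Lap_integrable X2_meas X2_pos (1/2) (by norm_num) (by norm_num) (X2_int _ (by norm_num) (by norm_num)) t (by simpa)).1.re
  have i2 : Integrable (fun ω => exp (-(t * X2 ω))) mu2 := by
    refine i2.congr (Filter.Eventually.of_forall fun ω => ?_)
    show (Complex.exp _).re = _
    rw [show -((t:ℂ) * X2 ω) = ((-(t * X2 ω) : ℝ) : ℂ) by push_cast; ring, Complex.exp_ofReal_re]
  unfold mu2 at *
  rw [integral_prod_symm _ i2, ← (IK_formula t ht).2]
  congr 1
  funext θ
  unfold K0 X2
  congr 1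
  funext v
  congr 1; ring

theorem cosh_prod (x q : ℝ) : 2 * Real.cosh (x - q) * Real.cosh q = Real.cosh x + Real.cosh (x - 2 * q) := by
  have h1 := Real.cosh_add (x - q) q
  have h2 := Real.cosh_sub (x - q) q
  rw [show x - q + q = x by ring] at h1
  rw [show x - q - q = x - 2 * q by ring] at h2
  rw [h1, h2]; ring

theorem Lap1_real (t : ℝ) (ht : 0 < t) : 2 * ∫ ω, exp (-(t * X1 ω)) ∂mu1 = K0 t ^ 2 := by
  have hK : ∫ x : ℝ, ∫ y : ℝ, exp (-(t * Real.cosh x)) * exp (-(t * Real.cosh y)) = 4 * K0 t ^ 2 := by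
    simp_rw [integral_const_mul, integral_mul_const, two_K0]; ring
  have hsub : ∀ x : ℝ, ∫ y : ℝ, exp (-(t * Real.cosh x)) * exp (-(t * Real.cosh y)) = 2 * ∫ q : ℝ, exp (-(2 * t * Real.cosh (x - q) * Real.cosh q)) := by
    intro x
    have e : ∀ q : ℝ, exp (-(2 * t * Real.cosh (x - q) * Real.cosh q)) = exp (-(t * Real.cosh x)) * exp (-(t * Real.cosh (x - 2 * q))) := by
      intro q
      rw [← exp_add]; congr 1
      linear_combination (-t) * cosh_prod x q
    simp_rw [e]
    rw [integral_const_mul, integral_const_mul]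
    have := Measure.integral_comp_mul_left (fun q => exp (-(t * Real.cosh (x - q)))) 2
    rw [this, integral_sub_left_eq_self (fun q => exp (-(t * Real.cosh q))) volume x]
    simp; ring
  simp_rw [hsub] at hK
  rw [integral_const_mul, integral_integral_swap] at hK
  · have h3 : ∀ q : ℝ, ∫ x : ℝ, exp (-(2 * t * Real.cosh (x - q) * Real.cosh q)) = 2 * ∫ x in Ioi (0:ℝ), exp (-(2 * t * Real.cosh x * Real.cosh q)) := by
      intro q
      rw [integral_sub_right_eq_self (fun x => exp (-(2 * t * Real.cosh x * Real.cosh q))),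
        ← integral_comp_abs (f := fun x => exp (-(2 * t * Real.cosh x * Real.cosh q)))]
      simp
    simp_rw [h3] at hK
    rw [integral_const_mul] at hK
    have h4 : ∫ q : ℝ, ∫ x in Ioi (0:ℝ), exp (-(2 * t * Real.cosh x * Real.cosh q)) = 2 * ∫ q in Ioi (0:ℝ), ∫ x in Ioi (0:ℝ), exp (-(2 * t * Real.cosh x * Real.cosh q)) := by
      rw [← integral_comp_abs (f := fun q => ∫ x in Ioi (0:ℝ), exp (-(2 * t * Real.cosh x * Real.cosh q)))]
      simp
    rw [h4] at hK
    have i1 := (Lap_integrable X1_meas X1_pos (1/2) (by norm_num) (by norm_num) (X1_int _ (by norm_num)) t (by simpa)).1.re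
    have i1 : Integrable (fun ω => exp (-(t * X1 ω))) mu1 := by
      refine i1.congr (Filter.Eventually.of_forall fun ω => ?_)
      show (Complex.exp _).re = _
      rw [show -((t:ℂ) * X1 ω) = ((-(t * X1 ω) : ℝ) : ℂ) by push_cast; ring, Complex.exp_ofReal_re]
    have h5 : ∫ ω, exp (-(t * X1 ω)) ∂mu1 = ∫ q in Ioi (0:ℝ), ∫ x in Ioi (0:ℝ), exp (-(2 * t * Real.cosh x * Real.cosh q)) := by
      unfold mu1 at *
      rw [integral_prod_symm _ i1]
      congr 1; funext q; congr 1; funext x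
      unfold X1; congr 1; ring
    rw [h5]; linarith
  · have g := integrable_exp_neg_mul_sq (b := t/6) (by positivity)
    refine Integrable.mono' (Integrable.mul_prod g g) (by apply Continuous.aestronglyMeasurable; unfold Function.uncurry; fun_prop) ?_
    filter_upwards with z
    obtain ⟨x, q⟩ := z
    simp only [Function.uncurry]
    rw [Real.norm_of_nonneg (exp_pos _).le, ← exp_add]
    apply exp_le_exp.mpr
    have h1 := cosh_prod x q
    have a1 := one_add_sq_le_cosh x
    have a2 := one_add_sq_le_cosh (x - 2 * q)
    have a3 : (x^2 + q^2)/6 ≤ 2 * (Real.cosh (x-q) * Real.cosh q) := by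
      nlinarith [sq_nonneg (x * 3/2 - q * 2), sq_nonneg (x - 3/2 * q), sq_nonneg (x - q), sq_nonneg x, sq_nonneg q]
    nlinarith [mul_le_mul_of_nonneg_left a3 ht.le]

theorem GG_real (t : ℝ) (ht : 0 < t) : GG t = ((K0 t ^ 2 : ℝ) : ℂ) + ((π * (I0 t * K0 t) : ℝ) : ℂ) * Complex.I := by
  unfold GG
  rw [Lap_real, Lap_real, Lap2_real t ht, ← Lap1_real t ht]
  push_cast; ring


theorem tendsto_cosh_rpow (l : Filter ℝ) (hl : Filter.Tendsto (fun u : ℝ => u^2) l Filter.atTop) :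
    Filter.Tendsto (fun u : ℝ => Real.cosh u ^ (-(1/4) : ℝ)) l (nhds 0) := by
  have h1 : Filter.Tendsto (fun u : ℝ => Real.cosh u) l Filter.atTop := by
    refine Filter.tendsto_atTop_mono one_add_sq_le_cosh ?_
    exact Filter.tendsto_atTop_add_const_left _ _ (hl.atTop_div_const (by norm_num))
  exact (tendsto_rpow_neg_atTop (by norm_num : (0:ℝ) < 1/4)).comp h1

theorem cube_bound (H : ℂ → ℂ) (hH : ∀ p : ℝ, 0 < p → p < 1 → ∃ C, 0 ≤ C ∧ ∀ z : ℂ, 0 < z.re → ‖H z‖ ≤ C * z.re ^ (-p)) :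
    ∃ C, 0 ≤ C ∧ ∀ (s : ℝ) (z : ℂ), exp s / 2 ≤ z.re → ‖H z‖ ^ 3 * exp (2 * s) ≤ C * Real.cosh s ^ (-(1/4) : ℝ) := by
  have main : ∀ p : ℝ, 0 < p → p < 1 → ∃ C, 0 ≤ C ∧ ∀ (s : ℝ) (z : ℂ), exp s / 2 ≤ z.re → ‖H z‖ ^ 3 * exp (2 * s) ≤ C * exp ((2 - 3 * p) * s) := by
    intro p hp0 hp1
    obtain ⟨C, hC, hb⟩ := hH p hp0 hp1
    refine ⟨(C * 2 ^ p) ^ 3, by positivity, ?_⟩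
    intro s z hz
    have hs := exp_pos s
    have h0 : 0 < z.re := by linarith
    have h1 : z.re ^ (-p) ≤ 2 ^ p * exp (-p * s) := by
      calc z.re ^ (-p) ≤ (exp s / 2) ^ (-p) := rpow_le_rpow_of_nonpos (by positivity) hz (by linarith)
        _ = _ := by
          rw [div_rpow (exp_pos _).le (by norm_num), ← exp_mul, rpow_neg (by norm_num : (0:ℝ) ≤ 2), div_inv_eq_mul, mul_comm]
          congr 2; ring
    have h2 : ‖H z‖ ≤ C * 2 ^ p * exp (-p * s) := by
      rw [mul_assoc]
      exact (hb z h0).trans (mul_le_mul_of_nonneg_left h1 hC)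
    calc ‖H z‖ ^ 3 * exp (2 * s) ≤ (C * 2 ^ p * exp (-p * s)) ^ 3 * exp (2 * s) := by gcongr
      _ = _ := by
        rw [mul_pow, ← exp_nat_mul, mul_assoc, ← exp_add]
        congr 2; push_cast; ring
  obtain ⟨C1, h1, b1⟩ := main (1/2) (by norm_num) (by norm_num)
  obtain ⟨C2, h2, b2⟩ := main (3/4) (by norm_num) (by norm_num)
  refine ⟨C1 + C2, by positivity, ?_⟩
  intro s z hz
  have hc := Real.cosh_pos s
  have hce : Real.cosh s ≤ exp |s| := by
    rw [← Real.cosh_abs, Real.cosh_eq]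
    have : exp (-|s|) ≤ exp |s| := exp_le_exp.mpr (by linarith [abs_nonneg s])
    linarith
  have h3 : exp (-(1/4) * |s|) ≤ Real.cosh s ^ (-(1/4) : ℝ) := by
    have := rpow_le_rpow_of_nonpos hc hce (by norm_num : (-(1/4) : ℝ) ≤ 0)
    rw [← exp_mul] at this
    convert this using 2; ring
  rcases le_total 0 s with h | h
  · have := b2 s z hz
    rw [abs_of_nonneg h] at h3
    calc _ ≤ _ := this
      _ ≤ C2 * exp (-(1/4) * s) := by gcongr; norm_num
      _ ≤ C2 * Real.cosh s ^ (-(1/4) : ℝ) := by gcongr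
      _ ≤ _ := by gcongr; linarith
  · have := b1 s z hz
    rw [abs_of_nonpos h] at h3
    calc _ ≤ _ := this
      _ ≤ C1 * exp (-(1/4) * -s) := mul_le_mul_of_nonneg_left (exp_le_exp.mpr (by linarith)) h1
      _ ≤ C1 * Real.cosh s ^ (-(1/4) : ℝ) := by gcongr
      _ ≤ _ := by gcongr; linarith

theorem strip_app (H : ℂ → ℂ) (hH : ∀ p : ℝ, 0 < p → p < 1 → ∃ C, 0 ≤ C ∧ ∀ z : ℂ, 0 < z.re → ‖H z‖ ≤ C * z.re ^ (-p))
    (hd : ∀ z : ℂ, 0 < z.re → DifferentiableAt ℂ H z) (c : ℂ) (a a' : ℝ) (haa : a ≤ a')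
    (hc : ∀ s ψ : ℝ, a ≤ ψ → ψ ≤ a' → exp s / 2 ≤ (c * Complex.exp (s + ψ * Complex.I)).re) :
    Integrable (fun s : ℝ => H (c * Complex.exp (s + a * Complex.I)) ^ 3 * Complex.exp (2 * (s + a * Complex.I))) ∧
    ∫ s : ℝ, H (c * Complex.exp (s + a * Complex.I)) ^ 3 * Complex.exp (2 * (s + a * Complex.I)) =
     ∫ s : ℝ, H (c * Complex.exp (s + a' * Complex.I)) ^ 3 * Complex.exp (2 * (s + a' * Complex.I)) := by
  obtain ⟨C, hC, hb⟩ := cube_bound H hH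
  have := strip_aux (fun ζ => H (c * Complex.exp ζ) ^ 3 * Complex.exp (2 * ζ)) a a' haa ?_
    (fun s => C * Real.cosh s ^ (-(1/4) : ℝ)) ((integrable_cosh_rpow (1/4) (by norm_num)).const_mul C) ?_ ?_ ?_
  · exact ⟨this.1 a le_rfl haa, this.2⟩
  · intro z h1 h2
    have h3 := hc z.re z.im h1 h2
    rw [Complex.re_add_im] at h3
    have h4 := hd (c * Complex.exp z) (by have := exp_pos z.re; linarith)
    have h5 : DifferentiableAt ℂ (fun ζ => H (c * Complex.exp ζ)) z :=
      DifferentiableAt.comp (g := H) z h4 (by fun_prop)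
    fun_prop
  · intro s ψ h1 h2
    rw [norm_mul, norm_pow, Complex.norm_exp]
    have : (2 * ((s:ℂ) + ψ * Complex.I)).re = 2 * s := by simp
    rw [this]
    exact hb s _ (hc s ψ h1 h2)
  · simpa using (tendsto_cosh_rpow Filter.atTop (by exact Filter.tendsto_pow_atTop (by norm_num))).const_mul C
  · simpa using (tendsto_cosh_rpow Filter.atBot ((Filter.tendsto_pow_atTop (α := ℝ) (n := 2) (by norm_num)).comp Filter.tendsto_neg_atBot_atTop |>.congr (by simp))).const_mul C

theorem half_le_cos (ψ : ℝ) (h1 : 0 ≤ ψ) (h2 : ψ ≤ π/4) : 1/2 ≤ cos ψ := by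
  have := cos_le_cos_of_nonneg_of_le_pi h1 (by linarith [pi_pos]) (h2.trans (by linarith [pi_pos] : π/4 ≤ π/3))
  rwa [cos_pi_div_three] at this

theorem sum_rule_log : Integrable (fun s : ℝ => GG (exp s : ℝ) ^ 3 * exp (2 * s)) ∧
    (∫ s : ℝ, GG (exp s : ℝ) ^ 3 * exp (2 * s)).im = 0 := by
  have hpi := pi_pos
  have A := strip_app GG GG_bound GG_diff 1 0 (π/4) (by positivity) (by
    intro s ψ h1 h2
    rw [one_mul, Complex.exp_re]
    have := half_le_cos ψ h1 h2
    simp only [Complex.add_re, Complex.ofReal_re, Complex.mul_re, Complex.I_re, Complex.ofReal_im, Complex.I_im,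
      Complex.add_im, Complex.mul_im]
    ring_nf
    nlinarith [exp_pos s])
  have B := strip_app gg gg_bound gg_diff (-Complex.I) (π/4) (π/2) (by linarith) (by
    intro s ψ h1 h2
    have e : (-Complex.I * Complex.exp (s + ψ * Complex.I)).re = (Complex.exp (s + ψ * Complex.I)).im := by simp
    rw [e, Complex.exp_im]
    have := half_le_cos (π/2 - ψ) (by linarith) (by linarith)
    rw [cos_pi_div_two_sub] at this
    simp only [Complex.add_re, Complex.ofReal_re, Complex.mul_re, Complex.I_re, Complex.ofReal_im, Complex.I_im,
      Complex.add_im, Complex.mul_im]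
    ring_nf
    nlinarith [exp_pos s])
  have hmid : ∀ s : ℝ, GG (1 * Complex.exp (s + (π/4 : ℝ) * Complex.I)) = gg (-Complex.I * Complex.exp (s + (π/4 : ℝ) * Complex.I)) := by
    intro s
    rw [one_mul]
    have hc : 0 < cos (π/4) := cos_pos_of_mem_Ioo ⟨by linarith, by linarith⟩
    have hs : 0 < sin (π/4) := sin_pos_of_pos_of_lt_pi (by linarith) (by linarith)
    apply GG_eq_gg
    · rw [Complex.exp_re]
      simp only [Complex.add_re, Complex.ofReal_re, Complex.mul_re, Complex.I_re, Complex.ofReal_im, Complex.I_im,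
        Complex.add_im, Complex.mul_im]
      ring_nf; ring_nf at hc; positivity
    · rw [Complex.exp_im]
      simp only [Complex.add_re, Complex.ofReal_re, Complex.mul_re, Complex.I_re, Complex.ofReal_im, Complex.I_im,
        Complex.add_im, Complex.mul_im]
      ring_nf; ring_nf at hs; positivity
  have hA2 := A.2
  simp_rw [hmid] at hA2
  rw [B.2] at hA2
  have hend : ∀ s : ℝ, gg (-Complex.I * Complex.exp (s + (π/2 : ℝ) * Complex.I)) ^ 3 * Complex.exp (2 * (s + (π/2 : ℝ) * Complex.I))
      = (((gg (exp s : ℝ)).re ^ 3 * -exp (2 * s) : ℝ) : ℂ) := by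
    intro s
    have e1 : -Complex.I * Complex.exp (s + (π/2 : ℝ) * Complex.I) = (exp s : ℝ) := by
      rw [Complex.exp_add]; push_cast; rw [Complex.exp_pi_div_two_mul_I]
      linear_combination (-Complex.exp s) * Complex.I_mul_I
    have e2 : Complex.exp (2 * (s + (π/2 : ℝ) * Complex.I)) = ((-exp (2 * s) : ℝ) : ℂ) := by
      rw [mul_add, Complex.exp_add]; push_cast
      rw [show 2 * ((π:ℂ)/2 * Complex.I) = π * Complex.I by ring, Complex.exp_pi_mul_I]; ring
    rw [e1, e2]
    have : gg (exp s : ℝ) = ((gg (exp s : ℝ)).re : ℂ) := by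
      apply Complex.ext
      · simp only [Complex.ofReal_re]
      · simp only [Complex.ofReal_im]; exact gg_real _
    rw [Complex.ofReal_mul, Complex.ofReal_pow, ← this]
  simp_rw [hend] at hA2
  rw [integral_complex_ofReal] at hA2
  have hstart : ∀ s : ℝ, GG (1 * Complex.exp (s + (0 : ℝ) * Complex.I)) ^ 3 * Complex.exp (2 * (s + (0 : ℝ) * Complex.I)) = GG (exp s : ℝ) ^ 3 * exp (2 * s) := by
    intro s; simp
  simp_rw [hstart] at hA2
  have hA1 := A.1
  simp_rw [hstart] at hA1
  refine ⟨hA1, ?_⟩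
  rw [hA2]; exact Complex.ofReal_im _

theorem K0_nonneg (t : ℝ) : 0 ≤ K0 t := integral_nonneg fun u => (exp_pos _).le
theorem I0_nonneg (t : ℝ) : 0 ≤ I0 t :=
  mul_nonneg (by positivity) (intervalIntegral.integral_nonneg pi_pos.le fun u _ => (exp_pos _).le)

theorem exp_subst_integrable (f : ℝ → ℝ) : IntegrableOn f (Ioi 0) ↔ Integrable (fun s : ℝ => f (exp s) * exp s) := by
  have := integrableOn_image_iff_integrableOn_abs_deriv_smul (s := univ) (f := exp) (f' := exp) MeasurableSet.univ (fun x _ => (Real.hasDerivAt_exp x).hasDerivWithinAt) (Real.exp_injective.injOn) f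
  rw [image_univ, Real.range_exp, integrableOn_univ] at this
  rw [this]
  simp [abs_of_pos (exp_pos _), mul_comm]

theorem exp_subst_integral (f : ℝ → ℝ) : ∫ t in Ioi 0, f t = ∫ s : ℝ, f (exp s) * exp s := by
  have := integral_image_eq_integral_abs_deriv_smul (s := univ) (f := exp) (f' := exp) MeasurableSet.univ (fun x _ => (Real.hasDerivAt_exp x).hasDerivWithinAt) (Real.exp_injective.injOn) f
  rw [image_univ, Real.range_exp, setIntegral_univ] at this
  rw [this]
  simp [abs_of_pos (exp_pos _), mul_comm]

theorem measurable_K0 : Measurable K0 := by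
  unfold K0
  apply StronglyMeasurable.measurable
  apply StronglyMeasurable.integral_prod_right (f := fun t u => exp (-(t * Real.cosh u)))
  exact (by fun_prop : Continuous fun x : ℝ × ℝ => exp (-(x.1 * Real.cosh x.2))).stronglyMeasurable

theorem measurable_I0 : Measurable I0 := by
  unfold I0
  apply Measurable.const_mul
  simp_rw [intervalIntegral.integral_of_le pi_pos.le]
  apply StronglyMeasurable.measurable
  apply StronglyMeasurable.integral_prod_right (f := fun t u => exp (t * cos u))
  exact (by fun_prop : Continuous fun x : ℝ × ℝ => exp (x.1 * cos x.2)).stronglyMeasurable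

theorem sum_rule : IntegrableOn (fun t => I0 t * K0 t ^ 5 * t) (Ioi 0) ∧ IntegrableOn (fun t => (I0 t * K0 t) ^ 3 * t) (Ioi 0) ∧
    3 * ∫ t in Ioi 0, I0 t * K0 t ^ 5 * t = π ^ 2 * ∫ t in Ioi 0, (I0 t * K0 t) ^ 3 * t := by
  obtain ⟨hi, him⟩ := sum_rule_log
  have hpi := pi_pos
  have mK := measurable_K0
  have mI := measurable_I0
  have h2 : ∀ s : ℝ, exp (2 * s) = exp s * exp s := by intro s; rw [← exp_add]; congr 1; ring
  have n1 : ∀ t : ℝ, 0 < t → K0 t ^ 2 ≤ ‖GG t‖ := by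
    intro t ht
    have := Complex.abs_re_le_norm (GG t)
    rw [GG_real t ht] at this ⊢
    simp only [Complex.add_re, Complex.ofReal_re, Complex.mul_re, Complex.I_re, Complex.ofReal_im, Complex.I_im] at this
    refine le_trans (le_trans ?_ (le_abs_self _)) this
    linarith
  have n2 : ∀ t : ℝ, 0 < t → π * (I0 t * K0 t) ≤ ‖GG t‖ := by
    intro t ht
    have := Complex.abs_im_le_norm (GG t)
    rw [GG_real t ht] at this ⊢
    simp only [Complex.add_im, Complex.ofReal_re, Complex.mul_im, Complex.I_re, Complex.ofReal_im, Complex.I_im] at this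
    refine le_trans (le_trans ?_ (le_abs_self _)) this
    linarith
  have i1 : Integrable (fun s : ℝ => I0 (exp s) * K0 (exp s) ^ 5 * exp s * exp s) := by
    refine Integrable.mono' (hi.norm.const_mul (1/π)) (Measurable.aestronglyMeasurable (by fun_prop)) ?_
    filter_upwards with s
    have a1 := I0_nonneg (exp s)
    have a2 := K0_nonneg (exp s)
    rw [Real.norm_of_nonneg (by positivity), norm_mul, norm_pow, Complex.norm_real, Real.norm_of_nonneg (exp_pos _).le]
    have b1 := n1 (exp s) (exp_pos s)
    have b2 := n2 (exp s) (exp_pos s)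
    calc _ = (1/π) * ((K0 (exp s) ^ 2) * (K0 (exp s) ^ 2) * (π * (I0 (exp s) * K0 (exp s))) * exp (2 * s)) := by
          rw [h2]; field_simp
      _ ≤ (1/π) * (‖GG (exp s : ℝ)‖ * ‖GG (exp s : ℝ)‖ * ‖GG (exp s : ℝ)‖ * exp (2 * s)) := by gcongr
      _ = _ := by ring
  have i2 : Integrable (fun s : ℝ => (I0 (exp s) * K0 (exp s)) ^ 3 * exp s * exp s) := by
    refine Integrable.mono' (hi.norm.const_mul (1/π^3)) (Measurable.aestronglyMeasurable (by fun_prop)) ?_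
    filter_upwards with s
    have a1 := I0_nonneg (exp s)
    have a2 := K0_nonneg (exp s)
    rw [Real.norm_of_nonneg (by positivity), norm_mul, norm_pow, Complex.norm_real, Real.norm_of_nonneg (exp_pos _).le]
    have b2 := n2 (exp s) (exp_pos s)
    calc _ = (1/π^3) * ((π * (I0 (exp s) * K0 (exp s)))^3 * exp (2 * s)) := by
          rw [h2]; field_simp
      _ ≤ _ := by gcongr
  refine ⟨(exp_subst_integrable _).mpr i1, (exp_subst_integrable _).mpr i2, ?_⟩
  rw [exp_subst_integral, exp_subst_integral]
  have him2 : ∫ s : ℝ, (GG (exp s : ℝ) ^ 3 * exp (2 * s)).im = 0 := by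
    have h := integral_im hi
    simp only [RCLike.im_to_complex] at h
    rw [h, him]
  have e : ∀ s : ℝ, (GG (exp s : ℝ) ^ 3 * exp (2 * s)).im = (3 * π) * (I0 (exp s) * K0 (exp s) ^ 5 * exp s * exp s) - π ^ 3 * ((I0 (exp s) * K0 (exp s)) ^ 3 * exp s * exp s) := by
    intro s
    have : GG (exp s : ℝ) ^ 3 * exp (2 * s) = (((K0 (exp s) ^ 6 - 3 * K0 (exp s) ^ 2 * (π * (I0 (exp s) * K0 (exp s))) ^ 2) * exp (2 * s) : ℝ) : ℂ)
       + (((3 * π) * (I0 (exp s) * K0 (exp s) ^ 5 * exp s * exp s) - π ^ 3 * ((I0 (exp s) * K0 (exp s)) ^ 3 * exp s * exp s) : ℝ) : ℂ) * Complex.I := by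
      rw [GG_real _ (exp_pos s), h2]
      have i3 : Complex.I ^ 3 = - Complex.I := by rw [pow_succ, Complex.I_sq]; ring
      have i2 := Complex.I_sq
      push_cast
      linear_combination (3 * (K0 (exp s))^2 * (π * (I0 (exp s) * K0 (exp s)))^2 * (Complex.exp s * Complex.exp s)) * i2 + (π * (I0 (exp s) * K0 (exp s)))^3 * (Complex.exp s * Complex.exp s) * i3
    rw [this]
    rw [Complex.add_im, Complex.im_ofReal_mul, Complex.ofReal_im, Complex.I_im]
    ring
  simp_rw [e] at him2
  rw [integral_sub (i1.const_mul _) (i2.const_mul _), integral_const_mul, integral_const_mul] at him2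
  have : π * (3 * ∫ s : ℝ, I0 (exp s) * K0 (exp s) ^ 5 * exp s * exp s) = π * (π ^ 2 * ∫ s : ℝ, (I0 (exp s) * K0 (exp s)) ^ 3 * exp s * exp s) := by linarith
  exact mul_left_cancel₀ hpi.ne' this


theorem lsub {s t : Set ℝ} (hs : MeasurableSet s) (f f' finv : ℝ → ℝ) (h1 : ∀ x ∈ s, f x ∈ t) (h2 : ∀ y ∈ t, finv y ∈ s)
    (h3 : ∀ x ∈ s, finv (f x) = x) (h4 : ∀ y ∈ t, f (finv y) = y) (hd : ∀ x ∈ s, HasDerivAt f (f' x) x) (g : ℝ → ENNReal) :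
    ∫⁻ x in t, g x = ∫⁻ x in s, ENNReal.ofReal |f' x| * g (f x) := by
  have him : f '' s = t := by
    apply Set.Subset.antisymm
    · rintro _ ⟨x, hx, rfl⟩; exact h1 x hx
    · intro y hy; exact ⟨finv y, h2 y hy, h4 y hy⟩
  rw [← him]
  refine lintegral_image_eq_lintegral_abs_deriv_mul hs (fun x hx => (hd x hx).hasDerivWithinAt) ?_ g
  intro x hx y hy hxy
  rw [← h3 x hx, ← h3 y hy, hxy]

theorem lscale (c : ℝ) (hc : 0 < c) (g : ℝ → ENNReal) :
    ∫⁻ x in Ioi (0:ℝ), g x = ∫⁻ x in Ioi (0:ℝ), ENNReal.ofReal c * g (c * x) := by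
  have := lsub (s := Ioi 0) (t := Ioi 0) measurableSet_Ioi (fun x => c * x) (fun _ => c) (fun x => x / c)
    (fun x hx => mul_pos hc hx) (fun x hx => div_pos hx hc) (fun x _ => by field_simp) (fun x _ => by field_simp)
    (fun x _ => by simpa using (hasDerivAt_id x).const_mul c) g
  rwa [abs_of_pos hc] at this

theorem lexp (g : ℝ → ENNReal) : ∫⁻ x in Ioi (0:ℝ), g x = ∫⁻ u : ℝ, ENNReal.ofReal (exp u) * g (exp u) := by
  have := lsub (s := univ) (t := Ioi 0) MeasurableSet.univ exp exp log (fun x _ => exp_pos x) (fun _ _ => trivial)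
    (fun x _ => log_exp x) (fun y hy => exp_log hy) (fun x _ => Real.hasDerivAt_exp x) g
  rw [this, Measure.restrict_univ]
  simp [abs_of_pos (exp_pos _)]

theorem lK0 (c t : ℝ) (hc : 0 < c) (ht : 0 < t) :
    ∫⁻ α in Ioi (0:ℝ), ENNReal.ofReal (1 / α * exp (-(t^2 / (4 * α))) * exp (-(α * c^2))) = ENNReal.ofReal (2 * K0 (t * c)) := by
  rw [lscale (t / (2 * c)) (by positivity), lexp, ← two_K0,
    ofReal_integral_eq_lintegral_ofReal (integrable_exp_cosh _ (by positivity)) (Filter.Eventually.of_forall fun _ => (exp_pos _).le)]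
  apply lintegral_congr
  intro u
  have hu := exp_pos u
  rw [← ENNReal.ofReal_mul (by positivity), ← ENNReal.ofReal_mul (by positivity)]
  congr 1
  rw [Real.cosh_eq, exp_neg u]
  have : ∀ a b : ℝ, exp u * (t / (2 * c) * (1 / (t / (2 * c) * exp u) * a * b)) = a * b := by
    intro a b; field_simp
  rw [this, ← exp_add]
  congr 1
  field_simp
  ring

noncomputable def MM (α : ℝ) : ENNReal := ∫⁻ z in Ioi (0:ℝ), ENNReal.ofReal (1 / (1 + z^2) * exp (-(α * (4 * z^2 / (1 + z^2)))))

theorem tan_sub (g : ℝ → ENNReal) : ∫⁻ θ in Ioo 0 (π/2), g (sin θ) = ∫⁻ z in Ioi (0:ℝ), ENNReal.ofReal (1 / (1 + z^2)) * g (z / √(1 + z^2)) := by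
  have := lsub (s := Ioi 0) (t := Ioo 0 (π/2)) measurableSet_Ioi arctan (fun z => 1 / (1 + z^2)) tan
    (fun x hx => ⟨arctan_pos.mpr hx, arctan_lt_pi_div_two x⟩) (fun x hx => tan_pos_of_pos_of_lt_pi_div_two hx.1 hx.2) (fun x _ => tan_arctan x)
     (fun x hx => arctan_tan (by linarith [hx.1, pi_pos]) hx.2)
    (fun x _ => hasDerivAt_arctan x) (fun θ => g (sin θ))
  rw [this]
  apply lintegral_congr
  intro z
  rw [sin_arctan, abs_of_nonneg (by positivity)]

theorem lIK (t : ℝ) (ht : 0 < t) : ENNReal.ofReal (I0 t * K0 t) =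
    ENNReal.ofReal (1/π) * ∫⁻ α in Ioi (0:ℝ), ENNReal.ofReal (1 / α * exp (-(t^2 / (4 * α)))) * MM α := by
  have hpi := pi_pos
  obtain ⟨hi, he⟩ := IK_formula t ht
  have h1 : I0 t * K0 t = (2/π) * ∫ θ in Ioo 0 (π/2), K0 (2 * t * sin θ) := by
    rw [he]; field_simp
  rw [h1, ENNReal.ofReal_mul (by positivity), ofReal_integral_eq_lintegral_ofReal hi (Filter.Eventually.of_forall fun _ => K0_nonneg _)]
  rw [tan_sub (fun x => ENNReal.ofReal (K0 (2 * t * x)))]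
  have h2 : ENNReal.ofReal (2/π) = ENNReal.ofReal (1/π) * ENNReal.ofReal 2 := by
    rw [← ENNReal.ofReal_mul (by positivity)]; congr 1; ring
  rw [h2, mul_assoc]
  congr 1
  rw [← lintegral_const_mul _ (by have := measurable_K0; fun_prop)]
  have h3 : ∀ z ∈ Ioi (0:ℝ), ENNReal.ofReal 2 * (ENNReal.ofReal (1 / (1 + z^2)) * ENNReal.ofReal (K0 (2 * t * (z / √(1 + z^2)))))
     = ∫⁻ α in Ioi (0:ℝ), ENNReal.ofReal (1 / α * exp (-(t^2 / (4 * α)))) * ENNReal.ofReal (1 / (1 + z^2) * exp (-(α * (4 * z^2 / (1 + z^2))))) := by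
    intro z hz
    have hz : 0 < z := hz
    have hsq : √(1 + z^2) ^ 2 = 1 + z^2 := sq_sqrt (by positivity)
    have hk := lK0 (2 * z / √(1 + z^2)) t (by positivity) ht
    rw [mul_left_comm, ← ENNReal.ofReal_mul (by norm_num : (0:ℝ) ≤ 2), show 2 * t * (z / √(1 + z^2)) = t * (2 * z / √(1 + z^2)) by ring, ← hk,
      ← lintegral_const_mul _ (by fun_prop)]
    apply setLIntegral_congr_fun measurableSet_Ioi
    intro α hα
    have hα : 0 < α := hα
    simp only
    rw [← ENNReal.ofReal_mul (by positivity), ← ENNReal.ofReal_mul (by positivity)]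
    congr 1
    rw [div_pow, hsq]
    ring_nf
  rw [setLIntegral_congr_fun measurableSet_Ioi h3]
  rw [lintegral_lintegral_swap (Measurable.aemeasurable (by unfold Function.uncurry; fun_prop))]
  apply lintegral_congr
  intro α
  rw [MM, lintegral_const_mul _ (by fun_prop)]

theorem measurable_MM : Measurable MM := by
  unfold MM
  apply Measurable.lintegral_prod_right (f := fun α z => ENNReal.ofReal (1 / (1 + z^2) * exp (-(α * (4 * z^2 / (1 + z^2))))))
  unfold Function.uncurry; fun_prop


theorem rot1 (μ ν : Measure ℝ) [SFinite μ] [SFinite ν] (F : ℝ → ℝ → ENNReal)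
    (hF : Measurable (fun p : ℝ × ℝ => F p.1 p.2)) :
    ∫⁻ t, ∫⁻ a, F t a ∂ν ∂μ = ∫⁻ a, ∫⁻ t, F t a ∂μ ∂ν :=
  lintegral_lintegral_swap (Measurable.aemeasurable hF)

theorem rot2 (μ ν ξ : Measure ℝ) [SFinite μ] [SFinite ν] [SFinite ξ] (F : ℝ → ℝ → ℝ → ENNReal)
    (hF : Measurable (fun p : ℝ × ℝ × ℝ => F p.1 p.2.1 p.2.2)) :
    ∫⁻ t, ∫⁻ a, ∫⁻ b, F t a b ∂ξ ∂ν ∂μ = ∫⁻ a, ∫⁻ b, ∫⁻ t, F t a b ∂μ ∂ξ ∂ν := by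
  rw [rot1 μ ν (fun t a => ∫⁻ b, F t a b ∂ξ)]
  · apply lintegral_congr
    intro a
    rw [rot1]
    exact hF.comp (by fun_prop : Measurable fun p : ℝ × ℝ => (p.1, a, p.2))
  · apply Measurable.lintegral_prod_right (f := fun (p : ℝ × ℝ) b => F p.1 p.2 b)
    exact hF.comp (by fun_prop : Measurable fun p : (ℝ × ℝ) × ℝ => (p.1.1, p.1.2, p.2))

theorem rot3 (μ ν ξ η : Measure ℝ) [SFinite μ] [SFinite ν] [SFinite ξ] [SFinite η] (F : ℝ → ℝ → ℝ → ℝ → ENNReal)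
    (hF : Measurable (fun p : ℝ × ℝ × ℝ × ℝ => F p.1 p.2.1 p.2.2.1 p.2.2.2)) :
    ∫⁻ t, ∫⁻ a, ∫⁻ b, ∫⁻ c, F t a b c ∂η ∂ξ ∂ν ∂μ = ∫⁻ a, ∫⁻ b, ∫⁻ c, ∫⁻ t, F t a b c ∂μ ∂η ∂ξ ∂ν := by
  rw [rot1 μ ν (fun t a => ∫⁻ b, ∫⁻ c, F t a b c ∂η ∂ξ)]
  · apply lintegral_congr
    intro a
    rw [rot2]
    exact hF.comp (by fun_prop : Measurable fun p : ℝ × ℝ × ℝ => (p.1, a, p.2.1, p.2.2))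
  · apply Measurable.lintegral_prod_right (f := fun (p : ℝ × ℝ) b => ∫⁻ c, F p.1 p.2 b c ∂η)
    apply Measurable.lintegral_prod_right (f := fun (p : (ℝ × ℝ) × ℝ) c => F p.1.1 p.1.2 p.2 c)
    exact hF.comp (by fun_prop : Measurable fun p : ((ℝ × ℝ) × ℝ) × ℝ => (p.1.1.1, p.1.1.2, p.1.2, p.2))

theorem cube_expand (μ : Measure ℝ) (f : ℝ → ENNReal) (hf : Measurable f) :
    (∫⁻ a, f a ∂μ) * (∫⁻ a, f a ∂μ) * (∫⁻ a, f a ∂μ) = ∫⁻ a, ∫⁻ b, ∫⁻ c, f a * f b * f c ∂μ ∂μ ∂μ := by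
  simp_rw [lintegral_const_mul _ hf]
  rw [← lintegral_mul_const _ hf, ← lintegral_mul_const _ (by fun_prop)]
  apply lintegral_congr
  intro a
  rw [lintegral_mul_const _ (by fun_prop), lintegral_const_mul _ hf]

theorem lint_exp (A : ℝ) (hA : 0 < A) : ∫⁻ t in Ioi (0:ℝ), ENNReal.ofReal (exp (-(t * A))) = ENNReal.ofReal (1 / A) := by
  have h1 : IntegrableOn (fun t : ℝ => exp (-(t * A))) (Ioi 0) := by
    have := exp_neg_integrableOn_Ioi 0 hA
    refine this.congr_fun (fun x _ => ?_) measurableSet_Ioi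
    simp only; congr 1; ring
  rw [← ofReal_integral_eq_lintegral_ofReal h1 (Filter.Eventually.of_forall fun _ => (exp_pos _).le)]
  congr 1
  have := integral_exp_mul_Ioi (a := -A) (by linarith) 0
  simp only [mul_zero, exp_zero] at this
  rw [show 1 / A = -1 / -A by field_simp, ← this]
  congr 1; funext t; congr 1; ring

theorem lint_gauss (A : ℝ) (hA : 0 < A) : ∫⁻ t in Ioi (0:ℝ), ENNReal.ofReal (t * exp (-(t^2 * A))) = ENNReal.ofReal (1 / (2 * A)) := by
  have := lsub (s := Ioi 0) (t := Ioi 0) measurableSet_Ioi (fun x => x^2) (fun x => 2 * x) sqrt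
    (fun x hx => by have : 0 < x := hx; show 0 < x^2; positivity) (fun x hx => sqrt_pos.mpr hx) (fun x hx => sqrt_sq (le_of_lt hx)) (fun x hx => sq_sqrt (le_of_lt hx))
    (fun x _ => by simpa using hasDerivAt_pow 2 x) (fun t => ENNReal.ofReal (exp (-(t * A))))
  rw [lint_exp A hA] at this
  have h2 : ENNReal.ofReal (1 / (2 * A)) = ENNReal.ofReal (1/2) * ENNReal.ofReal (1 / A) := by
    rw [← ENNReal.ofReal_mul (by norm_num)]; congr 1; field_simp
  rw [h2, this, ← lintegral_const_mul _ (by fun_prop)]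
  apply setLIntegral_congr_fun measurableSet_Ioi
  intro t ht
  have ht : 0 < t := ht
  simp only
  rw [abs_of_pos (by positivity), ← ENNReal.ofReal_mul (by positivity), ← ENNReal.ofReal_mul (by positivity)]
  congr 1; ring

noncomputable def TT : ENNReal := ∫⁻ t in Ioi (0:ℝ), ENNReal.ofReal ((I0 t * K0 t) ^ 3 * t)

theorem TT_stepA : TT = ENNReal.ofReal (2 / π^3) * ∫⁻ a in Ioi (0:ℝ), ∫⁻ b in Ioi (0:ℝ), ∫⁻ c in Ioi (0:ℝ),
    MM a * MM b * MM c * ENNReal.ofReal (1 / (a * b + b * c + c * a)) := by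
  have hpi := pi_pos
  have mM := measurable_MM
  have h1 : ∀ t ∈ Ioi (0:ℝ), ENNReal.ofReal ((I0 t * K0 t) ^ 3 * t) = ENNReal.ofReal (1/π^3) * ∫⁻ a in Ioi (0:ℝ), ∫⁻ b in Ioi (0:ℝ), ∫⁻ c in Ioi (0:ℝ),
      ENNReal.ofReal t * ((ENNReal.ofReal (1 / a * exp (-(t^2 / (4 * a)))) * MM a) * (ENNReal.ofReal (1 / b * exp (-(t^2 / (4 * b)))) * MM b) * (ENNReal.ofReal (1 / c * exp (-(t^2 / (4 * c)))) * MM c)) := by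
    intro t ht
    have ht : 0 < t := ht
    have a1 := I0_nonneg t
    have a2 := K0_nonneg t
    have hm : Measurable fun a => (ENNReal.ofReal (1 / a * exp (-(t^2 / (4 * a)))) * MM a) := by fun_prop
    have hm2 : Measurable (fun a : ℝ => ∫⁻ b in Ioi (0:ℝ), ∫⁻ c in Ioi (0:ℝ), ((ENNReal.ofReal (1 / a * exp (-(t^2 / (4 * a)))) * MM a) * (ENNReal.ofReal (1 / b * exp (-(t^2 / (4 * b)))) * MM b) * (ENNReal.ofReal (1 / c * exp (-(t^2 / (4 * c)))) * MM c))) := by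
      apply Measurable.lintegral_prod_right
      apply Measurable.lintegral_prod_right
      unfold Function.uncurry; fun_prop
    have hm3 : ∀ a : ℝ, Measurable (fun b : ℝ => ∫⁻ c in Ioi (0:ℝ), ((ENNReal.ofReal (1 / a * exp (-(t^2 / (4 * a)))) * MM a) * (ENNReal.ofReal (1 / b * exp (-(t^2 / (4 * b)))) * MM b) * (ENNReal.ofReal (1 / c * exp (-(t^2 / (4 * c)))) * MM c))) := by
      intro a
      apply Measurable.lintegral_prod_right
      unfold Function.uncurry; fun_prop
    have hc := cube_expand (volume.restrict (Ioi 0)) _ hm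
    simp_rw [lintegral_const_mul (ENNReal.ofReal t) (hm.const_mul _)]
    simp_rw [lintegral_const_mul (ENNReal.ofReal t) (hm3 _)]
    rw [lintegral_const_mul (ENNReal.ofReal t) hm2, ← hc]
    rw [ENNReal.ofReal_mul (by positivity), ENNReal.ofReal_pow (by positivity), lIK t ht]
    rw [show 1/π^3 = (1/π)^3 by ring, ENNReal.ofReal_pow (by positivity)]
    ring
  unfold TT
  rw [setLIntegral_congr_fun measurableSet_Ioi h1, lintegral_const_mul, rot3]
  · rw [show 2/π^3 = (1/π^3) * 2 by ring, ENNReal.ofReal_mul (by positivity), mul_assoc]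
    congr 1
    have h5 : ∀ a ∈ Ioi (0:ℝ), ∀ b ∈ Ioi (0:ℝ), ∀ c ∈ Ioi (0:ℝ), ∫⁻ t in Ioi (0:ℝ), ENNReal.ofReal t * ((ENNReal.ofReal (1 / a * exp (-(t^2 / (4 * a)))) * MM a) * (ENNReal.ofReal (1 / b * exp (-(t^2 / (4 * b)))) * MM b) * (ENNReal.ofReal (1 / c * exp (-(t^2 / (4 * c)))) * MM c))
       = ENNReal.ofReal 2 * (MM a * MM b * MM c * ENNReal.ofReal (1 / (a * b + b * c + c * a))) := by
      intro a ha b hb c hc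
      have ha : 0 < a := ha
      have hb : 0 < b := hb
      have hc : 0 < c := hc
      have hA : 0 < (1/a + 1/b + 1/c)/4 := by positivity
      have hg := lint_gauss _ hA
      have e : ENNReal.ofReal 2 * ENNReal.ofReal (1 / (a * b + b * c + c * a)) = ENNReal.ofReal (1 / (a * b * c)) * ENNReal.ofReal (1 / (2 * ((1/a + 1/b + 1/c)/4))) := by
        rw [← ENNReal.ofReal_mul (by positivity), ← ENNReal.ofReal_mul (by positivity)]
        congr 1; field_simp; ring
      rw [mul_left_comm, e, ← hg, ← lintegral_const_mul _ (by fun_prop), ← lintegral_const_mul _ (by fun_prop)]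
      apply setLIntegral_congr_fun measurableSet_Ioi
      intro t ht
      have ht : 0 < t := ht
      simp only
      rw [← ENNReal.ofReal_mul (by positivity)]
      have e2 : 1 / (a * b * c) * (t * exp (-(t^2 * ((1/a + 1/b + 1/c)/4)))) = t * (1 / a * exp (-(t^2 / (4 * a)))) * (1 / b * exp (-(t^2 / (4 * b)))) * (1 / c * exp (-(t^2 / (4 * c)))) := by
        have : exp (-(t^2 * ((1/a + 1/b + 1/c)/4))) = exp (-(t^2 / (4 * a))) * exp (-(t^2 / (4 * b))) * exp (-(t^2 / (4 * c))) := by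
          rw [← exp_add, ← exp_add]; congr 1; field_simp; ring
        rw [this]; field_simp
      have e3 : ∀ x y z : ℝ, 0 ≤ x → 0 ≤ y → 0 ≤ z → ENNReal.ofReal (t * x * y * z) = ENNReal.ofReal t * ENNReal.ofReal x * ENNReal.ofReal y * ENNReal.ofReal z := by
        intro x y z hx hy hz
        rw [ENNReal.ofReal_mul (by positivity), ENNReal.ofReal_mul (by positivity), ENNReal.ofReal_mul (by positivity)]
      rw [e2, e3 _ _ _ (by positivity) (by positivity) (by positivity)]
      ring
    have hmm : Measurable (fun p : ℝ × ℝ × ℝ => MM p.1 * MM p.2.1 * MM p.2.2 * ENNReal.ofReal (1 / (p.1 * p.2.1 + p.2.1 * p.2.2 + p.2.2 * p.1))) := by fun_prop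
    rw [← lintegral_const_mul]
    · apply setLIntegral_congr_fun measurableSet_Ioi
      intro a ha
      simp only
      rw [← lintegral_const_mul]
      · apply setLIntegral_congr_fun measurableSet_Ioi
        intro b hb
        simp only
        rw [← lintegral_const_mul _ (by fun_prop)]
        apply setLIntegral_congr_fun measurableSet_Ioi
        intro c hc
        exact h5 a ha b hb c hc
      · apply Measurable.lintegral_prod_right
        unfold Function.uncurry; fun_prop
    · apply Measurable.lintegral_prod_right
      apply Measurable.lintegral_prod_right
      unfold Function.uncurry; fun_prop
  · fun_prop
  · apply Measurable.lintegral_prod_right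
    apply Measurable.lintegral_prod_right
    apply Measurable.lintegral_prod_right
    unfold Function.uncurry; fun_prop


theorem lc1 {s : Set ℝ} (hs : MeasurableSet s) {f g : ℝ → ENNReal} (h : ∀ x ∈ s, f x = g x) :
    ∫⁻ x in s, f x = ∫⁻ x in s, g x := setLIntegral_congr_fun hs h

theorem lc2 {s t : Set ℝ} (hs : MeasurableSet s) (ht : MeasurableSet t) {f g : ℝ → ℝ → ENNReal} (h : ∀ x ∈ s, ∀ y ∈ t, f x y = g x y) :
    ∫⁻ x in s, ∫⁻ y in t, f x y = ∫⁻ x in s, ∫⁻ y in t, g x y := lc1 hs fun x hx => lc1 ht (h x hx)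

theorem rot22 (μ ν ξ η : Measure ℝ) [SFinite μ] [SFinite ν] [SFinite ξ] [SFinite η] (F : ℝ → ℝ → ℝ → ℝ → ENNReal)
    (hF : Measurable (fun p : ℝ × ℝ × ℝ × ℝ => F p.1 p.2.1 p.2.2.1 p.2.2.2)) :
    ∫⁻ x, ∫⁻ y, ∫⁻ z, ∫⁻ w, F x y z w ∂η ∂ξ ∂ν ∂μ = ∫⁻ z, ∫⁻ w, ∫⁻ y, ∫⁻ x, F x y z w ∂μ ∂ν ∂η ∂ξ := by
  have h1 : ∀ x, ∫⁻ y, ∫⁻ z, ∫⁻ w, F x y z w ∂η ∂ξ ∂ν = ∫⁻ z, ∫⁻ w, ∫⁻ y, F x y z w ∂ν ∂η ∂ξ := by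
    intro x
    rw [rot2]
    exact hF.comp (by fun_prop : Measurable fun p : ℝ × ℝ × ℝ => (x, p.1, p.2.1, p.2.2))
  simp_rw [h1]
  rw [rot3]
  exact hF.comp (by fun_prop : Measurable fun p : ℝ × ℝ × ℝ × ℝ => (p.1, p.2.2.2, p.2.1, p.2.2.1))

theorem tri_expand (μ : Measure ℝ) (f g h : ℝ → ENNReal) (hf : Measurable f) (hg : Measurable g) (hh : Measurable h) :
    (∫⁻ a, f a ∂μ) * (∫⁻ a, g a ∂μ) * (∫⁻ a, h a ∂μ) = ∫⁻ a, ∫⁻ b, ∫⁻ c, f a * g b * h c ∂μ ∂μ ∂μ := by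
  simp_rw [lintegral_const_mul _ hh]
  rw [← lintegral_mul_const _ hf, ← lintegral_mul_const _ (by fun_prop)]
  apply lintegral_congr
  intro a
  rw [lintegral_mul_const _ (by fun_prop), lintegral_const_mul _ hg]

theorem lint_w (A B : ℝ) (hA : 0 < A) (hB : 0 < B) :
    ∫⁻ w in Ioi (0:ℝ), ENNReal.ofReal (1 / (A + B * w^2)) = ENNReal.ofReal (π / 2 / √(A * B)) := by
  have h0 : ∫⁻ w in Ioi (0:ℝ), ENNReal.ofReal ((1 + w^2)⁻¹) = ENNReal.ofReal (π/2) := by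
    rw [← ofReal_integral_eq_lintegral_ofReal integrable_inv_one_add_sq.integrableOn (Filter.Eventually.of_forall fun _ => by simp only [Pi.zero_apply]; positivity), integral_Ioi_inv_one_add_sq]
    simp
  have hs : √(A / B) ^ 2 = A / B := sq_sqrt (by positivity)
  rw [lscale (√(A / B)) (by positivity)]
  rw [show π / 2 / √(A * B) = (1 / √(A * B)) * (π/2) by ring, ENNReal.ofReal_mul (by positivity), ← h0, ← lintegral_const_mul _ (by fun_prop)]
  apply lintegral_congr
  intro w
  rw [← ENNReal.ofReal_mul (by positivity), ← ENNReal.ofReal_mul (by positivity)]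
  congr 1
  rw [mul_pow, hs, sqrt_div hA.le, sqrt_mul hA.le]
  have h1 := sq_sqrt hA.le
  have h2 := sqrt_pos.mpr hA
  have h3 := sqrt_pos.mpr hB
  field_simp
  rw [h1]

theorem stepB : (∫⁻ a in Ioi (0:ℝ), ∫⁻ b in Ioi (0:ℝ), ∫⁻ c in Ioi (0:ℝ),
    MM a * MM b * MM c * ENNReal.ofReal (1 / (a * b + b * c + c * a)))
    = ∫⁻ x in Ioi (0:ℝ), ∫⁻ y in Ioi (0:ℝ), ENNReal.ofReal (1 / (x + x * y + y)) * ∫⁻ a in Ioi (0:ℝ), MM (a * x) * MM (a * y) * MM a := by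
  have mM := measurable_MM
  have h1 : ∀ a ∈ Ioi (0:ℝ), ∫⁻ b in Ioi (0:ℝ), ∫⁻ c in Ioi (0:ℝ), MM a * MM b * MM c * ENNReal.ofReal (1 / (a * b + b * c + c * a))
      = ∫⁻ x in Ioi (0:ℝ), ∫⁻ y in Ioi (0:ℝ), ENNReal.ofReal (1 / (x + x * y + y)) * (MM (a * x) * MM (a * y) * MM a) := by
    intro a ha
    have ha : 0 < a := ha
    rw [lscale a ha]
    apply lc1 measurableSet_Ioi
    intro x hx
    have hx : 0 < x := hx
    rw [lscale a ha, ← lintegral_const_mul _ (by fun_prop)]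
    apply lc1 measurableSet_Ioi
    intro y hy
    have hy : 0 < y := hy
    have e : ENNReal.ofReal (1 / (x + x * y + y)) = ENNReal.ofReal a * (ENNReal.ofReal a * ENNReal.ofReal (1 / (a * (a * x) + a * x * (a * y) + a * y * a))) := by
      rw [← ENNReal.ofReal_mul (by positivity), ← ENNReal.ofReal_mul (by positivity)]
      congr 1; field_simp
    rw [e]; ring
  rw [lc1 measurableSet_Ioi h1, rot2]
  · apply lintegral_congr; intro x
    apply lintegral_congr; intro y
    rw [lintegral_const_mul _ (by fun_prop)]
  · fun_prop

theorem stepC (x y : ℝ) (hx : 0 < x) (hy : 0 < y) : ∫⁻ a in Ioi (0:ℝ), MM (a * x) * MM (a * y) * MM a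
   = ∫⁻ z in Ioi (0:ℝ), ∫⁻ w in Ioi (0:ℝ), ENNReal.ofReal (1 / (1 + z^2) * (1 / (1 + w^2)) * (π / 2 /
      √((x * (4 * z^2 / (1 + z^2)) + y * (4 * w^2 / (1 + w^2))) * (x * (4 * z^2 / (1 + z^2)) + y * (4 * w^2 / (1 + w^2)) + 4)))) := by
  have h1 : ∀ a, MM (a * x) * MM (a * y) * MM a = ∫⁻ z in Ioi (0:ℝ), ∫⁻ w in Ioi (0:ℝ), ∫⁻ v in Ioi (0:ℝ),
      ENNReal.ofReal (1 / (1 + z^2) * (1 / (1 + w^2)) * (1 / (1 + v^2)) * exp (-(a * (x * (4 * z^2 / (1 + z^2)) + y * (4 * w^2 / (1 + w^2)) + 4 * v^2 / (1 + v^2))))) := by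
    intro a
    unfold MM
    rw [tri_expand _ _ _ _ (by fun_prop) (by fun_prop) (by fun_prop)]
    apply lintegral_congr; intro z
    apply lintegral_congr; intro w
    apply lintegral_congr; intro v
    rw [← ENNReal.ofReal_mul (by positivity), ← ENNReal.ofReal_mul (by positivity)]
    congr 1
    rw [show -(a * (x * (4 * z^2 / (1 + z^2)) + y * (4 * w^2 / (1 + w^2)) + 4 * v^2 / (1 + v^2))) = -(a * x * (4 * z^2 / (1 + z^2))) + -(a * y * (4 * w^2 / (1 + w^2))) + -(a * (4 * v^2 / (1 + v^2))) by ring,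
     exp_add, exp_add]
    ring
  simp_rw [h1]
  rw [rot3]
  · apply lc2 measurableSet_Ioi measurableSet_Ioi
    intro z hz w hw
    have hz : 0 < z := hz
    have hw : 0 < w := hw
    set r := x * (4 * z^2 / (1 + z^2)) + y * (4 * w^2 / (1 + w^2)) with hr
    have hr0 : 0 < r := by positivity
    rw [ENNReal.ofReal_mul (by positivity), ← lint_w r (r+4) hr0 (by positivity), ← lintegral_const_mul _ (by fun_prop)]
    apply lc1 measurableSet_Ioi
    intro v hv
    have hv : 0 < v := hv
    have hk := lint_exp (r + 4 * v^2 / (1 + v^2)) (by positivity)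
    have : ∀ a, ENNReal.ofReal (1 / (1 + z^2) * (1 / (1 + w^2)) * (1 / (1 + v^2)) * exp (-(a * (r + 4 * v^2 / (1 + v^2)))))
       = ENNReal.ofReal (1 / (1 + z^2) * (1 / (1 + w^2)) * (1 / (1 + v^2))) * ENNReal.ofReal (exp (-(a * (r + 4 * v^2 / (1 + v^2))))) := by
      intro a; rw [ENNReal.ofReal_mul (by positivity)]
    simp_rw [this]
    rw [lintegral_const_mul _ (by fun_prop), hk, ← ENNReal.ofReal_mul (by positivity), ← ENNReal.ofReal_mul (by positivity)]
    congr 1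
    field_simp
    ring
  · fun_prop

theorem stepD (S R : ℝ) (hS : 0 < S) (hR : 0 < R) : ∫⁻ y in Ioi (0:ℝ), ∫⁻ x in Ioi (0:ℝ), ENNReal.ofReal (1 / (x + x * y + y) * (1 / √((x * S + y * R) * (x * S + y * R + 4))))
   = ∫⁻ k in Ioi (0:ℝ), ∫⁻ r in Ioi (0:ℝ), ENNReal.ofReal (1 / (r * k + (k + R) * (k + S)) * (1 / √(r * (r + 4)))) := by
  have h1 : ∀ y ∈ Ioi (0:ℝ), ∫⁻ x in Ioi (0:ℝ), ENNReal.ofReal (1 / (x + x * y + y) * (1 / √((x * S + y * R) * (x * S + y * R + 4))))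
     = ∫⁻ k in Ioi (0:ℝ), ENNReal.ofReal (1 / (k + S + y * k) * (1 / √((y * (k + R)) * (y * (k + R) + 4)))) := by
    intro y hy
    have hy : 0 < y := hy
    rw [lscale (y / S) (by positivity)]
    apply lc1 measurableSet_Ioi
    intro k hk
    have hk : 0 < k := hk
    rw [← ENNReal.ofReal_mul (by positivity)]
    congr 1
    rw [show y / S * k * S + y * R = y * (k + R) by field_simp, ← mul_assoc]
    congr 1
    field_simp; ring
  rw [lc1 measurableSet_Ioi h1, rot1]
  · apply lc1 measurableSet_Ioi
    intro k hk
    have hk : 0 < k := hk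
    rw [lscale (1 / (k + R)) (by positivity)]
    apply lc1 measurableSet_Ioi
    intro r hr
    have hr : 0 < r := hr
    rw [← ENNReal.ofReal_mul (by positivity)]
    congr 1
    rw [show 1 / (k + R) * r * (k + R) = r by field_simp, ← mul_assoc]
    congr 1
    field_simp; ring
  · fun_prop

theorem stepE (r k : ℝ) (hr : 0 < r) (hk : 0 < k) :
   ∫⁻ w in Ioi (0:ℝ), ∫⁻ z in Ioi (0:ℝ), ENNReal.ofReal (1 / (1 + z^2) * (1 / (1 + w^2)) * (1 / (r * k + (k + 4 * w^2 / (1 + w^2)) * (k + 4 * z^2 / (1 + z^2)))))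
    = ∫⁻ w in Ioi (0:ℝ), ENNReal.ofReal (1 / (1 + w^2) * (π / 2 * (1 / (k + r + 4)) * (1 / √(k * (k + 16 * r * (w^2 / (1 + w^2)) / (k + r + 4)^2))))) := by
  set l := √((k + r) / (k + r + 4)) with hl
  have hl0 : 0 < l := by positivity
  have hl2 : l^2 = (k + r) / (k + r + 4) := sq_sqrt (by positivity)
  rw [lscale l hl0]
  apply lc1 measurableSet_Ioi
  intro w hw
  have hw : 0 < w := hw
  rw [lscale l hl0, ← lintegral_const_mul _ (by fun_prop)]
  have h1 := lint_w (k * (1 + w^2)) ((1 + w^2) * (k + 16 * r * (w^2 / (1 + w^2)) / (k + r + 4)^2)) (by positivity) (by positivity)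
  have h2 : π / 2 / √(k * (1 + w^2) * ((1 + w^2) * (k + 16 * r * (w^2 / (1 + w^2)) / (k + r + 4)^2))) = 1 / (1 + w^2) * (π / 2 * (1 / √(k * (k + 16 * r * (w^2 / (1 + w^2)) / (k + r + 4)^2)))) := by
    rw [show k * (1 + w^2) * ((1 + w^2) * (k + 16 * r * (w^2 / (1 + w^2)) / (k + r + 4)^2)) = (1 + w^2)^2 * (k * (k + 16 * r * (w^2 / (1 + w^2)) / (k + r + 4)^2)) by ring,
      sqrt_mul (by positivity), sqrt_sq (by positivity)]
    field_simp
  rw [show 1 / (1 + w^2) * (π / 2 * (1 / (k + r + 4)) * (1 / √(k * (k + 16 * r * (w^2 / (1 + w^2)) / (k + r + 4)^2)))) = (1 / (k + r + 4)) * (1 / (1 + w^2) * (π / 2 * (1 / √(k * (k + 16 * r * (w^2 / (1 + w^2)) / (k + r + 4)^2))))) by ring,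
    ← h2, ENNReal.ofReal_mul (by positivity), ← h1, ← lintegral_const_mul _ (by fun_prop)]
  apply lc1 measurableSet_Ioi
  intro z hz
  have hz : 0 < z := hz
  rw [← ENNReal.ofReal_mul (by positivity), ← ENNReal.ofReal_mul (by positivity), ← ENNReal.ofReal_mul (by positivity)]
  congr 1
  rw [← mul_assoc l l, ← sq, mul_pow, mul_pow, hl2]
  field_simp
  ring


theorem lcmul {s : Set ℝ} (c : ℝ) (f : ℝ → ENNReal) : ENNReal.ofReal c * ∫⁻ x in s, f x = ∫⁻ x in s, ENNReal.ofReal c * f x :=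
  (lintegral_const_mul' _ _ ENNReal.ofReal_ne_top).symm

theorem TT_stepE : TT = ENNReal.ofReal (1 / (2 * π)) * ∫⁻ w in Ioi (0:ℝ), ENNReal.ofReal (1 / (1 + w^2)) * ∫⁻ k in Ioi (0:ℝ), ∫⁻ r in Ioi (0:ℝ),
    ENNReal.ofReal (1 / √(r * (r + 4)) * (1 / (k + r + 4)) * (1 / √(k * (k + 16 * r * (w^2 / (1 + w^2)) / (k + r + 4)^2)))) := by
  have hpi := pi_pos
  rw [TT_stepA, stepB, lc2 (g := fun x y => ∫⁻ z in Ioi (0:ℝ), ∫⁻ w in Ioi (0:ℝ), ENNReal.ofReal (π / 2 * (1 / (1 + z^2) * (1 / (1 + w^2)) * (1 / (x + x * y + y) * (1 /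
      √((x * (4 * z^2 / (1 + z^2)) + y * (4 * w^2 / (1 + w^2))) * (x * (4 * z^2 / (1 + z^2)) + y * (4 * w^2 / (1 + w^2)) + 4))))))) measurableSet_Ioi measurableSet_Ioi, rot22]
  · rw [lc2 (g := fun z w => ∫⁻ k in Ioi (0:ℝ), ∫⁻ r in Ioi (0:ℝ), ENNReal.ofReal (π / 2 * (1 / (1 + z^2) * (1 / (1 + w^2)) * (1 / (r * k + (k + 4 * w^2 / (1 + w^2)) * (k + 4 * z^2 / (1 + z^2))) * (1 / √(r * (r + 4))))))) measurableSet_Ioi measurableSet_Ioi, rot22]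
    · rw [lc2 (g := fun k r => ∫⁻ w in Ioi (0:ℝ), ENNReal.ofReal (π^2 / 4 * (1 / (1 + w^2)) * (1 / √(r * (r + 4)) * (1 / (k + r + 4)) * (1 / √(k * (k + 16 * r * (w^2 / (1 + w^2)) / (k + r + 4)^2)))))) measurableSet_Ioi measurableSet_Ioi, rot2, rot2]
      · rw [lcmul, lcmul]
        apply lc1 measurableSet_Ioi
        intro w hw
        rw [← mul_assoc, ← ENNReal.ofReal_mul (by positivity), lcmul, lcmul]
        apply lc1 measurableSet_Ioi
        intro k hk
        have hk : 0 < k := hk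
        rw [lcmul, lcmul]
        apply lc1 measurableSet_Ioi
        intro r hr
        have hr : 0 < r := hr
        rw [← ENNReal.ofReal_mul (by positivity), ← ENNReal.ofReal_mul (by positivity)]
        congr 1; field_simp; norm_num
      · fun_prop
      · fun_prop
      · intro k hk r hr
        have hk : 0 < k := hk
        have hr : 0 < r := hr
        have := congrArg (fun y => ENNReal.ofReal (π / 2 * (1 / √(r * (r + 4)))) * y) (stepE r k hr hk)
        try simp only at this
        rw [lcmul, lcmul] at this
        convert this using 1
        · apply lc1 measurableSet_Ioi
          intro w hw
          rw [lcmul]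
          apply lc1 measurableSet_Ioi
          intro z hz
          rw [← ENNReal.ofReal_mul (by positivity)]
          congr 1; ring
        · apply lc1 measurableSet_Ioi
          intro z hz
          rw [← ENNReal.ofReal_mul (by positivity)]
          congr 1; ring
    · fun_prop
    · intro z hz w hw
      have hz : 0 < z := hz
      have hw : 0 < w := hw
      have := congrArg (fun y => ENNReal.ofReal (π / 2 * (1 / (1 + z^2) * (1 / (1 + w^2)))) * y) (stepD (4 * z^2 / (1 + z^2)) (4 * w^2 / (1 + w^2)) (by positivity) (by positivity))
      try simp only at this
      rw [lcmul, lcmul] at this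
      convert this using 1
      · apply lc1 measurableSet_Ioi
        intro w hw
        rw [lcmul]
        apply lc1 measurableSet_Ioi
        intro z hz
        rw [← ENNReal.ofReal_mul (by positivity)]
        congr 1; ring
      · apply lc1 measurableSet_Ioi
        intro w hw
        rw [lcmul]
        apply lc1 measurableSet_Ioi
        intro z hz
        rw [← ENNReal.ofReal_mul (by positivity)]
        congr 1; ring
  · fun_prop
  · intro x hx y hy
    have hx : 0 < x := hx
    have hy : 0 < y := hy
    rw [stepC x y hx hy, lcmul]
    apply lc1 measurableSet_Ioi
    intro w hw
    rw [lcmul]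
    apply lc1 measurableSet_Ioi
    intro z hz
    rw [← ENNReal.ofReal_mul (by positivity)]
    congr 1; ring

theorem polar (F : ℝ → ℝ → ENNReal) (hF : Measurable (fun p : ℝ × ℝ => F p.1 p.2)) :
    ∫⁻ k in Ioi (0:ℝ), ∫⁻ r in Ioi (0:ℝ), F k r = ∫⁻ κ in Ioi (0:ℝ), ∫⁻ ρ in Ioo (0:ℝ) 1, ENNReal.ofReal κ * F (κ * (1 - ρ)) (κ * ρ) := by
  have hF' : ∀ (a b : ℝ × ℝ → ℝ), Measurable a → Measurable b → Measurable fun p => F (a p) (b p) := fun a b ha hb => hF.comp (ha.prodMk hb)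
  have h1 : ∀ k ∈ Ioi (0:ℝ), ∫⁻ r in Ioi (0:ℝ), F k r = ∫⁻ ρ in Ioo (0:ℝ) 1, ENNReal.ofReal (k / (1 - ρ)^2) * F k (k * ρ / (1 - ρ)) := by
    intro k hk
    have hk : 0 < k := hk
    rw [lsub (s := Ioo 0 1) (t := Ioi 0) measurableSet_Ioo (fun ρ => k * ρ / (1 - ρ)) (fun ρ => k / (1 - ρ)^2) (fun r => r / (r + k))]
    · apply lc1 measurableSet_Ioo
      intro ρ hρ
      have := hρ.1
      have : 0 < 1 - ρ := by linarith [hρ.2]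
      rw [abs_of_pos (by positivity)]
    · intro ρ hρ
      have := hρ.1
      have : 0 < 1 - ρ := by linarith [hρ.2]
      rw [mem_Ioi]
      positivity
    · intro r hr
      have hr : 0 < r := hr
      refine ⟨by positivity, ?_⟩
      rw [div_lt_one (by positivity)]; linarith
    · intro ρ hρ
      have := hρ.1
      have : 0 < 1 - ρ := by linarith [hρ.2]
      have e : k * ρ / (1 - ρ) + k = k / (1 - ρ) := by field_simp; ring
      rw [e]; field_simp
    · intro r hr
      have hr : 0 < r := hr
      have e : 1 - r / (r + k) = k / (r + k) := by field_simp; ring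
      rw [e]; field_simp
    · intro ρ hρ
      have : 1 - ρ ≠ 0 := by linarith [hρ.2]
      have := ((hasDerivAt_id ρ).const_mul k).div ((hasDerivAt_id ρ).const_sub 1) this
      exact this.congr_deriv (by simp only [id]; congr 1; ring)
  rw [lc1 measurableSet_Ioi h1, rot1]
  · refine Eq.trans ?_ (rot1 _ _ _ ?_)
    · apply lc1 measurableSet_Ioo
      intro ρ hρ
      have := hρ.1
      have : 0 < 1 - ρ := by linarith [hρ.2]
      rw [lscale (1 - ρ) this]
      apply lc1 measurableSet_Ioi
      intro κ hκ
      have hκ : 0 < κ := hκ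
      rw [← mul_assoc, ← ENNReal.ofReal_mul this.le]
      congr 2
      · field_simp
      · ring
      · field_simp
    · refine Measurable.mul (by fun_prop) (hF' _ _ (by fun_prop) (by fun_prop))
  · refine Measurable.mul (by fun_prop) (hF' _ _ (by fun_prop) (by fun_prop))

theorem stepF (s : ℝ) (hs : 0 < s) (hs1 : s < 1) : ∫⁻ k in Ioi (0:ℝ), ∫⁻ r in Ioi (0:ℝ),
    ENNReal.ofReal (1 / √(r * (r + 4)) * (1 / (k + r + 4)) * (1 / √(k * (k + 16 * r * s / (k + r + 4)^2))))
    = ∫⁻ q in Ioo (0:ℝ) 1, ∫⁻ x in Ioo (0:ℝ) 1, ENNReal.ofReal (1 / 4 * (1 / √(1 - q)) * (1 / √x) * (1 / √(1 - x)) * (1 / √(1 - x * (1 - q^3 * s)))) := by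
  rw [polar _ (by fun_prop)]
  rw [lsub (s := Ioo 0 1) (t := Ioi 0) measurableSet_Ioo (fun q => 4 * (1 - q) / q) (fun q => -(4 / q^2)) (fun κ => 4 / (κ + 4))]
  · apply lc1 measurableSet_Ioo
    intro q hq
    have hq0 := hq.1
    have hq1 : 0 < 1 - q := by linarith [hq.2]
    rw [abs_neg, abs_of_pos (by positivity), lcmul]
    rw [lsub (s := Ioo 0 1) (t := Ioo 0 1) measurableSet_Ioo (fun x => q * x / (1 - (1 - q) * x)) (fun x => q / (1 - (1 - q) * x)^2) (fun ρ => ρ / (q + (1 - q) * ρ))]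
    · apply lc1 measurableSet_Ioo
      intro x hx
      have hx0 := hx.1
      have hx1 : 0 < 1 - x := by linarith [hx.2]
      obtain ⟨b, hb⟩ : ∃ b, b = 1 - (1 - q) * x := ⟨_, rfl⟩
      have hb0 : 0 < b := by rw [hb]; nlinarith
      rw [← hb, abs_of_pos (by positivity)]
      have e1 : 4 * (1 - q) / q * (q * x / b) = 4 * (1 - q) * x / b := by field_simp
      have e2 : 4 * (1 - q) / q * (1 - q * x / b) = 4 * (1 - q) * (1 - x) / (q * b) := by field_simp; rw [hb]; ring
      rw [e1, e2]
      have e3 : 4 * (1 - q) * x / b + 4 = 4 / b := by field_simp; rw [hb]; ring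
      have e4 : 4 * (1 - q) * (1 - x) / (q * b) + 4 * (1 - q) * x / b + 4 = 4 / q := by field_simp; rw [hb]; ring
      rw [e3, e4]
      have hA : 0 < 1 - x * (1 - q^3 * s) := by
        have : 0 < q^3 * s := by positivity
        nlinarith
      have e5 : 4 * (1 - q) * (1 - x) / (q * b) * (4 * (1 - q) * (1 - x) / (q * b) + 16 * (4 * (1 - q) * x / b) * s / (4 / q)^2) = (4 * (1 - q) / (q * b))^2 * ((1 - x) * (1 - x * (1 - q^3 * s))) := by
        field_simp; ring
      have e6 : 4 * (1 - q) * x / b * (4 / b) = (4 / b)^2 * ((1 - q) * x) := by field_simp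
      rw [e5, e6, sqrt_mul (sq_nonneg (4 * (1 - q) / (q * b))), sqrt_mul (sq_nonneg (4 / b)), sqrt_sq (by positivity), sqrt_sq (by positivity), sqrt_mul hq1.le, sqrt_mul hx1.le,
        ← ENNReal.ofReal_mul (by positivity), ← ENNReal.ofReal_mul (by positivity), ← ENNReal.ofReal_mul (by positivity)]
      congr 1
      field_simp
    · intro x hx
      have hx0 := hx.1
      have hx1 : 0 < 1 - x := by linarith [hx.2]
      have hb0 : 0 < 1 - (1 - q) * x := by nlinarith
      refine ⟨by positivity, ?_⟩
      try simp only
      rw [div_lt_one hb0]; linarith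
    · intro x hx
      have hx0 := hx.1
      have hx1 : 0 < 1 - x := by linarith [hx.2]
      refine ⟨by positivity, ?_⟩
      rw [div_lt_one (by positivity)]; nlinarith
    · intro x hx
      have hx0 := hx.1
      have hx1 : 0 < 1 - x := by linarith [hx.2]
      have hb0 : 0 < 1 - (1 - q) * x := by nlinarith
      have e : q + (1 - q) * (q * x / (1 - (1 - q) * x)) = q / (1 - (1 - q) * x) := by field_simp; ring
      rw [e, div_div_div_cancel_right₀ hb0.ne']; field_simp
    · intro x hx
      have hx0 := hx.1
      have hx1 : 0 < 1 - x := by linarith [hx.2]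
      have e : 1 - (1 - q) * (x / (q + (1 - q) * x)) = q / (q + (1 - q) * x) := by field_simp; ring
      try simp only
      rw [e]; field_simp
    · intro x hx
      have hx0 := hx.1
      have hx1 : 0 < 1 - x := by linarith [hx.2]
      have hb0 : 0 < 1 - (1 - q) * x := by nlinarith
      have := ((hasDerivAt_id x).const_mul q).div (((hasDerivAt_id x).const_mul (1 - q)).const_sub 1) hb0.ne'
      exact this.congr_deriv (by simp only [id]; congr 1; ring)
  · intro q hq
    have hq0 := hq.1
    have hq1 : 0 < 1 - q := by linarith [hq.2]
    rw [mem_Ioi]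
    positivity
  · intro κ hκ
    have hκ : 0 < κ := hκ
    refine ⟨by positivity, ?_⟩
    rw [div_lt_one (by positivity)]; linarith
  · intro q hq
    have hq0 := hq.1
    have e : 4 * (1 - q) / q + 4 = 4 / q := by field_simp; ring
    try simp only
    rw [e]; field_simp
  · intro κ hκ
    have hκ : 0 < κ := hκ
    field_simp; ring
  · intro q hq
    have hq0 := hq.1
    have := (((hasDerivAt_id q).const_sub 1).const_mul 4).div (hasDerivAt_id q) hq0.ne'
    exact this.congr_deriv (by simp only [id]; rw [← neg_div]; congr 1; ring)

theorem TT_stepF : TT = ENNReal.ofReal (1 / (8 * π)) * ∫⁻ w in Ioi (0:ℝ), ∫⁻ q in Ioo (0:ℝ) 1, ∫⁻ x in Ioo (0:ℝ) 1,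
    ENNReal.ofReal (1 / (1 + w^2) * ((1 / √(1 - q)) * (1 / √x) * (1 / √(1 - x)) * (1 / √(1 - x * (1 - q^3 * (w^2 / (1 + w^2))))))) := by
  have hpi := pi_pos
  rw [TT_stepE, lcmul, lcmul]
  apply lc1 measurableSet_Ioi
  intro w hw
  have hw : 0 < w := hw
  rw [stepF _ (by positivity) (by rw [div_lt_one (by positivity)]; linarith), lcmul, lcmul, lcmul]
  apply lc1 measurableSet_Ioo
  intro q hq
  rw [lcmul, lcmul, lcmul]
  apply lc1 measurableSet_Ioo
  intro x hx
  rw [← ENNReal.ofReal_mul (by positivity), ← ENNReal.ofReal_mul (by positivity), ← ENNReal.ofReal_mul (by positivity)]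
  congr 1; ring


noncomputable def Bt (a b : ℝ) : ℝ := Gamma a * Gamma b / Gamma (a + b)

theorem Bt_pos {a b : ℝ} (ha : 0 < a) (hb : 0 < b) : 0 < Bt a b := ProbabilityTheory.beta_pos ha hb

theorem ris_zero (a : ℝ) : ris a 0 = 1 := by simp [ris]
theorem ris_succ (a : ℝ) (n : ℕ) : ris a (n+1) = ris a n * (a + n) := by simp [ris, Finset.prod_range_succ]
theorem ris_succ' (a : ℝ) (n : ℕ) : ris a (n+1) = a * ris (a + 1) n := by
  simp only [ris, Finset.prod_range_succ']
  rw [mul_comm]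
  congr 1
  · simp
  · apply Finset.prod_congr rfl; intro k _; push_cast; ring
theorem ris_pos {a : ℝ} (ha : 0 < a) (n : ℕ) : 0 < ris a n := Finset.prod_pos fun k _ => by positivity
theorem Gamma_add_nat' {a : ℝ} (ha : 0 < a) (n : ℕ) : Gamma (a + n) = ris a n * Gamma a := by
  induction n with
  | zero => simp [ris_zero]
  | succ n ih =>
    push_cast
    rw [← add_assoc, Gamma_add_one (by positivity), ih, ris_succ]; ring
theorem ris_one (n : ℕ) : ris 1 n = n.factorial := by
  induction n with
  | zero => simp [ris_zero]
  | succ n ih => rw [ris_succ, ih, Nat.factorial_succ]; push_cast; ring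
theorem Bt_add_nat {a b : ℝ} (ha : 0 < a) (hb : 0 < b) (n : ℕ) : Bt (a + n) b = ris a n / ris (a + b) n * Bt a b := by
  unfold Bt
  rw [show a + n + b = (a + b) + n by ring, Gamma_add_nat' ha, Gamma_add_nat' (by positivity : 0 < a + b)]
  field_simp

theorem lbeta {a b : ℝ} (ha : 0 < a) (hb : 0 < b) :
    ∫⁻ x in Ioo (0:ℝ) 1, ENNReal.ofReal (x^(a-1) * (1-x)^(b-1)) = ENNReal.ofReal (Bt a b) := by
  have h := ProbabilityTheory.lintegral_betaPDF_eq_one ha hb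
  have hB : 0 < Bt a b := Bt_pos ha hb
  rw [ProbabilityTheory.lintegral_betaPDF] at h
  have h2 : ∫⁻ x in Ioo (0:ℝ) 1, ENNReal.ofReal (x^(a-1) * (1-x)^(b-1)) = ENNReal.ofReal (Bt a b) * ∫⁻ (x : ℝ) in Ioo 0 1, ENNReal.ofReal (1 / ProbabilityTheory.beta a b * x ^ (a - 1) * (1 - x) ^ (b - 1)) := by
    rw [lcmul]
    apply lc1 measurableSet_Ioo
    intro x hx
    rw [← ENNReal.ofReal_mul hB.le]
    congr 1
    change _ = Bt a b * (1 / Bt a b * _ * _)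
    field_simp
  rw [h2, h, mul_one]

theorem choose_ris (a : ℝ) (n : ℕ) : Ring.choose (a + n - 1) n = ris a n / n.factorial := by
  have h1 : Ring.choose (a + n - 1) n = Ring.multichoose a n := by
    unfold Ring.choose; congr 1; ring
  have h2 := Ring.factorial_nsmul_multichoose_eq_ascPochhammer a n
  rw [Polynomial.ascPochhammer_smeval_eq_eval, nsmul_eq_mul] at h2
  have h3 : ∀ n, (ascPochhammer ℝ n).eval a = ris a n := by
    intro n
    induction n with
    | zero => simp [ris_zero]
    | succ n ih => rw [ascPochhammer_succ_eval, ris_succ, ih]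
  rw [h1, ← h3, ← h2]
  field_simp

theorem binom_hasSum (a u : ℝ) (hu : 0 ≤ u) (hu1 : u < 1) : HasSum (fun n : ℕ => ris a n / n.factorial * u^n) ((1-u)^(-a)) := by
  have h := (Real.one_div_one_sub_rpow_hasFPowerSeriesOnBall_zero a).hasSum (y := u) (by
    simp only [Metric.mem_eball, edist_zero_right]
    rw [← ofReal_norm, norm_of_nonneg hu]
    exact ENNReal.ofReal_lt_one.mpr hu1)
  simp only [zero_add, FormalMultilinearSeries.ofScalars_apply_eq, choose_ris, smul_eq_mul] at h
  rw [rpow_neg (by linarith), ← one_div]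
  exact h

theorem binom_enn (a u : ℝ) (ha : 0 < a) (hu : 0 ≤ u) (hu1 : u < 1) : ENNReal.ofReal ((1-u)^(-a)) = ∑' n : ℕ, ENNReal.ofReal (ris a n / n.factorial * u^n) := by
  have h := binom_hasSum a u hu hu1
  rw [← h.tsum_eq, ENNReal.ofReal_tsum_of_nonneg _ h.summable]
  intro n
  have := ris_pos ha n
  positivity

theorem HG (a b c y : ℝ) (ha : 0 < a) (hb : 0 < b) (hc : 0 < c) (hy : 0 ≤ y) (hy1 : y ≤ 1) :
    ∫⁻ x in Ioo (0:ℝ) 1, ENNReal.ofReal (x^(b-1) * (1-x)^(c-1) * (1 - x * y)^(-a)) = ∑' n : ℕ, ENNReal.ofReal (ris a n / n.factorial * Bt (b + n) c * y^n) := by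
  have h1 : ∀ x ∈ Ioo (0:ℝ) 1, ENNReal.ofReal (x^(b-1) * (1-x)^(c-1) * (1 - x * y)^(-a)) = ∑' n : ℕ, ENNReal.ofReal (ris a n / n.factorial * y^n) * ENNReal.ofReal (x^(b + n -1) * (1-x)^(c-1)) := by
    intro x hx
    have hx0 := hx.1
    have hx1 : 0 < 1 - x := by linarith [hx.2]
    rw [ENNReal.ofReal_mul (by positivity), binom_enn a (x*y) ha (by positivity) (by nlinarith [hx.2]), ← ENNReal.tsum_mul_left]
    apply tsum_congr
    intro n
    have := ris_pos ha n
    rw [← ENNReal.ofReal_mul (by positivity), ← ENNReal.ofReal_mul (by positivity)]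
    congr 1
    rw [show b + n - 1 = b - 1 + n by ring, rpow_add_natCast hx0.ne', mul_pow]; ring
  rw [lc1 measurableSet_Ioo h1, lintegral_tsum (fun n => by fun_prop)]
  apply tsum_congr
  intro n
  have := ris_pos ha n
  rw [← lcmul, lbeta (by positivity) hc, ← ENNReal.ofReal_mul (by positivity)]
  congr 1; ring

theorem LR (L R : ℕ → ℕ → ENNReal) (hL : ∀ j n, L j n = L j (n+1) + L (j+1) n) (hR : ∀ j n, R j n = R j (n+1) + R (j+1) n)
    (h0 : ∀ j, L j 0 = R j 0) (hf : ∀ j, L j 0 ≠ ⊤) : ∀ n j, L j n = R j n ∧ L j n ≠ ⊤ := by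
  intro n
  induction n with
  | zero => exact fun j => ⟨h0 j, hf j⟩
  | succ n ih =>
    intro j
    have h1 := ih j
    have h2 := ih (j+1)
    have e : L j (n+1) + L (j+1) n = R j (n+1) + L (j+1) n := by
      rw [← hL, h1.1, hR, h2.1]
    refine ⟨(ENNReal.add_left_inj h2.2).mp e, ?_⟩
    intro h
    apply h1.2
    rw [hL, h, top_add]


noncomputable def DD (x c e p : ℝ) (j n : ℕ) : ENNReal := ∫⁻ X in Ioo (0:ℝ) 1, ∫⁻ Y in Ioo (0:ℝ) 1,
  ENNReal.ofReal (X^(x-1) * (1-X)^(c-1) * (Y^(e-1) * (1-Y)^(p-1)) * ((X * Y)^j * (1 - X * Y)^n))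

theorem DD_rec (x c e p : ℝ) (j n : ℕ) : DD x c e p j n = DD x c e p j (n+1) + DD x c e p (j+1) n := by
  unfold DD
  rw [← lintegral_add_left]
  · apply lc1 measurableSet_Ioo
    intro X hX
    rw [← lintegral_add_left (by fun_prop)]
    apply lc1 measurableSet_Ioo
    intro Y hY
    have := hX.1; have := hY.1
    have : 0 < 1 - X := by linarith [hX.2]
    have : 0 < 1 - Y := by linarith [hY.2]
    have : 0 < 1 - X * Y := by nlinarith
    rw [← ENNReal.ofReal_add (by positivity) (by positivity)]
    congr 1; ring
  · apply Measurable.lintegral_prod_right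
    unfold Function.uncurry; fun_prop

theorem DD_zero (x c e p : ℝ) (hx : 0 < x) (hc : 0 < c) (he : 0 < e) (hp : 0 < p) (j : ℕ) : DD x c e p j 0 = ENNReal.ofReal (Bt (x + j) c * Bt (e + j) p) := by
  unfold DD
  rw [ENNReal.ofReal_mul (Bt_pos (by positivity) hc).le, ← lbeta (by positivity) hc, ← lbeta (by positivity) hp, ← lintegral_mul_const _ (by fun_prop)]
  apply lc1 measurableSet_Ioo
  intro X hX
  rw [lcmul]
  apply lc1 measurableSet_Ioo
  intro Y hY
  have hX0 := hX.1; have hY0 := hY.1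
  have : 0 < 1 - X := by linarith [hX.2]
  rw [← ENNReal.ofReal_mul (by positivity)]
  congr 1
  rw [show x + j - 1 = x - 1 + j by ring, show e + j - 1 = e - 1 + j by ring, rpow_add_natCast hX0.ne', rpow_add_natCast hY0.ne', mul_pow]; ring

theorem DD_sum (x c e p : ℝ) (hx : 0 < x) (hc : 0 < c) (he : 0 < e) (hp : 0 < p) (n : ℕ) :
    DD x c e p 0 n = ∑' m : ℕ, ENNReal.ofReal (ris (x + c + n) m / m.factorial * Bt (c + m) x * Bt (e + m) (p + c + n)) := by
  unfold DD
  rw [rot1 _ _ _ (by fun_prop)]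
  have h1 : ∀ Y ∈ Ioo (0:ℝ) 1, ∫⁻ X in Ioo (0:ℝ) 1, ENNReal.ofReal (X^(x-1) * (1-X)^(c-1) * (Y^(e-1) * (1-Y)^(p-1)) * ((X * Y)^0 * (1 - X * Y)^n))
     = ∑' m : ℕ, ENNReal.ofReal (ris (x + c + n) m / m.factorial * Bt (c + m) x) * ENNReal.ofReal (Y^(e + m -1) * (1-Y)^(p + c + n-1)) := by
    intro Y hY
    have hY0 := hY.1
    have hY1 : 0 < 1 - Y := by linarith [hY.2]
    rw [lsub (s := Ioo 0 1) (t := Ioo 0 1) measurableSet_Ioo (fun u => (1-u)/(1-u*Y)) (fun u => -((1-Y)/(1-u*Y)^2)) (fun u => (1-u)/(1-u*Y))]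
    · have h2 := congrArg (fun w => ENNReal.ofReal (Y^(e-1) * (1-Y)^(p+c+n-1)) * w) (HG (x + c + n) c x Y (by positivity) hc hx hY0.le hY.2.le)
      rw [lcmul, ← ENNReal.tsum_mul_left] at h2
      convert h2 using 1
      · apply lc1 measurableSet_Ioo
        intro u hu
        have hu0 := hu.1
        have hu1 : 0 < 1 - u := by linarith [hu.2]
        have hw : 0 < 1 - u * Y := by nlinarith
        rw [abs_neg, abs_of_pos (by positivity), ← ENNReal.ofReal_mul (by positivity), ← ENNReal.ofReal_mul (by positivity)]
        congr 1
        have e1 : 1 - (1-u)/(1-u*Y) = u * (1-Y)/(1-u*Y) := by field_simp; ring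
        have e2 : 1 - (1-u)/(1-u*Y) * Y = (1-Y)/(1-u*Y) := by field_simp; ring
        rw [e1, e2, div_rpow hu1.le hw.le, div_rpow (by positivity) hw.le, mul_rpow hu0.le hY1.le,
          show p + c + n - 1 = (p - 1) + (c - 1) + n + 1 by ring, rpow_add_one hY1.ne', rpow_add_natCast hY1.ne', rpow_add hY1,
          show -(x + c + n) = -((x - 1) + (c - 1) + ((n + 2 : ℕ) : ℝ)) by push_cast; ring, rpow_neg hw.le, rpow_add_natCast hw.ne', rpow_add hw, div_pow, pow_add _ n 2]
        field_simp
      · apply tsum_congr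
        intro m
        have := ris_pos (by positivity : 0 < x + c + n) m
        have := Bt_pos (by positivity : 0 < c + m) hx
        rw [← ENNReal.ofReal_mul (by positivity), ← ENNReal.ofReal_mul (by positivity)]
        congr 1
        rw [show e + m - 1 = e - 1 + m by ring, rpow_add_natCast hY0.ne']
        ring
    · intro u hu
      have hu0 := hu.1
      have hu1 : 0 < 1 - u := by linarith [hu.2]
      have hw : 0 < 1 - u * Y := by nlinarith
      refine ⟨by positivity, ?_⟩
      rw [div_lt_one hw]; nlinarith
    · intro u hu
      have hu0 := hu.1
      have hu1 : 0 < 1 - u := by linarith [hu.2]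
      have hw : 0 < 1 - u * Y := by nlinarith
      refine ⟨by positivity, ?_⟩
      rw [div_lt_one hw]; nlinarith
    · intro u hu
      have hu0 := hu.1
      have hu1 : 0 < 1 - u := by linarith [hu.2]
      have hw : 0 < 1 - u * Y := by nlinarith
      have e1 : 1 - (1-u)/(1-u*Y) = u * (1-Y)/(1-u*Y) := by field_simp; ring
      have e2 : 1 - (1-u)/(1-u*Y) * Y = (1-Y)/(1-u*Y) := by field_simp; ring
      rw [e1, e2, div_div_div_cancel_right₀ hw.ne']; field_simp
    · intro u hu
      have hu0 := hu.1
      have hu1 : 0 < 1 - u := by linarith [hu.2]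
      have hw : 0 < 1 - u * Y := by nlinarith
      have e1 : 1 - (1-u)/(1-u*Y) = u * (1-Y)/(1-u*Y) := by field_simp; ring
      have e2 : 1 - (1-u)/(1-u*Y) * Y = (1-Y)/(1-u*Y) := by field_simp; ring
      rw [e1, e2, div_div_div_cancel_right₀ hw.ne']; field_simp
    · intro u hu
      have hu0 := hu.1
      have hu1 : 0 < 1 - u := by linarith [hu.2]
      have hw : 0 < 1 - u * Y := by nlinarith
      have := ((hasDerivAt_id u).const_sub 1).div (((hasDerivAt_id u).mul_const Y).const_sub 1) hw.ne'
      exact this.congr_deriv (by simp only [id]; rw [← neg_div]; congr 1; ring)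
  rw [lc1 measurableSet_Ioo h1, lintegral_tsum (fun n => by fun_prop)]
  apply tsum_congr
  intro m
  have := ris_pos (by positivity : 0 < x + c + n) m
  have := Bt_pos (by positivity : 0 < c + m) hx
  rw [← lcmul, lbeta (by positivity) (by positivity), ← ENNReal.ofReal_mul (by positivity)]

noncomputable def JJ (j n : ℕ) : ENNReal := ∫⁻ w in Ioi (0:ℝ), ∫⁻ q in Ioo (0:ℝ) 1,
  ENNReal.ofReal (1 / (1 + w^2) * (1 / √(1-q)) * ((q^3 * (w^2/(1+w^2)))^j * (1 - q^3 * (w^2/(1+w^2)))^n))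

theorem sfrac {w q : ℝ} (hw : 0 < w) (hq : q ∈ Ioo (0:ℝ) 1) : 0 < 1 - q^3 * (w^2/(1+w^2)) ∧ 1 - q^3 * (w^2/(1+w^2)) < 1 := by
  have h1 : w^2/(1+w^2) < 1 := by rw [div_lt_one (by positivity)]; linarith
  have h2 : q^3 < 1 := pow_lt_one₀ hq.1.le hq.2 (by norm_num)
  have h3 := hq.1
  have h4 : 0 < w^2/(1+w^2) := by positivity
  have h5 : 0 < q^3 := by positivity
  constructor <;> nlinarith

theorem JJ_rec (j n : ℕ) : JJ j n = JJ j (n+1) + JJ (j+1) n := by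
  unfold JJ
  rw [← lintegral_add_left]
  · apply lc1 measurableSet_Ioi
    intro w hw
    rw [← lintegral_add_left (by fun_prop)]
    apply lc1 measurableSet_Ioo
    intro q hq
    have h1 := (sfrac hw hq).1
    have hq0 := hq.1
    rw [← ENNReal.ofReal_add (by positivity) (by positivity)]
    congr 1; ring
  · apply Measurable.lintegral_prod_right
    unfold Function.uncurry; fun_prop

theorem lw (j : ℕ) : ∫⁻ w in Ioi (0:ℝ), ENNReal.ofReal (1 / (1 + w^2) * (w^2/(1+w^2))^j) = ENNReal.ofReal (1/2 * Bt (1/2 + j) (1/2)) := by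
  rw [ENNReal.ofReal_mul (by norm_num), ← lbeta (by positivity) (by norm_num), lcmul]
  rw [lsub (s := Ioi 0) (t := Ioo 0 1) measurableSet_Ioi (fun w => w^2/(1+w^2)) (fun w => 2*w/(1+w^2)^2) (fun s => √(s/(1-s)))]
  · apply lc1 measurableSet_Ioi
    intro w hw
    have hw : 0 < w := hw
    rw [abs_of_pos (by positivity), ← ENNReal.ofReal_mul (by positivity), ← ENNReal.ofReal_mul (by positivity)]
    congr 1
    have e1 : 1 - w^2/(1+w^2) = 1/(1+w^2) := by field_simp; ring
    have h0 : 0 < w^2/(1+w^2) := by positivity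
    have h1 : 0 < 1 + w^2 := by positivity
    have h2 := sq_sqrt h1.le
    have h3 := sqrt_pos.mpr h1
    rw [e1, show (1:ℝ)/2 + j - 1 = -(1/2) + j by ring, show (1:ℝ)/2 - 1 = -(1/2) by norm_num, rpow_add_natCast h0.ne', rpow_neg (by positivity), rpow_neg (by positivity),
       ← sqrt_eq_rpow, ← sqrt_eq_rpow, sqrt_div (by positivity), sqrt_div (by positivity), sqrt_sq hw.le, sqrt_one]
    field_simp
    rw [h2]
  · intro w hw
    have hw : 0 < w := hw
    refine ⟨by positivity, ?_⟩
    rw [div_lt_one (by positivity)]; linarith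
  · intro s hs
    have h1 : 0 < 1 - s := by linarith [hs.2]
    exact sqrt_pos.mpr (div_pos hs.1 h1)
  · intro w hw
    have hw : 0 < w := hw
    have e1 : 1 - w^2/(1+w^2) = 1/(1+w^2) := by field_simp; ring
    rw [e1, show w^2/(1+w^2)/(1/(1+w^2)) = w^2 by field_simp, sqrt_sq hw.le]
  · intro s hs
    have h1 : 0 < 1 - s := by linarith [hs.2]
    have := hs.1
    rw [sq_sqrt (by positivity)]
    have : 1 + s/(1-s) = 1/(1-s) := by field_simp; ring
    rw [this]; field_simp
  · intro w hw
    have hw : 0 < w := hw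
    have := (hasDerivAt_pow 2 w).div ((hasDerivAt_pow 2 w).const_add 1) (by positivity)
    exact this.congr_deriv (by congr 1; push_cast; ring)

theorem JJ_zero (j : ℕ) : JJ j 0 = ENNReal.ofReal (Bt (1 + (3 * j : ℕ)) (1/2) * (1/2 * Bt (1/2 + j) (1/2))) := by
  unfold JJ
  rw [mul_comm, ENNReal.ofReal_mul (mul_pos (by norm_num) (Bt_pos (by positivity) (by norm_num))).le, ← lw, ← lbeta (by positivity) (by norm_num), ← lintegral_mul_const _ (by fun_prop)]
  apply lc1 measurableSet_Ioi
  intro w hw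
  rw [lcmul]
  apply lc1 measurableSet_Ioo
  intro q hq
  have hq0 := hq.1
  have : 0 < 1 - q := by linarith [hq.2]
  rw [← ENNReal.ofReal_mul (by positivity)]
  congr 1
  rw [show (1:ℝ)/2 - 1 = -(1/2) by norm_num, rpow_neg this.le, ← sqrt_eq_rpow, show (1 + (3 * j : ℕ) - 1 : ℝ) = (3 * j : ℕ) by ring, rpow_natCast, mul_pow, ← pow_mul, pow_zero]
  ring


theorem mom (j : ℕ) : Bt (1 + (3 * j : ℕ)) (1/2) * (1/2 * Bt (1/2 + j) (1/2)) = π / (Bt (2/3) (1/6) * Bt (1/3) (5/6)) * (Bt (2/3 + j) (1/6) * Bt (1/3 + j) (5/6)) := by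
  have b1 := Bt_pos (by norm_num : (0:ℝ) < 2/3) (by norm_num : (0:ℝ) < 1/6)
  have b2 := Bt_pos (by norm_num : (0:ℝ) < 1/3) (by norm_num : (0:ℝ) < 5/6)
  have B1 : Bt 1 (1/2) = 2 := by
    unfold Bt
    have h := Gamma_add_one (s := 1/2) (by norm_num)
    have := Gamma_pos_of_pos (by norm_num : (0:ℝ) < 1/2)
    rw [add_comm (1:ℝ) (1/2), h, Gamma_one]; field_simp
  have B2 : Bt (1/2) (1/2) = π := by
    unfold Bt
    rw [show (1:ℝ)/2 + 1/2 = 1 by norm_num, Gamma_one, Gamma_one_half_eq, mul_self_sqrt pi_pos.le]; simp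
  rw [Bt_add_nat (by norm_num) (by norm_num), Bt_add_nat (by norm_num) (by norm_num), Bt_add_nat (by norm_num) (by norm_num), Bt_add_nat (by norm_num) (by norm_num), B1, B2]
  have key : ris 1 (3*j) / ris (1 + 1/2) (3*j) * (ris (1/2) j / ris (1/2+1/2) j) = ris (2/3) j / ris (2/3+1/6) j * (ris (1/3) j / ris (1/3+5/6) j) := by
    induction j with
    | zero => simp [ris_zero]
    | succ j ih =>
      have p1 := ris_pos (by norm_num : (0:ℝ) < 1 + 1/2) (3*j)
      have p2 := ris_pos (by norm_num : (0:ℝ) < 1/2 + 1/2) j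
      have p3 := ris_pos (by norm_num : (0:ℝ) < 2/3 + 1/6) j
      have p4 := ris_pos (by norm_num : (0:ℝ) < 1/3 + 5/6) j
      rw [show 3 * (j+1) = 3*j+1+1+1 by ring]
      simp only [ris_succ]
      calc _ = (ris 1 (3*j) / ris (1 + 1/2) (3*j) * (ris (1/2) j / ris (1/2+1/2) j)) * ((2/3 + j)/(2/3+1/6+j)*((1/3+j)/(1/3+5/6+j))) := by
            push_cast
            field_simp
            ring
        _ = _ := by
            rw [ih]; field_simp
  calc _ = π * (ris 1 (3*j) / ris (1 + 1/2) (3*j) * (ris (1/2) j / ris (1/2+1/2) j)) := by ring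
    _ = _ := by rw [key]; field_simp

theorem JJ_eq (n : ℕ) : JJ 0 n = ENNReal.ofReal (π / (Bt (2/3) (1/6) * Bt (1/3) (5/6))) * DD (2/3) (1/6) (1/3) (5/6) 0 n := by
  have b1 := Bt_pos (by norm_num : (0:ℝ) < 2/3) (by norm_num : (0:ℝ) < 1/6)
  have b2 := Bt_pos (by norm_num : (0:ℝ) < 1/3) (by norm_num : (0:ℝ) < 5/6)
  refine (LR JJ (fun j n => ENNReal.ofReal (π / (Bt (2/3) (1/6) * Bt (1/3) (5/6))) * DD (2/3) (1/6) (1/3) (5/6) j n) JJ_rec ?_ ?_ ?_ n 0).1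
  · intro j n
    rw [DD_rec, mul_add]
  · intro j
    rw [DD_zero _ _ _ _ (by norm_num) (by norm_num) (by norm_num) (by norm_num), ← ENNReal.ofReal_mul (by have := pi_pos; positivity), JJ_zero, mom]
  · intro j
    rw [JJ_zero]; exact ENNReal.ofReal_ne_top

theorem TT_sum : TT = ENNReal.ofReal (1/8) * ∑' n : ℕ, ENNReal.ofReal ((ris (1/2) n / n.factorial)^2) * JJ 0 n := by
  have hpi := pi_pos
  rw [TT_stepF]
  have h1 : ∀ w ∈ Ioi (0:ℝ), ∀ q ∈ Ioo (0:ℝ) 1, ∫⁻ x in Ioo (0:ℝ) 1, ENNReal.ofReal (1 / (1 + w^2) * ((1 / √(1 - q)) * (1 / √x) * (1 / √(1 - x)) * (1 / √(1 - x * (1 - q^3 * (w^2 / (1 + w^2)))))))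
     = ∑' n : ℕ, ENNReal.ofReal (π * (ris (1/2) n / n.factorial)^2) * ENNReal.ofReal (1 / (1 + w^2) * (1 / √(1-q)) * ((q^3 * (w^2/(1+w^2)))^0 * (1 - q^3 * (w^2/(1+w^2)))^n)) := by
    intro w hw q hq
    obtain ⟨hy0, hy1⟩ := sfrac hw hq
    have hq1 : 0 < 1 - q := by linarith [hq.2]
    have h2 := congrArg (fun v => ENNReal.ofReal (1 / (1 + w^2) * (1 / √(1-q))) * v) (HG (1/2) (1/2) (1/2) _ (by norm_num) (by norm_num) (by norm_num) hy0.le hy1.le)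
    rw [lcmul, ← ENNReal.tsum_mul_left] at h2
    convert h2 using 1
    · apply lc1 measurableSet_Ioo
      intro x hx
      have hx0 := hx.1
      have hx1 : 0 < 1 - x := by linarith [hx.2]
      rw [← ENNReal.ofReal_mul (by positivity)]
      congr 1
      have : 0 < 1 - x * (1 - q^3 * (w^2 / (1 + w^2))) := by nlinarith
      rw [show (1:ℝ)/2 - 1 = -(1/2) by norm_num, rpow_neg hx0.le, rpow_neg hx1.le, rpow_neg this.le, ← sqrt_eq_rpow, ← sqrt_eq_rpow, ← sqrt_eq_rpow]
      ring
    · apply tsum_congr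
      intro n
      have := ris_pos (by norm_num : (0:ℝ) < 1/2) n
      rw [← ENNReal.ofReal_mul (by positivity), ← ENNReal.ofReal_mul (by positivity)]
      congr 1
      rw [Bt_add_nat (by norm_num) (by norm_num), show (1:ℝ)/2 + 1/2 = 1 by norm_num, ris_one]
      have B2 : Bt (1/2) (1/2) = π := by
        unfold Bt
        rw [show (1:ℝ)/2 + 1/2 = 1 by norm_num, Gamma_one, Gamma_one_half_eq, mul_self_sqrt pi_pos.le]; simp
      rw [B2]; field_simp
  rw [lc2 measurableSet_Ioi measurableSet_Ioo h1]
  have h3 : ∀ w : ℝ, ∫⁻ q in Ioo (0:ℝ) 1, (∑' n : ℕ, ENNReal.ofReal (π * (ris (1/2) n / n.factorial)^2) * ENNReal.ofReal (1 / (1 + w^2) * (1 / √(1-q)) * ((q^3 * (w^2/(1+w^2)))^0 * (1 - q^3 * (w^2/(1+w^2)))^n)))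
    = ∑' n : ℕ, ENNReal.ofReal (π * (ris (1/2) n / n.factorial)^2) * ∫⁻ q in Ioo (0:ℝ) 1, ENNReal.ofReal (1 / (1 + w^2) * (1 / √(1-q)) * ((q^3 * (w^2/(1+w^2)))^0 * (1 - q^3 * (w^2/(1+w^2)))^n)) := by
    intro w
    rw [lintegral_tsum (fun n => by fun_prop)]
    apply tsum_congr; intro n; rw [lcmul]
  simp_rw [h3]
  rw [lintegral_tsum]
  · rw [← ENNReal.tsum_mul_left, ← ENNReal.tsum_mul_left]
    apply tsum_congr
    intro n
    rw [← lcmul]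
    unfold JJ
    rw [← mul_assoc, ← mul_assoc, ← ENNReal.ofReal_mul (by positivity), ← ENNReal.ofReal_mul (by positivity)]
    congr 2
    field_simp
  · intro n
    refine AEMeasurable.const_mul (Measurable.aemeasurable ?_) _
    apply Measurable.lintegral_prod_right
    unfold Function.uncurry; fun_prop

noncomputable def BB : ENNReal := ∑' n : ℕ, ENNReal.ofReal (ris (1/6) n * ris (1/3) n / (ris (5/6) n * n.factorial)) * DD (1/3) (1/2) (1/2) (1/3) 0 n

theorem TT_BB : TT = ENNReal.ofReal (1 / (8 * Bt (1/3) (5/6))) * BB := by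
  have hpi := pi_pos
  have b1 := Bt_pos (by norm_num : (0:ℝ) < 2/3) (by norm_num : (0:ℝ) < 1/6)
  have b2 := Bt_pos (by norm_num : (0:ℝ) < 1/3) (by norm_num : (0:ℝ) < 5/6)
  rw [TT_sum]
  unfold BB
  simp_rw [JJ_eq, DD_sum (2/3) (1/6) (1/3) (5/6) (by norm_num) (by norm_num) (by norm_num) (by norm_num),
    DD_sum (1/3) (1/2) (1/2) (1/3) (by norm_num) (by norm_num) (by norm_num) (by norm_num), ← ENNReal.tsum_mul_left]
  rw [ENNReal.tsum_comm]
  apply tsum_congr; intro m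
  apply tsum_congr; intro n
  have r1 := ris_pos (by norm_num : (0:ℝ) < 1/2) n
  have r2 := ris_pos (by norm_num : (0:ℝ) < 1/6) m
  have r3 := ris_pos (by norm_num : (0:ℝ) < 1/3) m
  have r4 := ris_pos (by norm_num : (0:ℝ) < 5/6) m
  rw [← ENNReal.ofReal_mul (by positivity), ← ENNReal.ofReal_mul (by positivity), ← ENNReal.ofReal_mul (by positivity), ← ENNReal.ofReal_mul (by positivity), ← ENNReal.ofReal_mul (by positivity)]
  congr 1
  have g1 := Gamma_pos_of_pos (by norm_num : (0:ℝ) < 1/6)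
  have g2 := Gamma_pos_of_pos (by norm_num : (0:ℝ) < 1/3)
  have g3 := Gamma_pos_of_pos (by norm_num : (0:ℝ) < 2/3)
  have g4 := Gamma_pos_of_pos (by norm_num : (0:ℝ) < 5/6)
  have e1 := Gamma_add_nat' (by positivity : (0:ℝ) < 2/3 + 1/6 + n) m
  have e2 := Gamma_add_nat' (by positivity : (0:ℝ) < 1/3 + 1/2 + m) n
  have g5 := Gamma_pos_of_pos (by positivity : (0:ℝ) < 5/6 + n)
  have g6 := Gamma_pos_of_pos (by positivity : (0:ℝ) < 5/6 + m)
  have g7 := Gamma_pos_of_pos (by positivity : (0:ℝ) < 5/6 + n + m)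
  have g8 := Gamma_pos_of_pos (by positivity : (0:ℝ) < 4/3 + n + m)
  have e1' : ris (2/3+1/6+n) m = Gamma (5/6+n+m) / Gamma (5/6 + n) := by
    rw [eq_div_iff g5.ne', show (5:ℝ)/6 + n = 2/3+1/6+n by ring, e1]
  have e2' : ris (1/3+1/2+m) n = Gamma (5/6+n+m) / Gamma (5/6 + m) := by
    rw [eq_div_iff g6.ne', show (5:ℝ)/6 + n + m = 1/3 + 1/2 +m + n by ring, show (5:ℝ)/6 + m = 1/3+1/2+m by ring, e2]
  have e3 : Gamma (5/6+m) = ris (5/6) m * Gamma (5/6) := Gamma_add_nat' (by norm_num) m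
  have e4 : Gamma (1/6+m) = ris (1/6) m * Gamma (1/6) := Gamma_add_nat' (by norm_num) m
  have e5 : Gamma (1/3+m) = ris (1/3) m * Gamma (1/3) := Gamma_add_nat' (by norm_num) m
  have e6 : Gamma (1/2+n) = ris (1/2) n * √π := by rw [Gamma_add_nat' (by norm_num), Gamma_one_half_eq]
  have e7 : Gamma (5/6+1/6+n) = n.factorial := by rw [show (5:ℝ)/6+1/6+n = n+1 by ring, Gamma_nat_eq_factorial]
  have hs := sq_sqrt hpi.le
  have B3 : Bt (2/3) (1/6) = Gamma (2/3) * Gamma (1/6) / Gamma (5/6) := by unfold Bt; norm_num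
  have B4 : Bt (1/6+m) (2/3) = Gamma (1/6+m) * Gamma (2/3) / Gamma (5/6+m) := by
    unfold Bt; congr 2; ring
  have B5 : Bt (1/3+m) (5/6+1/6+n) = Gamma (1/3+m) * n.factorial / Gamma (4/3+n+m) := by
    unfold Bt; rw [e7]; congr 2; ring
  have B6 : Bt (1/2+n) (1/3) = Gamma (1/2+n) * Gamma (1/3) / Gamma (5/6+n) := by
    unfold Bt; congr 2; ring
  have B7 : Bt (1/2+n) (1/3+1/2+m) = Gamma (1/2+n) * Gamma (5/6+m) / Gamma (4/3+n+m) := by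
    unfold Bt; rw [show (1:ℝ)/3+1/2+m = 5/6+m by ring]; congr 2; ring
  rw [B3, B4, B5, B6, B7, e1', e2', e3, e4, e5, e6]
  field_simp
  rw [hs]


def PS (c : ℕ → ℝ) : Prop := ∀ r : ℝ, 0 ≤ r → r < 1 → Summable fun n => |c n| * r^n

theorem PS_deriv {c : ℕ → ℝ} (h : PS c) : PS (fun n => (n+1) * c (n+1)) := by
  intro r hr hr1
  obtain ⟨ρ, h1, h2⟩ := exists_between hr1
  have hρ : 0 < ρ := lt_of_le_of_lt hr h1
  have hs := h ρ hρ.le h2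
  have hs' := (summable_nat_add_iff 1).mpr hs
  have ht := tendsto_pow_const_mul_const_pow_of_abs_lt_one 1 (r := r/ρ) (by rw [abs_of_nonneg (by positivity), div_lt_one hρ]; exact h1)
  obtain ⟨K, hK⟩ := ht.bddAbove_range
  have hK' : ∀ n : ℕ, ((n:ℝ)) * (r/ρ)^n ≤ K := fun n => by simpa using hK ⟨n, rfl⟩
  refine Summable.of_nonneg_of_le (fun n => by positivity) (fun n => ?_) (hs'.mul_left ((K + 1)/ρ))
  have h3 : ((n:ℝ)+1) * r^n ≤ (K+1) * ρ^n := by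
    have := hK' n
    have h4 : (r/ρ)^n ≤ 1 := pow_le_one₀ (by positivity) (by rw [div_le_one hρ]; exact h1.le)
    have h5 : r^n = (r/ρ)^n * ρ^n := by rw [← mul_pow]; congr 1; field_simp
    rw [h5, ← mul_assoc]
    gcongr
    linarith
  rw [abs_mul, abs_of_nonneg (by positivity : (0:ℝ) ≤ (n:ℝ)+1)]
  calc (n+1) * |c (n+1)| * r^n = |c (n+1)| * ((n+1) * r^n) := by ring
    _ ≤ |c (n+1)| * ((K+1) * ρ^n) := by gcongr
    _ = _ := by rw [pow_succ]; field_simp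

noncomputable def psum (c : ℕ → ℝ) (y : ℝ) : ℝ := ∑' n, c n * y^n

theorem PS_hasSum {c : ℕ → ℝ} (h : PS c) {y : ℝ} (hy : |y| < 1) : HasSum (fun n => c n * y^n) (psum c y) := by
  apply Summable.hasSum
  apply Summable.of_norm
  refine (h |y| (abs_nonneg _) hy).congr fun n => ?_
  rw [norm_mul, norm_pow]; rfl

theorem PS_hasDeriv {c : ℕ → ℝ} (h : PS c) {y : ℝ} (hy : |y| < 1) : HasDerivAt (psum c) (psum (fun n => (n+1) * c (n+1)) y) y := by
  obtain ⟨r, h1, h2⟩ := exists_between hy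
  have hr : 0 < r := lt_of_le_of_lt (abs_nonneg _) h1
  have hs := PS_deriv h r hr.le h2
  have hs2 : Summable fun n : ℕ => (n:ℝ) * |c n| * r^(n-1) := by
    refine (summable_nat_add_iff 1).mp ?_
    refine hs.congr fun n => ?_
    rw [abs_mul, abs_of_nonneg (by positivity : (0:ℝ) ≤ (n:ℝ)+1)]
    push_cast
    simp
  have := hasDerivAt_tsum_of_isPreconnected (𝕜 := ℝ) (g := fun n y => c n * y^n) (g' := fun n y => c n * (n * y^(n-1))) (t := Ioo (-r) r) (y₀ := 0) (y := y) hs2 isOpen_Ioo isPreconnected_Ioo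
    (fun n y _ => (hasDerivAt_pow n y).const_mul _) (fun n y hy => ?_) (by simp [hr]) ?_ (abs_lt.mp h1)
  · refine this.congr_deriv ?_
    unfold psum
    rw [Summable.tsum_eq_zero_add]
    · simp; apply tsum_congr; intro n; ring
    · refine Summable.of_norm_bounded hs2 fun n => ?_
      rw [norm_mul, norm_mul, norm_pow, norm_eq_abs, norm_eq_abs, norm_eq_abs, Nat.abs_cast, ← mul_assoc, mul_comm |c n|]
      gcongr
  · rw [norm_mul, norm_mul, norm_pow, norm_eq_abs, norm_eq_abs, norm_eq_abs, Nat.abs_cast, ← mul_assoc, mul_comm |c n|]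
    gcongr
    exact (abs_lt.mpr hy).le
  · exact (PS_hasSum h (by simp)).summable

noncomputable def hc (a b c : ℝ) (n : ℕ) : ℝ := ris a n * ris b n / (ris c n * n.factorial)

theorem hc_nonneg {a b c : ℝ} (ha : 0 < a) (hb : 0 < b) (h : 0 < c) (n : ℕ) : 0 ≤ hc a b c n := by
  have := ris_pos ha n; have := ris_pos hb n; have := ris_pos h n
  unfold hc; positivity

theorem ris_mono {a c : ℝ} (ha : 0 < a) (hac : a ≤ c) (n : ℕ) : ris a n ≤ ris c n :=
  Finset.prod_le_prod (fun k _ => by positivity) (fun k _ => by linarith)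

theorem hc_le {a b c : ℝ} (ha : 0 < a) (hb : 0 < b) (hac : a ≤ c) (hb1 : b ≤ 1) (n : ℕ) : hc a b c n ≤ 1 := by
  have h1 := ris_pos ha n; have h2 := ris_pos hb n; have h3 := ris_pos (lt_of_lt_of_le ha hac) n
  unfold hc
  rw [div_le_one (by positivity), ← ris_one]
  exact mul_le_mul (ris_mono ha hac n) (ris_mono hb hb1 n) h2.le h3.le

theorem hc_PS {a b c : ℝ} (ha : 0 < a) (hb : 0 < b) (hac : a ≤ c) (hb1 : b ≤ 1) : PS (hc a b c) := by
  intro r hr hr1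
  refine Summable.of_nonneg_of_le (fun n => by positivity) (fun n => ?_) (summable_geometric_of_lt_one hr hr1)
  rw [abs_of_nonneg (hc_nonneg ha hb (by linarith) n)]
  have := hc_le ha hb hac hb1 n
  have : 0 ≤ r^n := by positivity
  nlinarith

theorem hc_succ {a b c : ℝ} (h : 0 < c) (n : ℕ) : (n + 1) * (c + n) * hc a b c (n+1) = (a + n) * (b + n) * hc a b c n := by
  have := ris_pos h n
  unfold hc
  rw [ris_succ, ris_succ, ris_succ, Nat.factorial_succ]
  push_cast
  field_simp

def Sol (a b c : ℝ) (f f1 f2 : ℝ → ℝ) : Prop := ∀ y ∈ Ioo (0:ℝ) 1, HasDerivAt f (f1 y) y ∧ HasDerivAt f1 (f2 y) y ∧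
  y * (1 - y) * f2 y + (c - (a + b + 1) * y) * f1 y - a * b * f y = 0

theorem hasSum_shift {g : ℕ → ℝ} {S y : ℝ} (h : HasSum (fun n => g (n+1) * y^n) S) (h0 : g 0 = 0) : HasSum (fun n => g n * y^n) (y * S) := by
  have h1 := h.mul_left y
  refine (hasSum_nat_add_iff' 1).mp ?_
  simp only [Finset.range_one, Finset.sum_singleton, h0, zero_mul, sub_zero]
  have e : (fun n => g (n+1) * y^(n+1)) = fun i => y * (g (i+1) * y^i) := by funext n; ring
  rw [e]; exact h1

theorem hyp_Sol {a b c : ℝ} (ha : 0 < a) (hb : 0 < b) (hac : a ≤ c) (hb1 : b ≤ 1) : ∃ f1 f2, Sol a b c (psum (hc a b c)) f1 f2 := by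
  have p0 := hc_PS ha hb hac hb1
  have p1 := PS_deriv p0
  have p2 := PS_deriv p1
  push_cast at p2
  refine ⟨psum (fun n => ((n:ℝ)+1) * hc a b c (n+1)), psum (fun n => ((n:ℝ)+1) * (((n:ℝ)+1+1) * hc a b c (n+1+1))), fun y hy => ?_⟩
  have hy1 : |y| < 1 := by rw [abs_of_pos hy.1]; exact hy.2
  refine ⟨PS_hasDeriv p0 hy1, by have := PS_hasDeriv p1 hy1; push_cast at this; exact this, ?_⟩
  have s0 := PS_hasSum p0 hy1
  have s1 := PS_hasSum p1 hy1
  have s2 := PS_hasSum p2 hy1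
  set S2 := psum (fun n => ((n:ℝ)+1) * (((n:ℝ)+1+1) * hc a b c (n+1+1))) y
  set S1 := psum (fun n => ((n:ℝ)+1) * hc a b c (n+1)) y
  have t1 : HasSum (fun n : ℕ => (n:ℝ) * hc a b c n * y^n) (y * S1) :=
    hasSum_shift (g := fun n => (n:ℝ) * hc a b c n) (by push_cast; exact s1) (by simp)
  have t2 : HasSum (fun n : ℕ => (n:ℝ) * (((n:ℝ) + 1) * hc a b c (n + 1)) * y^n) (y * S2) :=
    hasSum_shift (g := fun n => (n:ℝ) * (((n:ℝ) + 1) * hc a b c (n + 1))) (by push_cast; exact s2) (by simp)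
  have t3 : HasSum (fun n : ℕ => (n:ℝ) * (((n:ℝ) - 1) * hc a b c n) * y^n) (y * (y * S2)) := by
    refine hasSum_shift (g := fun n => (n:ℝ) * (((n:ℝ) - 1) * hc a b c n)) ?_ (by simp)
    have e : (fun n : ℕ => ((n+1:ℕ):ℝ) * ((((n+1:ℕ):ℝ) - 1) * hc a b c (n+1)) * y^n) = fun n : ℕ => (n:ℝ) * (((n:ℝ) + 1) * hc a b c (n + 1)) * y^n := by
      funext n; push_cast; ring
    rw [e]; exact t2
  have h := (((t2.sub t3).add (s1.mul_left c)).sub (t1.mul_left (a + b + 1))).sub (s0.mul_left (a * b))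
  have e : (fun n : ℕ => (n:ℝ) * (((n:ℝ) + 1) * hc a b c (n + 1)) * y^n - (n:ℝ) * (((n:ℝ) - 1) * hc a b c n) * y^n + c * (((n:ℝ)+1) * hc a b c (n+1) * y^n) - (a+b+1) * ((n:ℝ) * hc a b c n * y^n) - a * b * (hc a b c n * y^n)) = fun _ => 0 := by
    funext n
    have := hc_succ (a := a) (b := b) (c := c) (by linarith) n
    linear_combination (y^n) * this
  rw [e] at h
  have := h.unique hasSum_zero
  rw [← this]; ring

theorem Sol.refl {a b c : ℝ} {f f1 f2 : ℝ → ℝ} (h : Sol a b c f f1 f2) : Sol a b (a + b + 1 - c) (fun y => f (1-y)) (fun y => -f1 (1-y)) (fun y => f2 (1-y)) := by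
  intro y hy
  obtain ⟨h1, h2, h3⟩ := h (1-y) ⟨by linarith [hy.2], by linarith [hy.1]⟩
  have hd : HasDerivAt (fun y : ℝ => 1 - y) (-1) y := (hasDerivAt_id y).const_sub 1
  refine ⟨(h1.comp y hd).congr_deriv (by ring), ((h2.comp y hd).neg).congr_deriv (by ring), ?_⟩
  linear_combination h3

theorem Sol.comb {a b c : ℝ} {f f1 f2 g g1 g2 : ℝ → ℝ} (h : Sol a b c f f1 f2) (h' : Sol a b c g g1 g2) (k : ℝ) :
    Sol a b c (fun y => f y + k * g y) (fun y => f1 y + k * g1 y) (fun y => f2 y + k * g2 y) := by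
  intro y hy
  obtain ⟨h1, h2, h3⟩ := h y hy
  obtain ⟨h4, h5, h6⟩ := h' y hy
  refine ⟨h1.add (h4.const_mul k), h2.add (h5.const_mul k), ?_⟩
  linear_combination h3 + k * h6

theorem Sol.pow {a b s : ℝ} {f f1 f2 : ℝ → ℝ} (h : Sol (a + s) (b + s) (1 + s) f f1 f2) :
    Sol a b (1 - s) (fun y => y^s * f y) (fun y => s * y^(s-1) * f y + y^s * f1 y) (fun y => s * (s-1) * y^(s-1-1) * f y + 2 * s * y^(s-1) * f1 y + y^s * f2 y) := by
  intro y hy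
  obtain ⟨h1, h2, h3⟩ := h y hy
  have d1 := Real.hasDerivAt_rpow_const (x := y) (p := s) (Or.inl hy.1.ne')
  have d2 := Real.hasDerivAt_rpow_const (x := y) (p := s - 1) (Or.inl hy.1.ne')
  refine ⟨d1.mul h1, (((d2.const_mul s).mul h1).add (d1.mul h2)).congr_deriv (by ring), ?_⟩
  have hy0 := hy.1
  beta_reduce
  rw [rpow_sub_one hy0.ne', rpow_sub_one hy0.ne']
  field_simp
  linear_combination (y^s * y) * h3

theorem Sol.max {a b c : ℝ} (hab : 0 < a * b) {f f1 f2 : ℝ → ℝ} (h : Sol a b c f f1 f2) (hc : ContinuousOn f (Icc 0 1)) (h0 : f 0 = 0) (h1 : f 1 = 0) :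
    ∀ y ∈ Icc (0:ℝ) 1, f y ≤ 0 := by
  obtain ⟨m, hm, hmax⟩ := isCompact_Icc.exists_isMaxOn (nonempty_Icc.mpr zero_le_one) hc
  intro y hy
  refine le_trans (hmax hy) ?_
  by_contra! hpos
  have hm0 : m ≠ 0 := by rintro rfl; linarith
  have hm1 : m ≠ 1 := by rintro rfl; linarith
  have hm' : m ∈ Ioo (0:ℝ) 1 := ⟨lt_of_le_of_ne hm.1 hm0.symm, lt_of_le_of_ne hm.2 hm1⟩
  have hlm : IsLocalMax f m := hmax.isLocalMax (Icc_mem_nhds hm'.1 hm'.2)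
  obtain ⟨e1, e2, e3⟩ := h m hm'
  have z1 : f1 m = 0 := hlm.hasDerivAt_eq_zero e1
  have hev : deriv f =ᶠ[nhds m] f1 := by
    filter_upwards [Ioo_mem_nhds hm'.1 hm'.2] with x hx
    exact (h x hx).1.deriv
  have hdd : deriv (deriv f) m = f2 m := by rw [hev.deriv_eq, e2.deriv]
  have hf2 : 0 < f2 m := by
    rw [z1] at e3
    have : 0 < m * (1 - m) := mul_pos hm'.1 (by linarith [hm'.2])
    have : m * (1 - m) * f2 m = a * b * f m := by linarith
    by_contra! hneg
    have : 0 < a * b * f m := by positivity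
    nlinarith
  have hmin : IsLocalMin f m := isLocalMin_of_deriv_deriv_pos (by rw [hdd]; exact hf2) (by rw [e1.deriv, z1]) e1.continuousAt
  have hconst : f =ᶠ[nhds m] fun _ => f m := by
    filter_upwards [hmin, hlm] with x hx1 hx2
    exact le_antisymm hx2 hx1
  have : deriv (deriv f) m = 0 := by
    rw [hconst.deriv.deriv_eq]; simp
  linarith


theorem hasSum_of_enn {f : ℕ → ℝ} {S : ℝ} (hf : ∀ n, 0 ≤ f n) (hS : 0 ≤ S) (h : ∑' n, ENNReal.ofReal (f n) = ENNReal.ofReal S) : HasSum f S := by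
  have h1 := ENNReal.hasSum_toReal (f := fun n => ENNReal.ofReal (f n)) (by rw [h]; exact ENNReal.ofReal_ne_top)
  have h2 := ENNReal.tsum_toReal_eq (f := fun n => ENNReal.ofReal (f n)) (fun n => ENNReal.ofReal_ne_top)
  rw [h, ENNReal.toReal_ofReal hS] at h2
  rw [← h2] at h1
  have e : (fun n => (ENNReal.ofReal (f n)).toReal) = f := by funext n; exact ENNReal.toReal_ofReal (hf n)
  rw [e] at h1; exact h1

theorem gauss {a b c : ℝ} (ha : 0 < a) (hb : 0 < b) (h : a + b < c) : HasSum (hc a b c) (Bt b (c - b - a) / Bt b (c - b)) := by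
  have hcb : 0 < c - b := by linarith
  have hcba : 0 < c - b - a := by linarith
  have B1 := Bt_pos hb hcb
  have B2 := Bt_pos hb hcba
  have key := HG a b (c-b) 1 ha hb hcb zero_le_one le_rfl
  have l : ∫⁻ x in Ioo (0:ℝ) 1, ENNReal.ofReal (x^(b-1)*(1-x)^(c-b-1)*(1-x*1)^(-a)) = ENNReal.ofReal (Bt b (c - b - a)) := by
    rw [← lbeta hb hcba]
    refine setLIntegral_congr_fun measurableSet_Ioo fun x hx => ?_
    beta_reduce
    rw [mul_one, mul_assoc, ← rpow_add (by linarith [hx.2])]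
    congr 3; ring
  rw [l] at key
  have r : (fun n : ℕ => ris a n/n.factorial * Bt (b+n) (c-b) * 1^n) = fun n => Bt b (c - b) * hc a b c n := by
    funext n
    rw [Bt_add_nat hb hcb, show b + (c - b) = c by ring, hc]
    have := ris_pos (show 0 < c by linarith) n
    field_simp
    simp
  have r' : ∑' n : ℕ, ENNReal.ofReal (ris a n/n.factorial * Bt (b+n) (c-b) * 1^n) = ∑' n, ENNReal.ofReal (Bt b (c - b) * hc a b c n) :=
    tsum_congr fun n => by rw [congrFun r n]
  rw [r'] at key
  have := hasSum_of_enn (fun n => mul_nonneg B1.le (hc_nonneg ha hb (by linarith) n)) B2.le key.symm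
  have := this.mul_left (Bt b (c - b))⁻¹
  simp only [inv_mul_cancel_left₀ B1.ne'] at this
  rw [div_eq_inv_mul]; exact this

theorem psum_cont {c : ℕ → ℝ} (h0 : ∀ n, 0 ≤ c n) (h : Summable c) : ContinuousOn (psum c) (Icc 0 1) := by
  refine continuousOn_tsum (fun n => by fun_prop) h fun n y hy => ?_
  rw [norm_mul, norm_pow, norm_eq_abs, norm_eq_abs, abs_of_nonneg (h0 n), abs_of_nonneg hy.1]
  exact mul_le_of_le_one_right (h0 n) (pow_le_one₀ hy.1 hy.2)

theorem psum_zero (c : ℕ → ℝ) : psum c 0 = c 0 := by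
  unfold psum
  rw [tsum_eq_single 0]
  · simp
  · intro n hn; simp [hn]

theorem psum_one (c : ℕ → ℝ) : psum c 1 = ∑' n, c n := by simp [psum]

theorem hc_zero (a b c : ℝ) : hc a b c 0 = 1 := by simp [hc, ris]

noncomputable def Af : ℝ := Bt (1/3) (1/3) / Bt (1/3) (1/2)
noncomputable def Bf : ℝ := Bt (2/3) (2/3) / Bt (2/3) (1/6)

theorem Gm16_56 : Gamma (1/6) * Gamma (5/6) = 2 * π := by
  have := Real.Gamma_mul_Gamma_one_sub (1/6)
  rw [show (1:ℝ) - 1/6 = 5/6 by norm_num, show π * (1/6) = π/6 by ring, Real.sin_pi_div_six] at this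
  rw [this]; ring

theorem Gm13_23 : Gamma (1/3) * Gamma (2/3) = 2 * π / √3 := by
  have := Real.Gamma_mul_Gamma_one_sub (1/3)
  rw [show (1:ℝ) - 1/3 = 2/3 by norm_num, show π * (1/3) = π/3 by ring, Real.sin_pi_div_three] at this
  rw [this]; field_simp

theorem Gm_dup : Gamma (1/6) * Gamma (2/3) = Gamma (1/3) * 2^(2/3:ℝ) * √π := by
  have := Real.Gamma_mul_Gamma_add_half (1/6)
  rw [show (1:ℝ)/6 + 1/2 = 2/3 by norm_num, show 2 * (1/6:ℝ) = 1/3 by norm_num, show (1:ℝ) - 1/3 = 2/3 by norm_num] at this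
  exact this

theorem connection : ∀ y ∈ Icc (0:ℝ) 1, psum (hc (1/6) (1/3) (5/6)) (1-y) + Bf * (y^(1/3:ℝ) * psum (hc (1/2) (2/3) (4/3)) y) = Af * psum (hc (1/6) (1/3) (2/3)) y := by
  have g0 := gauss (a := 1/6) (b := 1/3) (c := 5/6) (by norm_num) (by norm_num) (by norm_num)
  have g1 := gauss (a := 1/6) (b := 1/3) (c := 2/3) (by norm_num) (by norm_num) (by norm_num)
  have g2 := gauss (a := 1/2) (b := 2/3) (c := 4/3) (by norm_num) (by norm_num) (by norm_num)
  norm_num only at g0 g1 g2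
  obtain ⟨u1, u2, hu⟩ := hyp_Sol (a := 1/6) (b := 1/3) (c := 5/6) (by norm_num) (by norm_num) (by norm_num) (by norm_num)
  obtain ⟨v1, v2, hv⟩ := hyp_Sol (a := 1/6) (b := 1/3) (c := 2/3) (by norm_num) (by norm_num) (by norm_num) (by norm_num)
  obtain ⟨w1, w2, hw⟩ := hyp_Sol (a := 1/2) (b := 2/3) (c := 4/3) (by norm_num) (by norm_num) (by norm_num) (by norm_num)
  have hu' := hu.refl
  rw [show (1:ℝ)/6 + 1/3 + 1 - 5/6 = 2/3 by norm_num] at hu'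
  rw [show (1:ℝ)/2 = 1/6 + 1/3 by norm_num, show (2:ℝ)/3 = 1/3 + 1/3 by norm_num, show (4:ℝ)/3 = 1 + 1/3 by norm_num] at hw
  have hw' := hw.pow
  rw [show (1:ℝ)/6 + 1/3 = 1/2 by norm_num, show (1:ℝ)/3 + 1/3 = 2/3 by norm_num, show (1:ℝ) + 1/3 = 4/3 by norm_num, show (1:ℝ) - 1/3 = 2/3 by norm_num] at hw'
  have hD := (hu'.comb hw' Bf).comb hv (-Af)
  have hz : Sol (1/6) (1/3) (2/3) (fun _ => 0) (fun _ => 0) (fun _ => 0) := fun y _ =>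
    ⟨hasDerivAt_const _ _, hasDerivAt_const _ _, by ring⟩
  have hN := hz.comb hD (-1)
  have cu := (psum_cont (hc_nonneg (a := 1/6) (b := 1/3) (c := 5/6) (by norm_num) (by norm_num) (by norm_num)) g0.summable)
  have cv := (psum_cont (hc_nonneg (a := 1/6) (b := 1/3) (c := 2/3) (by norm_num) (by norm_num) (by norm_num)) g1.summable)
  have cw := (psum_cont (hc_nonneg (a := 1/2) (b := 2/3) (c := 4/3) (by norm_num) (by norm_num) (by norm_num)) g2.summable)
  have cu' : ContinuousOn (fun y : ℝ => psum (hc (1/6) (1/3) (5/6)) (1-y)) (Icc 0 1) :=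
    cu.comp (by fun_prop) fun y hy => ⟨by linarith [hy.2], by linarith [hy.1]⟩
  have cp : ContinuousOn (fun y : ℝ => y^(1/3:ℝ)) (Icc 0 1) := (Real.continuous_rpow_const (by norm_num)).continuousOn
  have cD := (cu'.add ((cp.mul cw).const_mul Bf)).add (cv.const_mul (-Af))
  have D0 : psum (hc (1/6) (1/3) (5/6)) (1-0) + Bf * ((0:ℝ)^(1/3:ℝ) * psum (hc (1/2) (2/3) (4/3)) 0) + (-Af) * psum (hc (1/6) (1/3) (2/3)) 0 = 0 := by
    rw [sub_zero, psum_one, g0.tsum_eq, zero_rpow (by norm_num), psum_zero, psum_zero, hc_zero, hc_zero, Af]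
    ring
  have D1 : psum (hc (1/6) (1/3) (5/6)) (1-1) + Bf * ((1:ℝ)^(1/3:ℝ) * psum (hc (1/2) (2/3) (4/3)) 1) + (-Af) * psum (hc (1/6) (1/3) (2/3)) 1 = 0 := by
    rw [sub_self, psum_one, psum_one, g1.tsum_eq, g2.tsum_eq, one_rpow, psum_zero, hc_zero, Af, Bf]
    have b1 := Bt_pos (a := 2/3) (b := 2/3) (by norm_num) (by norm_num)
    have b2 := Bt_pos (a := 2/3) (b := 1/6) (by norm_num) (by norm_num)
    have e : Bt (1/3) (1/3) / Bt (1/3) (1/2) * (Bt (1/3) (1/6) / Bt (1/3) (1/3)) = 2 := by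
      have b3 := Bt_pos (a := 1/3) (b := 1/3) (by norm_num) (by norm_num)
      rw [div_mul_div_comm, mul_comm, mul_div_mul_right _ _ b3.ne']
      have := Gm16_56
      have p1 := Gamma_pos_of_pos (show (0:ℝ) < 1/3 by norm_num)
      have p2 := Gamma_pos_of_pos (show (0:ℝ) < 5/6 by norm_num)
      have p3 := Gamma_pos_of_pos (show (0:ℝ) < 1/6 by norm_num)
      rw [Bt, Bt, show (1:ℝ)/3+1/6 = 1/2 by norm_num, show (1:ℝ)/3+1/2=5/6 by norm_num, Real.Gamma_one_half_eq]
      have := Real.sq_sqrt pi_pos.le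
      have := Real.sqrt_pos.mpr pi_pos
      field_simp
      linarith
    have e2 : Bt (2/3) (2/3) / Bt (2/3) (1/6) * (1 * (Bt (2/3) (1/6) / Bt (2/3) (2/3))) = 1 := by field_simp
    linarith
  intro y hy
  have m1 := hD.max (by norm_num) cD D0 D1 y hy
  have cN : ContinuousOn _ (Icc (0:ℝ) 1) := (continuousOn_const (c := (0:ℝ))).add (cD.const_mul (-1))
  have m2 := hN.max (by norm_num) cN (by simp only [D0]; norm_num) (by simp only [D1]; norm_num) y hy
  beta_reduce at m1 m2
  linarith


theorem DD_tsum (x c e p : ℝ) (k : ℕ → ℝ) (hk : ∀ n, 0 ≤ k n) (j m : ℕ → ℕ) :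
    ∑' n, ENNReal.ofReal (k n) * DD x c e p (j n) (m n) = ∫⁻ X in Ioo (0:ℝ) 1, ∫⁻ Y in Ioo (0:ℝ) 1,
      ENNReal.ofReal (X^(x-1) * (1-X)^(c-1) * (Y^(e-1) * (1-Y)^(p-1))) * ∑' n, ENNReal.ofReal (k n * ((X * Y)^(j n) * (1 - X * Y)^(m n))) := by
  have : ∀ n, ENNReal.ofReal (k n) * DD x c e p (j n) (m n) = ∫⁻ X in Ioo (0:ℝ) 1, ∫⁻ Y in Ioo (0:ℝ) 1,
      ENNReal.ofReal (X^(x-1) * (1-X)^(c-1) * (Y^(e-1) * (1-Y)^(p-1))) * ENNReal.ofReal (k n * ((X * Y)^(j n) * (1 - X * Y)^(m n))) := by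
    intro n
    unfold DD
    rw [lcmul]
    apply lc1 measurableSet_Ioo
    intro X hX
    rw [lcmul]
    apply lc1 measurableSet_Ioo
    intro Y hY
    have := hX.1; have := hY.1
    have : 0 < 1 - X := by linarith [hX.2]
    have : 0 < 1 - Y := by linarith [hY.2]
    rw [← ENNReal.ofReal_mul (hk n), ← ENNReal.ofReal_mul (by positivity)]
    congr 1; ring
  simp_rw [this]
  rw [← lintegral_tsum]
  · apply lc1 measurableSet_Ioo
    intro X hX
    rw [← lintegral_tsum (fun n => by fun_prop)]
    apply lc1 measurableSet_Ioo
    intro Y hY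
    rw [ENNReal.tsum_mul_left]
  · intro n
    refine (Measurable.aemeasurable ?_)
    apply Measurable.lintegral_prod_right
    unfold Function.uncurry; fun_prop

theorem psum_enn {k : ℕ → ℝ} (h : PS k) (hk : ∀ n, 0 ≤ k n) {y : ℝ} (hy : 0 ≤ y) (hy1 : y < 1) :
    ∑' n, ENNReal.ofReal (k n * y^n) = ENNReal.ofReal (psum k y) := by
  have := PS_hasSum h (y := y) (by rw [abs_of_nonneg hy]; exact hy1)
  unfold psum
  rw [ENNReal.ofReal_tsum_of_nonneg (fun n => mul_nonneg (hk n) (by positivity)) this.summable]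

theorem psum_nonneg {k : ℕ → ℝ} (hk : ∀ n, 0 ≤ k n) {y : ℝ} (hy : 0 ≤ y) : 0 ≤ psum k y :=
  tsum_nonneg fun n => mul_nonneg (hk n) (by positivity)

noncomputable def S1 : ENNReal := ∑' n, ENNReal.ofReal (hc (1/6) (1/3) (2/3) n) * DD (1/3) (1/2) (1/2) (1/3) n 0
noncomputable def S2 : ENNReal := ∑' n, ENNReal.ofReal (hc (1/2) (2/3) (4/3) n) * DD (2/3) (1/2) (5/6) (1/3) n 0

theorem Af_pos : 0 < Af := div_pos (Bt_pos (by norm_num) (by norm_num)) (Bt_pos (by norm_num) (by norm_num))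
theorem Bf_pos : 0 < Bf := div_pos (Bt_pos (by norm_num) (by norm_num)) (Bt_pos (by norm_num) (by norm_num))

theorem BB_S : BB + ENNReal.ofReal Bf * S2 = ENNReal.ofReal Af * S1 := by
  have n0 := hc_nonneg (a := 1/6) (b := 1/3) (c := 5/6) (by norm_num) (by norm_num) (by norm_num)
  have n1 := hc_nonneg (a := 1/6) (b := 1/3) (c := 2/3) (by norm_num) (by norm_num) (by norm_num)
  have n2 := hc_nonneg (a := 1/2) (b := 2/3) (c := 4/3) (by norm_num) (by norm_num) (by norm_num)
  have p0 := hc_PS (a := 1/6) (b := 1/3) (c := 5/6) (by norm_num) (by norm_num) (by norm_num) (by norm_num)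
  have p1 := hc_PS (a := 1/6) (b := 1/3) (c := 2/3) (by norm_num) (by norm_num) (by norm_num) (by norm_num)
  have p2 := hc_PS (a := 1/2) (b := 2/3) (c := 4/3) (by norm_num) (by norm_num) (by norm_num) (by norm_num)
  have hBB : BB = ∑' n, ENNReal.ofReal (hc (1/6) (1/3) (5/6) n) * DD (1/3) (1/2) (1/2) (1/3) 0 n := rfl
  rw [hBB, S1, S2, DD_tsum _ _ _ _ _ n0 (fun _ => 0) (fun n => n), DD_tsum _ _ _ _ _ n1 (fun n => n) (fun _ => 0), DD_tsum _ _ _ _ _ n2 (fun n => n) (fun _ => 0)]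
  rw [lcmul, lcmul, ← lintegral_add_left]
  · apply lc1 measurableSet_Ioo
    intro X hX
    rw [lcmul, lcmul, ← lintegral_add_left (by fun_prop)]
    apply lc1 measurableSet_Ioo
    intro Y hY
    have hX0 := hX.1; have hY0 := hY.1
    have : 0 < 1 - X := by linarith [hX.2]
    have : 0 < 1 - Y := by linarith [hY.2]
    have hxy : 0 < X * Y := by positivity
    have hxy1 : X * Y < 1 := by nlinarith
    simp only [pow_zero, one_mul, mul_one]
    rw [psum_enn p0 n0 (by linarith) (by linarith), psum_enn p1 n1 hxy.le hxy1, psum_enn p2 n2 hxy.le hxy1]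
    have q0 := psum_nonneg n0 (y := 1 - X * Y) (by linarith)
    have q1 := psum_nonneg n1 hxy.le
    have q2 := psum_nonneg n2 hxy.le
    have := Af_pos; have := Bf_pos
    rw [← ENNReal.ofReal_mul (by positivity), ← ENNReal.ofReal_mul (by positivity), ← ENNReal.ofReal_mul (by positivity), ← ENNReal.ofReal_mul (by positivity), ← ENNReal.ofReal_mul (by positivity), ← ENNReal.ofReal_add (by positivity) (by positivity)]
    congr 1
    have key := connection (X * Y) ⟨hxy.le, hxy1.le⟩
    rw [mul_rpow hX0.le hY0.le] at key
    rw [show (2:ℝ)/3 - 1 = (1/3 - 1) + 1/3 by norm_num, show (5:ℝ)/6 - 1 = (1/2 - 1) + 1/3 by norm_num, rpow_add hX0, rpow_add hY0]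
    linear_combination (X^((1:ℝ)/3-1) * (1-X)^((1:ℝ)/2-1) * (Y^((1:ℝ)/2-1) * (1-Y)^((1:ℝ)/3-1))) * key
  · apply Measurable.lintegral_prod_right
    unfold Function.uncurry; fun_prop

theorem S_fin {a b c x d e p : ℝ} (ha : 0 < a) (hb : 0 < b) (hh : a + b < c) (hx : 0 < x) (hd : 0 < d) (he : 0 < e) (hp : 0 < p) :
    HasSum (fun n => hc a b c n * (ris x n / ris (x + d) n * (ris e n / ris (e + p) n))) (∑' n, hc a b c n * (ris x n / ris (x + d) n * (ris e n / ris (e + p) n))) ∧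
    ∑' n, ENNReal.ofReal (hc a b c n) * DD x d e p n 0 = ENNReal.ofReal (Bt x d * Bt e p * ∑' n, hc a b c n * (ris x n / ris (x + d) n * (ris e n / ris (e + p) n))) := by
  have r1 := fun n => ris_pos hx n
  have r2 := fun n => ris_pos (show 0 < x + d by linarith) n
  have r3 := fun n => ris_pos he n
  have r4 := fun n => ris_pos (show 0 < e + p by linarith) n
  have b1 := Bt_pos hx hd
  have b2 := Bt_pos he hp
  have n0 := hc_nonneg ha hb (show 0 < c by linarith)
  have hs : Summable (fun n => hc a b c n * (ris x n / ris (x + d) n * (ris e n / ris (e + p) n))) := by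
    refine Summable.of_nonneg_of_le (fun n => ?_) (fun n => ?_) (gauss ha hb hh).summable
    · have := r1 n; have := r2 n; have := r3 n; have := r4 n; have := n0 n
      positivity
    · have h1 := r1 n; have h2 := r2 n; have h3 := r3 n; have h4 := r4 n
      refine mul_le_of_le_one_right (n0 n) ?_
      refine mul_le_one₀ ?_ (by positivity) ?_
      · rw [div_le_one h2]; exact ris_mono hx (by linarith) n
      · rw [div_le_one h4]; exact ris_mono he (by linarith) n
  refine ⟨hs.hasSum, ?_⟩
  rw [← tsum_mul_left, ENNReal.ofReal_tsum_of_nonneg _ (hs.mul_left _)]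
  · apply tsum_congr; intro n
    rw [DD_zero x d e p hx hd he hp, ← ENNReal.ofReal_mul (n0 n), Bt_add_nat hx hd, Bt_add_nat he hp]
    congr 1; ring
  · intro n
    have := r1 n; have := r2 n; have := r3 n; have := r4 n; have := n0 n
    positivity

theorem S1_eq : 0 ≤ pFq [1/6, 1/3, 1/3, 1/2] [2/3, 5/6, 5/6] 1 ∧ S1 = ENNReal.ofReal (Bt (1/3) (1/2) * Bt (1/2) (1/3) * pFq [1/6, 1/3, 1/3, 1/2] [2/3, 5/6, 5/6] 1) := by
  have h := S_fin (a := 1/6) (b := 1/3) (c := 2/3) (x := 1/3) (d := 1/2) (e := 1/2) (p := 1/3) (by norm_num) (by norm_num) (by norm_num) (by norm_num) (by norm_num) (by norm_num) (by norm_num)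
  have e : pFq [1/6, 1/3, 1/3, 1/2] [2/3, 5/6, 5/6] 1 = ∑' n, hc (1/6) (1/3) (2/3) n * (ris (1/3) n / ris (1/3 + 1/2) n * (ris (1/2) n / ris (1/2 + 1/3) n)) := by
    unfold pFq hc
    apply tsum_congr; intro n
    rw [show (1:ℝ)/3+1/2 = 5/6 by norm_num, show (1:ℝ)/2+1/3 = 5/6 by norm_num]
    simp only [List.map_cons, List.map_nil, List.prod_cons, List.prod_nil]
    have := ris_pos (show (0:ℝ) < 2/3 by norm_num) n
    have := ris_pos (show (0:ℝ) < 5/6 by norm_num) n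
    field_simp
    simp
  rw [← e] at h
  refine ⟨?_, h.2⟩
  rw [e]
  refine tsum_nonneg fun n => ?_
  have := ris_pos (show (0:ℝ) < 1/6 by norm_num) n
  have := ris_pos (show (0:ℝ) < 1/3 by norm_num) n
  have := ris_pos (show (0:ℝ) < 1/2 by norm_num) n
  have := ris_pos (show (0:ℝ) < 2/3 by norm_num) n
  have := ris_pos (show (0:ℝ) < 1/3+1/2 by norm_num) n
  have := ris_pos (show (0:ℝ) < 1/2+1/3 by norm_num) n
  unfold hc
  positivity

theorem S2_eq : 0 ≤ pFq [1/2, 2/3, 2/3, 5/6] [7/6, 7/6, 4/3] 1 ∧ S2 = ENNReal.ofReal (Bt (2/3) (1/2) * Bt (5/6) (1/3) * pFq [1/2, 2/3, 2/3, 5/6] [7/6, 7/6, 4/3] 1) := by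
  have h := S_fin (a := 1/2) (b := 2/3) (c := 4/3) (x := 2/3) (d := 1/2) (e := 5/6) (p := 1/3) (by norm_num) (by norm_num) (by norm_num) (by norm_num) (by norm_num) (by norm_num) (by norm_num)
  have e : pFq [1/2, 2/3, 2/3, 5/6] [7/6, 7/6, 4/3] 1 = ∑' n, hc (1/2) (2/3) (4/3) n * (ris (2/3) n / ris (2/3 + 1/2) n * (ris (5/6) n / ris (5/6 + 1/3) n)) := by
    unfold pFq hc
    apply tsum_congr; intro n
    rw [show (2:ℝ)/3+1/2 = 7/6 by norm_num, show (5:ℝ)/6+1/3 = 7/6 by norm_num]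
    simp only [List.map_cons, List.map_nil, List.prod_cons, List.prod_nil]
    have := ris_pos (show (0:ℝ) < 4/3 by norm_num) n
    have := ris_pos (show (0:ℝ) < 7/6 by norm_num) n
    field_simp
    simp
  rw [← e] at h
  refine ⟨?_, h.2⟩
  rw [e]
  refine tsum_nonneg fun n => ?_
  have := ris_pos (show (0:ℝ) < 1/2 by norm_num) n
  have := ris_pos (show (0:ℝ) < 2/3 by norm_num) n
  have := ris_pos (show (0:ℝ) < 5/6 by norm_num) n
  have := ris_pos (show (0:ℝ) < 4/3 by norm_num) n
  have := ris_pos (show (0:ℝ) < 2/3+1/2 by norm_num) n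
  have := ris_pos (show (0:ℝ) < 5/6+1/3 by norm_num) n
  unfold hc
  positivity

theorem BB_toReal : BB.toReal = Af * (Bt (1/3) (1/2) * Bt (1/2) (1/3) * pFq [1/6, 1/3, 1/3, 1/2] [2/3, 5/6, 5/6] 1)
    - Bf * (Bt (2/3) (1/2) * Bt (5/6) (1/3) * pFq [1/2, 2/3, 2/3, 5/6] [7/6, 7/6, 4/3] 1) := by
  have h := BB_S
  obtain ⟨n1, e1⟩ := S1_eq
  obtain ⟨n2, e2⟩ := S2_eq
  rw [e1, e2, ← ENNReal.ofReal_mul Af_pos.le, ← ENNReal.ofReal_mul Bf_pos.le] at h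
  have hf : BB ≠ ⊤ := by
    intro h'; rw [h', top_add] at h
    exact ENNReal.ofReal_ne_top h.symm
  have b1 := Bt_pos (a := 1/3) (b := 1/2) (by norm_num) (by norm_num)
  have b2 := Bt_pos (a := 1/2) (b := 1/3) (by norm_num) (by norm_num)
  have b3 := Bt_pos (a := 2/3) (b := 1/2) (by norm_num) (by norm_num)
  have b4 := Bt_pos (a := 5/6) (b := 1/3) (by norm_num) (by norm_num)
  have := Af_pos; have := Bf_pos
  have h' := congrArg ENNReal.toReal h
  rw [ENNReal.toReal_add hf ENNReal.ofReal_ne_top, ENNReal.toReal_ofReal (by positivity), ENNReal.toReal_ofReal (by positivity)] at h'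
  linarith


theorem pi_sqrt : π = √π^2 := (sq_sqrt pi_pos.le).symm

theorem gvals : ∃ c : ℝ, 0 < c ∧ c^3 = 4 ∧ Gamma (1/6) = Gamma (1/3)^2 * c * √3 / (2 * √π) ∧ Gamma (2/3) = 2 * √π^2 / (√3 * Gamma (1/3)) ∧
    Gamma (5/6) = 4 * √π^3 / (Gamma (1/3)^2 * c * √3) := by
  have hs := sqrt_pos.mpr pi_pos
  have hr : 0 < √(3:ℝ) := sqrt_pos.mpr (by norm_num)
  have hg := Gamma_pos_of_pos (show (0:ℝ) < 1/3 by norm_num)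
  have hc : (0:ℝ) < 2^(2/3:ℝ) := by positivity
  have e1 : Gamma (2/3) = 2 * √π^2 / (√3 * Gamma (1/3)) := by
    have := Gm13_23
    rw [← pi_sqrt]
    field_simp at this ⊢
    linarith
  have e2 : Gamma (1/6) = Gamma (1/3)^2 * 2^(2/3:ℝ) * √3 / (2 * √π) := by
    have := Gm_dup
    rw [e1] at this
    field_simp at this ⊢
    linarith
  have e3 := Gm16_56
  refine ⟨2^(2/3:ℝ), hc, ?_, e2, e1, ?_⟩
  · rw [← rpow_mul_natCast (by norm_num)]; norm_num
  · rw [e2] at e3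
    have : π = √π^2 := pi_sqrt
    rw [eq_div_iff (by positivity)]
    field_simp at e3
    rw [this] at e3
    rw [sqrt_sq hs.le] at e3
    linarith

theorem main_aux : 16 * (∫ t in Ioi (0:ℝ), I0 t * (K0 t)^5 * t) = 2 * π^2 / (3 * Bt (1/3) (5/6)) * BB.toReal := by
  obtain ⟨_, h2, h3⟩ := sum_rule
  have e : ∫ t in Ioi 0, (I0 t * K0 t) ^ 3 * t = TT.toReal := by
    unfold TT
    rw [integral_eq_lintegral_of_nonneg_ae _ h2.aestronglyMeasurable]
    filter_upwards [ae_restrict_mem measurableSet_Ioi] with t ht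
    have := K0_nonneg t; have := I0_nonneg t; have : 0 < t := ht
    simp only [Pi.zero_apply]
    positivity
  have b := Bt_pos (a := 1/3) (b := 5/6) (by norm_num) (by norm_num)
  rw [e, TT_BB, ENNReal.toReal_mul, ENNReal.toReal_ofReal (by positivity)] at h3
  have : 16 * (∫ t in Ioi (0:ℝ), I0 t * (K0 t)^5 * t) = 16/3 * (3 * ∫ t in Ioi (0:ℝ), I0 t * (K0 t)^5 * t) := by ring
  rw [this, h3]
  field_simp
  ring

theorem sunrise_hypergeometric :
    16 * (∫ t in Ioi (0:ℝ), I0 t * (K0 t)^5 * t)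
    = (4 * π ^ ((5:ℝ)/2) / Real.sqrt 3) *
        ((Real.sqrt 3 / 64) * (Gamma (1/3) / Real.sqrt π)^9 *
            pFq [1/6, 1/3, 1/3, 1/2] [2/3, 5/6, 5/6] 1
          - (16/3) * (Real.sqrt π / Gamma (1/3))^9 *
            pFq [1/2, 2/3, 2/3, 5/6] [7/6, 7/6, 4/3] 1) := by
  rw [main_aux, BB_toReal]
  obtain ⟨c, hc, hc3, e16, e23, e56⟩ := gvals
  have hs := sqrt_pos.mpr pi_pos
  have hr : 0 < √(3:ℝ) := sqrt_pos.mpr (by norm_num)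
  have hr2 : √(3:ℝ)^2 = 3 := sq_sqrt (by norm_num)
  have hg := Gamma_pos_of_pos (show (0:ℝ) < 1/3 by norm_num)
  have e12 : Gamma (1/2) = √π := Gamma_one_half_eq
  have e76 : Gamma (7/6) = Gamma (1/6) / 6 := by
    rw [show (7:ℝ)/6 = 1/6 + 1 by norm_num, Gamma_add_one (by norm_num)]; ring
  have e43 : Gamma (4/3) = Gamma (1/3) / 3 := by
    rw [show (4:ℝ)/3 = 1/3 + 1 by norm_num, Gamma_add_one (by norm_num)]; ring
  have hp : π ^ ((5:ℝ)/2) = √π^5 := by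
    rw [sqrt_eq_rpow, ← rpow_mul_natCast pi_pos.le]; norm_num
  rw [hp, show π^2 = √π^4 by nth_rw 1 [pi_sqrt]; ring]
  generalize pFq [1/6, 1/3, 1/3, 1/2] [2/3, 5/6, 5/6] 1 = F1
  generalize pFq [1/2, 2/3, 2/3, 5/6] [7/6, 7/6, 4/3] 1 = F2
  unfold Af Bf Bt
  norm_num only
  rw [e76, e43, e56, e23, e16, e12]
  generalize √π = s at *
  generalize Gamma (1/3) = g at *
  generalize √(3:ℝ) = r at *
  have k1 : 2 * s^4 / (3 * (g * (4 * s^3 / (g^2*c*r)) / (g^2*c*r/(2*s)/6))) * (g * g / (2 * s^2 / (r * g)) / (g * s / (4 * s^3 / (g^2*c*r))) * (g * s / (4 * s^3 / (g^2*c*r)) * (s * g / (4 * s^3 / (g^2*c*r))))) = 4 * s^5 / r * (r / 64 * (g/s)^9) := by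
    field_simp
    rw [show r^4 = (r^2)^2 by ring, hr2, hc3]; norm_num
  have k2 : 2 * s^4 / (3 * (g * (4 * s^3 / (g^2*c*r)) / (g^2*c*r/(2*s)/6))) * (2 * s ^ 2 / (r * g) * (2 * s ^ 2 / (r * g)) / (g / 3) / (2 * s ^ 2 / (r * g) * (g ^ 2 * c * r / (2 * s)) / (4 * s ^ 3 / (g ^ 2 * c * r))) * (2 * s ^ 2 / (r * g) * s / (g ^ 2 * c * r / (2 * s) / 6) * (4 * s ^ 3 / (g ^ 2 * c * r) * g / (g ^ 2 * c * r / (2 * s) / 6)))) = 4 * s^5 / r * (16 / 3 * (s / g) ^ 9) := by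
    field_simp
    rw [show r^4 = (r^2)^2 by ring, hr2, hc3]; norm_num
  linear_combination F1 * k1 - F2 * k2
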